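/- Assume d ≥ 2, 2 < p < 2_s^⋆, and let (g_ε) be (s,γ)-admissible for some s > d/(d+1) and γ > 1. Set α₁ := (d+1)(1/2 − 1/p). Then there exist constants 0 < c' ≤ C' < ∞ and ε₀ ∈ (0,1), depending only on d, p, s, γ and the admissibility constants, such that for all ε ∈ (0, ε₀): c' ε^{1 − min(1,α₁)/γ} ≤ R^∘_ε(p) ≤ C' ε^{1 − min(1,α₁)/γ}. -/

import Mathlib

open MeasureTheory Real Filter
open scoped ENNReal FourierTransform RealInnerProductSpace Topology

noncomputable section

/-- Euclidean space `ℝ^d`. -/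
abbrev Rd (d : ℕ) : Type := EuclideanSpace ℝ (Fin d)

/-- `U` is the (distributional, hence `L²`-) Fourier transform of `u`:
it pairs against Schwartz functions the way the Fourier transform of `u` must. -/
def IsFT {d : ℕ} (U u : Rd d → ℂ) : Prop :=
  ∀ φ : SchwartzMap (Rd d) ℂ, ∫ ξ, U ξ * φ ξ = ∫ x, u x * 𝓕 (⇑φ) x

/-- An element of `H^s(ℝ^d)`: an `L²` function `toFun` together with its Fourier
transform `ft`, satisfying the `H^s` integrability condition. -/
structure HsFn (d : ℕ) (s : ℝ) where
  toFun : Rd d → ℂ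
  ft : Rd d → ℂ
  memL2 : MemLp toFun 2 volume
  ft_memL2 : MemLp ft 2 volume
  isFT : IsFT ft toFun
  memHs : Integrable (fun ξ : Rd d => ‖ft ξ‖ ^ 2 * (1 + ‖ξ‖ ^ 2) ^ s) volume

/-- The quadratic form `q_ε(u) = ∫ |û(ξ)|² g(|ξ|) dξ` (for a fixed symbol `g`). -/
def qeps {d : ℕ} {s : ℝ} (g : ℝ → ℝ) (u : HsFn d s) : ℝ :=
  ∫ ξ : Rd d, ‖u.ft ξ‖ ^ 2 * g ‖ξ‖

/-- The `L^p` norm (as a real number). -/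
def LpN {d : ℕ} (p : ℝ) (f : Rd d → ℂ) : ℝ :=
  (eLpNorm f (ENNReal.ofReal p) volume).toReal

/-- The set of values of the Rayleigh quotient `q_ε(u)/‖u‖_p²` over nonzero
`u ∈ H^s` satisfying the symmetry constraint `P`. -/
def RayleighSet (d : ℕ) (s p : ℝ) (g : ℝ → ℝ) (P : (Rd d → ℂ) → Prop) : Set ℝ :=
  {t | ∃ u : HsFn d s, P u.toFun ∧ ¬ u.toFun =ᵐ[volume] (fun _ => (0 : ℂ)) ∧
      MemLp u.toFun (ENNReal.ofReal p) volume ∧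
      t = qeps g u / LpN p u.toFun ^ 2}

/-- The Rayleigh quotient infimum. -/
def Rayleigh (d : ℕ) (s p : ℝ) (g : ℝ → ℝ) (P : (Rd d → ℂ) → Prop) : ℝ :=
  sInf (RayleighSet d s p g P)

/-- The Rayleigh quotient infimum is attained. -/
def Attained (d : ℕ) (s p : ℝ) (g : ℝ → ℝ) (P : (Rd d → ℂ) → Prop) : Prop :=
  ∃ u : HsFn d s, P u.toFun ∧ ¬ u.toFun =ᵐ[volume] (fun _ => (0 : ℂ)) ∧
      MemLp u.toFun (ENNReal.ofReal p) volume ∧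
      qeps g u / LpN p u.toFun ^ 2 = Rayleigh d s p g P

/-- A radial function. -/
def Radial {d : ℕ} (f : Rd d → ℂ) : Prop := ∀ x y : Rd d, ‖x‖ = ‖y‖ → f x = f y

/-- The squared norm of the first block of coordinates (the first `d - k` ones),
under the identification `ℝ^d = ℝ^{d-k} × ℝ^k`. -/
def blockSq (d k : ℕ) (x : Rd d) : ℝ := ∑ i : Fin d, if (i : ℕ) < d - k then x i ^ 2 else 0

/-- A `G_k = O(d-k) × O(k)`-symmetric function: it depends only on the norms of the
two blocks of coordinates. -/
def GkSymmetric (d k : ℕ) (f : Rd d → ℂ) : Prop :=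
  ∀ x y : Rd d, blockSq d k x = blockSq d k y → ‖x‖ = ‖y‖ → f x = f y

/-- An `(s,γ)`-admissible family of symbols, with admissibility constants `c, C`. -/
def IsAdmissible (s γ c C : ℝ) (g : ℝ → ℝ → ℝ) : Prop :=
  (∀ ε ∈ Set.Ioo (0:ℝ) 1, Measurable (g ε)) ∧
  (∀ ε ∈ Set.Ioo (0:ℝ) 1, ∀ r : ℝ, 0 < g ε r) ∧
  (∀ ε ∈ Set.Ioo (0:ℝ) 1, ∀ r : ℝ, 1/2 ≤ |r - 1| →
      c * (1 + |r| ^ (2*s)) ≤ g ε r ∧ g ε r ≤ C * (1 + |r| ^ (2*s))) ∧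
  (∀ ε ∈ Set.Ioo (0:ℝ) 1, ∀ r : ℝ, |r - 1| ≤ 1/2 →
      c * (ε + |r - 1| ^ γ) ≤ g ε r ∧ g ε r ≤ C * (ε + |r - 1| ^ γ))

/-- The `G_k`-symmetric Stein–Tomas exponent `2_⋆^k`. -/
def twoStarK (d k : ℕ) : ℝ :=
  2 * ((d : ℝ) + (min k (d - k) : ℕ)) / ((d : ℝ) - 2 + (min k (d - k) : ℕ))

/-- The interpolation parameter `α_k`. -/
def alphaK (d k : ℕ) (p : ℝ) : ℝ := (1/2 - 1/p) / (1/2 - 1/twoStarK d k)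

/-- The spherical shell `A_{ε,δ}` around the unit sphere (with `I_{ε,δ}` scale `ε^{1/γ}`). -/
def Aset (d : ℕ) (γ ε δ : ℝ) : Set (Rd d) :=
  {ξ | δ * ε ^ (1/γ) ≤ |‖ξ‖ - 1| ∧ |‖ξ‖ - 1| ≤ δ⁻¹ * ε ^ (1/γ)}

theorem ae_eq_of_schwartz {d : ℕ} {U V : Rd d → ℂ} (hU : LocallyIntegrable U volume)
    (hV : LocallyIntegrable V volume)
    (h : ∀ φ : SchwartzMap (Rd d) ℂ, ∫ ξ, U ξ * φ ξ = ∫ ξ, V ξ * φ ξ) : U =ᵐ[volume] V := by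
  apply ae_eq_of_integral_contDiff_smul_eq hU hV
  intro g hg hc
  have hc' : HasCompactSupport (fun x => (g x : ℂ)) := hc.comp_left (g := fun r : ℝ => (r : ℂ)) (by simp)
  have hg' : ContDiff ℝ (⊤ : ℕ∞) (fun x => (g x : ℂ)) := Complex.ofRealCLM.contDiff.comp hg
  have := h (hc'.toSchwartzMap hg')
  simpa [mul_comm] using this

theorem fourier_pair_L1 {d : ℕ} {f g : Rd d → ℂ} (hf : Integrable f volume)
    (hg : Integrable g volume) : ∫ ξ, 𝓕 f ξ * g ξ = ∫ x, f x * 𝓕 g x := by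
  have := VectorFourier.integral_bilin_fourierIntegral_eq_flip (μ := volume) (ν := volume)
    (ContinuousLinearMap.mul ℂ ℂ) (L := innerₗ (Rd d)) (e := Real.fourierChar)
    Real.continuous_fourierChar continuous_inner hf hg
  simpa using! this

theorem fourier_continuous {d : ℕ} {f : Rd d → ℂ} (hf : Integrable f volume) :
    Continuous (𝓕 f) :=
  VectorFourier.fourierIntegral_continuous Real.continuous_fourierChar
    (by exact continuous_inner) hf

theorem fourier_norm_le {d : ℕ} (f : Rd d → ℂ) (x : Rd d) :
    ‖𝓕 f x‖ ≤ ∫ y, ‖f y‖ :=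
  VectorFourier.norm_fourierIntegral_le_integral_norm _ _ _ _ _

theorem isFT_toLp {d : ℕ} {U u : Rd d → ℂ} (hU : MemLp U 2 volume) (hu : MemLp u 2 volume)
    (h : IsFT U u) : 𝓕 (hu.toLp u) = hU.toLp U := by
  have key : (𝓕 (hu.toLp u) : Lp ℂ 2 (volume : Measure (Rd d))) =ᵐ[volume] U := by
    apply ae_eq_of_schwartz ((Lp.memLp _).locallyIntegrable (by norm_num))
      (hU.locallyIntegrable (by norm_num))
    intro φ
    have h1 := Lp.fourier_toTemperedDistribution_eq (hu.toLp u)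
    have h2 := congrArg (fun T => T φ) h1
    simp only [TemperedDistribution.fourier_apply, Lp.toTemperedDistribution_apply] at h2
    rw [h φ]
    simp only [smul_eq_mul, mul_comm] at h2 ⊢
    rw [← h2]
    apply integral_congr_ae
    filter_upwards [hu.coeFn_toLp] with x hx
    rw [hx, SchwartzMap.fourier_coe]
  apply Lp.ext
  exact key.trans hU.coeFn_toLp.symm

theorem isFT_fourier_L1 {d : ℕ} {f : Rd d → ℂ} (hf : Integrable f volume) :
    IsFT (𝓕 f) f := by
  intro φ
  exact fourier_pair_L1 hf φ.integrable

theorem fourier_ae_eq {d : ℕ} {f : Rd d → ℂ} (h1 : Integrable f volume) (h2 : MemLp f 2 volume) :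
    (𝓕 (h2.toLp f) : Lp ℂ 2 (volume : Measure (Rd d))) =ᵐ[volume] 𝓕 f := by
  apply ae_eq_of_schwartz ((Lp.memLp _).locallyIntegrable (by norm_num))
      (fourier_continuous h1).locallyIntegrable
  intro φ
  have h3 := Lp.fourier_toTemperedDistribution_eq (h2.toLp f)
  have h4 := congrArg (fun T => T φ) h3
  simp only [TemperedDistribution.fourier_apply, Lp.toTemperedDistribution_apply] at h4
  rw [isFT_fourier_L1 h1 φ]
  simp only [smul_eq_mul, mul_comm] at h4 ⊢
  rw [← h4]
  apply integral_congr_ae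
  filter_upwards [h2.coeFn_toLp] with x hx
  rw [hx, SchwartzMap.fourier_coe]

theorem fourier_memL2 {d : ℕ} {f : Rd d → ℂ} (h1 : Integrable f volume) (h2 : MemLp f 2 volume) :
    MemLp (𝓕 f) 2 volume :=
  (memLp_congr_ae (fourier_ae_eq h1 h2)).1 (Lp.memLp _)

theorem eLpNorm_fourier {d : ℕ} {f : Rd d → ℂ} (h1 : Integrable f volume)
    (h2 : MemLp f 2 volume) : eLpNorm (𝓕 f) 2 volume = eLpNorm f 2 volume := by
  rw [← eLpNorm_congr_ae (fourier_ae_eq h1 h2), ← eLpNorm_congr_ae h2.coeFn_toLp]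
  have := Lp.norm_fourier_eq (h2.toLp f)
  rw [Lp.norm_def, Lp.norm_def] at this
  exact (ENNReal.toReal_eq_toReal_iff' (Lp.eLpNorm_ne_top _) (Lp.eLpNorm_ne_top _)).1 this

theorem integral_norm_sq_eq {d : ℕ} {f : Rd d → ℂ} (h2 : MemLp f 2 volume) :
    ∫ x, ‖f x‖ ^ 2 = (eLpNorm f 2 volume).toReal ^ 2 := by
  rw [h2.eLpNorm_eq_integral_rpow_norm (by norm_num) (by norm_num)]
  have h0 : 0 ≤ ∫ x, ‖f x‖ ^ (2:ℝ) := integral_nonneg (fun x => by positivity)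
  simp only [ENNReal.toReal_ofNat]
  rw [ENNReal.toReal_ofReal (by positivity), ← Real.rpow_natCast, ← Real.rpow_mul h0]
  simp

theorem plancherel_int {d : ℕ} {f : Rd d → ℂ} (h1 : Integrable f volume) (h2 : MemLp f 2 volume) :
    ∫ x, ‖𝓕 f x‖ ^ 2 = ∫ x, ‖f x‖ ^ 2 := by
  rw [integral_norm_sq_eq (fourier_memL2 h1 h2), integral_norm_sq_eq h2, eLpNorm_fourier h1 h2]

theorem fourier_conj {d : ℕ} (f : Rd d → ℂ) (ξ : Rd d) :
    (starRingEnd ℂ) (𝓕 (fun x => (starRingEnd ℂ) (f x)) ξ) = 𝓕⁻ f ξ := by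
  rw [Real.fourier_eq', Real.fourierInv_eq', ← integral_conj]
  congr 1; ext x
  simp [← Complex.exp_conj, map_ofNat]

theorem memLp_conj {d : ℕ} {f : Rd d → ℂ} {p : ℝ≥0∞} (hf : MemLp f p volume) :
    MemLp (fun x => (starRingEnd ℂ) (f x)) p volume := hf.star

theorem isFT_pair {d : ℕ} {U u f : Rd d → ℂ} (hU : MemLp U 2 volume) (hu : MemLp u 2 volume)
    (h : IsFT U u) (h1 : Integrable f volume) (h2 : MemLp f 2 volume) :
    ∫ x, u x * f x = ∫ ξ, U ξ * 𝓕⁻ f ξ := by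
  have hc2 := memLp_conj h2
  have hc1 : Integrable (fun x => (starRingEnd ℂ) (f x)) volume :=
    memLp_one_iff_integrable.1 (memLp_conj (memLp_one_iff_integrable.2 h1))
  have := Lp.inner_fourier_eq (hc2.toLp _) (hu.toLp u)
  rw [isFT_toLp hU hu h, L2.inner_def, L2.inner_def] at this
  have e1 : ∫ x, u x * f x = ∫ x, inner ℂ ((hc2.toLp _ : Lp ℂ 2 (volume : Measure (Rd d))) x) ((hu.toLp u : Lp ℂ 2 (volume : Measure (Rd d))) x) := by
    apply integral_congr_ae
    filter_upwards [hc2.coeFn_toLp, hu.coeFn_toLp] with x hx hy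
    rw [hx, hy]; simp
  have e2 : ∫ x, U x * 𝓕⁻ f x = ∫ x, inner ℂ ((𝓕 (hc2.toLp _) : Lp ℂ 2 (volume : Measure (Rd d))) x) ((hU.toLp U : Lp ℂ 2 (volume : Measure (Rd d))) x) := by
    apply integral_congr_ae
    filter_upwards [fourier_ae_eq hc1 hc2, hU.coeFn_toLp] with x hx hy
    rw [hx, hy, ← fourier_conj]; simp
  rw [e1, e2, this]

theorem fourierInv_fun {d : ℕ} (f : Rd d → ℂ) : 𝓕⁻ f = fun x => 𝓕 f (-x) := by
  ext x; exact Real.fourierInv_eq_fourier_neg f x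

theorem fourierInv_memL2 {d : ℕ} {f : Rd d → ℂ} (h1 : Integrable f volume) (h2 : MemLp f 2 volume) :
    MemLp (𝓕⁻ f) 2 volume := by
  rw [fourierInv_fun]
  exact (fourier_memL2 h1 h2).comp_measurePreserving (Measure.measurePreserving_neg volume)

theorem fourierInv_pair_L1 {d : ℕ} {f g : Rd d → ℂ} (hf : Integrable f volume)
    (hg : Integrable g volume) : ∫ x, 𝓕⁻ f x * g x = ∫ ξ, f ξ * 𝓕⁻ g ξ := by
  have h := fourier_pair_L1 hf hg.comp_neg
  rw [← integral_neg_eq_self] at h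
  simp only [neg_neg] at h
  simp only [fourierInv_fun]
  rw [h]
  congr 1; ext x
  rw [← Real.fourierInv_eq_fourier_neg, Real.fourierInv_eq_fourier_comp_neg]

theorem isFT_fourierInv {d : ℕ} {V : Rd d → ℂ} (h1 : Integrable V volume) : IsFT V (𝓕⁻ V) := by
  intro φ
  have := fourierInv_pair_L1 h1 (𝓕 φ).integrable
  rw [SchwartzMap.fourier_coe] at this
  rw [this]
  congr 1; ext x
  rw [← SchwartzMap.fourier_coe, ← SchwartzMap.fourierInv_coe]
  simp

theorem osc_seg (A : ℝ) (hA : 0 < A) (β : ℂ) (hβ0 : 0 ≤ β.re) (hβ : 1 ≤ ‖β‖) (y x1 x2 : ℝ)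
    (h1 : 0 < x1) (h12 : x1 ≤ x2)
    (hφ : ∀ r ∈ Set.Icc x1 x2, 2 ≤ |2 * r - 2 * A / r ^ 3|) :
    ‖∫ r in x1..x2, Complex.exp (2 * Complex.I * y * (Real.log r : ℝ))
        * Complex.exp (-β * ((r ^ 2 + A / r ^ 2 : ℝ) : ℂ))‖ ≤ 2 * |y| + 2 := by
  set m : ℝ → ℂ := fun r => Complex.exp (2 * Complex.I * y * (Real.log r : ℝ)) with hm
  set e : ℝ → ℂ := fun r => Complex.exp (-β * ((r ^ 2 + A / r ^ 2 : ℝ) : ℂ)) with he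
  set D : ℝ → ℝ := fun r => 2 * r - 2 * A / r ^ 3 with hD
  set D2 : ℝ → ℝ := fun r => 2 + 6 * A / r ^ 4 with hD2
  have hpos : ∀ r ∈ Set.Icc x1 x2, 0 < r := fun r hr => lt_of_lt_of_le h1 hr.1
  have hDne : ∀ r ∈ Set.Icc x1 x2, D r ≠ 0 := fun r hr h0 => by
    have := hφ r hr
    simp only [hD] at h0
    rw [h0] at this; norm_num at this
  have mn : ∀ r, ‖m r‖ = 1 := fun r => by
    simp only [hm]
    rw [Complex.norm_exp]
    simp
  have en : ∀ r, ‖e r‖ ≤ 1 := fun r => by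
    simp only [he]
    rw [Complex.norm_exp]
    rw [Real.exp_le_one_iff, Complex.re_mul_ofReal]
    simp only [Complex.neg_re]
    have : 0 ≤ r ^ 2 + A / r ^ 2 := by positivity
    nlinarith [mul_nonneg hβ0 this]
  have dm : ∀ r, 0 < r → HasDerivAt m (2 * Complex.I * y / r * m r) r := fun r hr => by
    have := ((Real.hasDerivAt_log hr.ne').ofReal_comp).const_mul (2 * Complex.I * (y : ℂ))
    have := this.cexp
    convert! this using 1
    simp only [hm]; push_cast; ring
  have de : ∀ r, 0 < r → HasDerivAt e (-β * D r * e r) r := fun r hr => by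
    have h0 : HasDerivAt (fun r : ℝ => r ^ 2 + A / r ^ 2) (D r) r := by
      have := (hasDerivAt_pow 2 r).add (((hasDerivAt_pow 2 r).inv (by positivity)).const_mul A)
      convert! this using 1
      simp only [hD]; field_simp; ring
    have := (h0.ofReal_comp.const_mul (-β)).cexp
    convert! this using 1
    simp only [he]; ring
  have dD : ∀ r, 0 < r → HasDerivAt D (D2 r) r := fun r hr => by
    have := ((hasDerivAt_id r).const_mul 2).sub (((hasDerivAt_pow 3 r).inv (by positivity)).const_mul (2 * A))
    convert! this using 1
    simp only [hD2]; field_simp; ring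
  have cD2 : ContinuousOn D2 (Set.Icc x1 x2) := by
    apply ContinuousOn.add continuousOn_const
    exact continuousOn_const.div (continuousOn_pow 4) (fun r hr => by have := hpos r hr; positivity)
  have cD : ContinuousOn D (Set.Icc x1 x2) := fun r hr => (dD r (hpos r hr)).continuousAt.continuousWithinAt
  have cm : ContinuousOn m (Set.Icc x1 x2) := fun r hr => (dm r (hpos r hr)).continuousAt.continuousWithinAt
  have ce : ContinuousOn e (Set.Icc x1 x2) := fun r hr => (de r (hpos r hr)).continuousAt.continuousWithinAt
  set h' : ℝ → ℂ := fun r => 2 * Complex.I * y / r * m r / D r - m r * D2 r / (D r) ^ 2 with hh'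
  have cDc : ContinuousOn (fun r => (D r : ℂ)) (Set.Icc x1 x2) := Complex.continuous_ofReal.comp_continuousOn cD
  have cD2c : ContinuousOn (fun r => (D2 r : ℂ)) (Set.Icc x1 x2) := Complex.continuous_ofReal.comp_continuousOn cD2
  have hDnec : ∀ r ∈ Set.Icc x1 x2, (D r : ℂ) ≠ 0 := fun r hr => by exact_mod_cast hDne r hr
  have ch' : ContinuousOn h' (Set.Icc x1 x2) := by
    apply ContinuousOn.sub
    · apply ContinuousOn.div _ cDc hDnec
      apply ContinuousOn.mul _ cm
      apply continuousOn_const.div Complex.continuous_ofReal.continuousOn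
      intro r hr
      exact_mod_cast (hpos r hr).ne'
    · apply ContinuousOn.div (cm.mul cD2c) (cDc.pow 2)
      intro r hr
      exact pow_ne_zero _ (hDnec r hr)
  have hu : Set.uIcc x1 x2 = Set.Icc x1 x2 := Set.uIcc_of_le h12
  have dH : ∀ r ∈ Set.uIcc x1 x2, HasDerivAt (fun r => m r / D r * e r) (h' r * e r - β * (m r * e r)) r := by
    intro r hr
    rw [hu] at hr
    have := ((dm r (hpos r hr)).div (dD r (hpos r hr)).ofReal_comp (hDnec r hr)).mul (de r (hpos r hr))
    convert! this using 1
    simp only [hh', Pi.div_apply]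
    have := hDnec r hr
    field_simp
    try ring
  have ii1 : IntervalIntegrable (fun r => h' r * e r) volume x1 x2 :=
    (ContinuousOn.mul (by rwa [hu]) (by rwa [hu])).intervalIntegrable
  have ii2 : IntervalIntegrable (fun r => m r * e r) volume x1 x2 :=
    (ContinuousOn.mul (by rwa [hu]) (by rwa [hu])).intervalIntegrable
  have ftc := intervalIntegral.integral_eq_sub_of_hasDerivAt dH (ii1.sub (ii2.const_mul β))
  rw [intervalIntegral.integral_sub ii1 (ii2.const_mul β), intervalIntegral.integral_const_mul] at ftc
  have bH : ∀ r ∈ Set.Icc x1 x2, ‖m r / D r * e r‖ ≤ 1 / 2 := fun r hr => by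
    rw [norm_mul, norm_div, mn]
    have h2 : ‖(D r : ℂ)‖ = |D r| := by simp
    rw [h2]
    have h3 : 1 / |D r| ≤ 1 / 2 := one_div_le_one_div_of_le (by norm_num) (hφ r hr)
    calc 1 / |D r| * ‖e r‖ ≤ 1 / 2 * 1 := mul_le_mul h3 (en r) (norm_nonneg _) (by norm_num)
      _ = 1 / 2 := by norm_num
  have dG : ∀ r ∈ Set.uIcc x1 x2, HasDerivAt (fun r => -((2 * |y| + 1) * (D r)⁻¹)) ((2 * |y| + 1) * (D2 r / (D r) ^ 2)) r := by
    intro r hr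
    rw [hu] at hr
    have := (((dD r (hpos r hr)).inv (hDne r hr)).const_mul (2 * |y| + 1)).neg
    convert! this using 1
    ring
  have iG : IntervalIntegrable (fun r => (2 * |y| + 1) * (D2 r / (D r) ^ 2)) volume x1 x2 := by
    apply ContinuousOn.intervalIntegrable
    rw [hu]
    apply continuousOn_const.mul
    exact cD2.div (cD.pow 2) (fun r hr => pow_ne_zero _ (hDne r hr))
  have b1 : ‖∫ r in x1..x2, h' r * e r‖ ≤ ∫ r in x1..x2, (2 * |y| + 1) * (D2 r / (D r) ^ 2) := by
    apply intervalIntegral.norm_integral_le_of_norm_le h12 _ iG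
    refine Filter.Eventually.of_forall (fun r hr => ?_)
    have hr' : r ∈ Set.Icc x1 x2 := Set.Ioc_subset_Icc_self hr
    have hr0 := hpos r hr'
    have hD20 : 0 ≤ D2 r := by simp only [hD2]; positivity
    have hDp : 0 < |D r| := abs_pos.2 (hDne r hr')
    have n1 : ‖h' r‖ ≤ 2 * |y| / r / |D r| + D2 r / (D r) ^ 2 := by
      simp only [hh']
      refine (norm_sub_le _ _).trans ?_
      apply le_of_eq
      congr 1
      · simp [mn, abs_of_pos hr0]
      · simp [mn, abs_of_nonneg hD20]
    have n2 : 1 / r / |D r| ≤ D2 r / (D r) ^ 2 := by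
      rw [← sq_abs (D r), div_div, div_le_div_iff₀ (by positivity) (by positivity)]
      have : |D r| ≤ r * D2 r := by
        have e1 : r * D2 r = 2 * r + 6 * (A / r ^ 3) := by simp only [hD2]; field_simp
        have e2 : D r = 2 * r - 2 * (A / r ^ 3) := by simp only [hD]; ring
        have : 0 < A / r ^ 3 := by positivity
        rw [e1, e2, abs_le]; constructor <;> nlinarith
      nlinarith
    rw [norm_mul]
    calc ‖h' r‖ * ‖e r‖ ≤ ‖h' r‖ * 1 := by gcongr; exact en r
      _ ≤ 2 * |y| / r / |D r| + D2 r / (D r) ^ 2 := by rw [mul_one]; exact n1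
      _ = 2 * |y| * (1 / r / |D r|) + D2 r / (D r) ^ 2 := by ring
      _ ≤ 2 * |y| * (D2 r / (D r) ^ 2) + D2 r / (D r) ^ 2 := by gcongr
      _ = _ := by ring
  rw [intervalIntegral.integral_eq_sub_of_hasDerivAt dG iG] at b1
  have bD : ∀ r ∈ Set.Icc x1 x2, |(D r)⁻¹| ≤ 1 / 2 := fun r hr => by
    rw [abs_inv, ← one_div]
    exact one_div_le_one_div_of_le (by norm_num) (hφ r hr)
  have m1 := abs_le.1 (bD x1 ⟨le_refl _, h12⟩)
  have m2 := abs_le.1 (bD x2 ⟨h12, le_refl _⟩)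
  have b2 : ‖∫ r in x1..x2, h' r * e r‖ ≤ 2 * |y| + 1 := by
    refine b1.trans ?_
    have : 0 ≤ 2 * |y| + 1 := by positivity
    nlinarith
  have fin : ‖β * ∫ r in x1..x2, m r * e r‖ ≤ 2 * |y| + 2 := by
    have e1 : β * ∫ r in x1..x2, m r * e r = (∫ r in x1..x2, h' r * e r) - (m x2 / D x2 * e x2 - m x1 / D x1 * e x1) := by
      rw [← ftc]; ring
    rw [e1]
    have := norm_sub_le (∫ r in x1..x2, h' r * e r) (m x2 / D x2 * e x2 - m x1 / D x1 * e x1)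
    have := norm_sub_le (m x2 / D x2 * e x2) (m x1 / D x1 * e x1)
    have := bH x1 ⟨le_refl _, h12⟩
    have := bH x2 ⟨h12, le_refl _⟩
    linarith
  rw [norm_mul] at fin
  have := norm_nonneg (∫ r in x1..x2, m r * e r)
  nlinarith

theorem osc_full (a : ℝ) (ha : 0 < a) (β : ℂ) (hβ0 : 0 < β.re) (hβ : 1 ≤ ‖β‖) (y : ℝ) :
    ‖∫ r in Set.Ioi (0:ℝ), Complex.exp (2 * Complex.I * y * (Real.log r : ℝ))
        * Complex.exp (-β * ((r ^ 2 + a ^ 2 / r ^ 2 : ℝ) : ℂ))‖ ≤ 4 * |y| + 5 := by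
  set F : ℝ → ℂ := fun r => Complex.exp (2 * Complex.I * y * (Real.log r : ℝ))
        * Complex.exp (-β * ((r ^ 2 + a ^ 2 / r ^ 2 : ℝ) : ℂ)) with hF
  have Fn : ∀ r, ‖F r‖ = Real.exp (-β.re * (r ^ 2 + a ^ 2 / r ^ 2)) := fun r => by
    simp only [hF]
    have h1 : (2 * Complex.I * y * ((Real.log r : ℝ) : ℂ)).re = 0 := by simp
    rw [norm_mul, Complex.norm_exp, Complex.norm_exp, h1, Complex.re_mul_ofReal]
    simp only [Real.exp_zero, one_mul, Complex.neg_re]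
  have Fn1 : ∀ r, ‖F r‖ ≤ 1 := fun r => by
    rw [Fn, Real.exp_le_one_iff]
    have : 0 ≤ r ^ 2 + a ^ 2 / r ^ 2 := by positivity
    nlinarith [mul_nonneg hβ0.le this]
  have Fm : Measurable F := by
    simp only [hF]
    fun_prop
  have Fi : Integrable F volume := by
    refine (integrable_exp_neg_mul_sq hβ0).mono' Fm.aestronglyMeasurable
      (Filter.Eventually.of_forall fun r => ?_)
    rw [Fn]
    apply Real.exp_le_exp.2
    have : 0 ≤ a ^ 2 / r ^ 2 := by positivity
    nlinarith [mul_nonneg hβ0.le this]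
  set w := Real.sqrt (1 + 4 * a) with hw
  have hw2 : w ^ 2 = 1 + 4 * a := Real.sq_sqrt (by positivity)
  have hw1 : 1 < w := by
    rw [hw]; apply Real.lt_sqrt_of_sq_lt; linarith
  set rm := (w - 1) / 2 with hrm
  set rp := (w + 1) / 2 with hrp
  have hrm0 : 0 < rm := by simp only [hrm]; linarith
  have hrp0 : 0 < rp := by simp only [hrp]; linarith
  have hdiff : rp = rm + 1 := by simp only [hrp, hrm]; ring
  have hprod : rm * rp = a := by simp only [hrp, hrm]; nlinarith
  have fact : ∀ r, 0 < r → 2 * r - 2 * a ^ 2 / r ^ 3 = 2 * (r - a / r) * (1 + a / r ^ 2) := fun r hr => by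
    field_simp; ring
  have big : ∀ r, 0 < r → 1 ≤ |r - a / r| → 2 ≤ |2 * r - 2 * a ^ 2 / r ^ 3| := fun r hr h => by
    rw [fact r hr, abs_mul, abs_mul]
    have h1 : 1 ≤ |1 + a / r ^ 2| := by
      have : 0 ≤ a / r ^ 2 := by positivity
      rw [abs_of_nonneg (by positivity)]; linarith
    rw [abs_of_pos (by norm_num : (0:ℝ) < 2)]
    nlinarith
  have bound : ∀ x1 x2, 0 < x1 → x1 ≤ rm → rp ≤ x2 → ‖∫ r in x1..x2, F r‖ ≤ 4 * |y| + 5 := by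
    intro x1 x2 h1 h2 h3
    have s1 : ‖∫ r in x1..rm, F r‖ ≤ 2 * |y| + 2 := by
      apply osc_seg (a ^ 2) (by positivity) β hβ0.le hβ y x1 rm h1 h2
      intro r hr
      have hr0 : 0 < r := lt_of_lt_of_le h1 hr.1
      apply big r hr0
      rw [le_abs]; right
      have : r + 1 ≤ a / r := by
        rw [le_div_iff₀ hr0]; nlinarith [hr.2]
      linarith
    have s3 : ‖∫ r in rp..x2, F r‖ ≤ 2 * |y| + 2 := by
      apply osc_seg (a ^ 2) (by positivity) β hβ0.le hβ y rp x2 hrp0 h3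
      intro r hr
      have hr0 : 0 < r := lt_of_lt_of_le hrp0 hr.1
      apply big r hr0
      rw [le_abs]; left
      have : a / r ≤ r - 1 := by
        rw [div_le_iff₀ hr0]; nlinarith [hr.1]
      linarith
    have s2 : ‖∫ r in rm..rp, F r‖ ≤ 1 := by
      have := intervalIntegral.norm_integral_le_of_norm_le_const (a := rm) (b := rp) (C := 1) (f := F) (fun r _ => Fn1 r)
      rw [hdiff] at this ⊢
      simpa using this
    have e : ∫ r in x1..x2, F r = (∫ r in x1..rm, F r) + (∫ r in rm..rp, F r) + ∫ r in rp..x2, F r := by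
      rw [intervalIntegral.integral_add_adjacent_intervals Fi.intervalIntegrable Fi.intervalIntegrable,
        intervalIntegral.integral_add_adjacent_intervals Fi.intervalIntegrable Fi.intervalIntegrable]
    rw [e]
    refine (norm_add₃_le).trans ?_
    linarith
  have b2 : ∀ x1, 0 < x1 → x1 ≤ rm → ‖∫ r in Set.Ioi x1, F r‖ ≤ 4 * |y| + 5 := by
    intro x1 h1 h2
    have := (intervalIntegral_tendsto_integral_Ioi x1 Fi.integrableOn tendsto_id).norm
    apply le_of_tendsto this
    filter_upwards [eventually_ge_atTop rp] with x2 h3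
    exact bound x1 x2 h1 h2 h3
  have t : Tendsto (fun x1 : ℝ => ∫ r in Set.Ioi x1, F r) (𝓝[>] 0) (𝓝 (∫ r in Set.Ioi (0:ℝ), F r)) := by
    have e : ∀ x1 : ℝ, ∫ r in Set.Ioi x1, F r = (∫ r in Set.Ioi (0:ℝ), F r) - ∫ r in (0:ℝ)..x1, F r := by
      intro x1
      rw [← intervalIntegral.integral_interval_add_Ioi (Fi.integrableOn) (Fi.integrableOn) (a := 0) (b := x1)]
      ring
    rw [funext e]
    have c : Continuous (fun x1 : ℝ => ∫ r in (0:ℝ)..x1, F r) := intervalIntegral.continuous_primitive (fun _ _ => Fi.intervalIntegrable) 0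
    have := (c.tendsto 0).mono_left (nhdsWithin_le_nhds (s := Set.Ioi 0))
    simpa using tendsto_const_nhds.sub this
  apply le_of_tendsto t.norm
  filter_upwards [Ioc_mem_nhdsGT hrm0] with x1 h
  exact b2 x1 h.1 h.2

theorem laplace_intble {x ρ : ℝ} (hx : 0 < x) (hρ : 0 < ρ) :
    IntegrableOn (fun t : ℝ => t ^ (x - 1) * Real.exp (-ρ * t)) (Set.Ioi 0) volume := by
  have := integrableOn_rpow_mul_exp_neg_mul_rpow (p := 1) (s := x - 1) (b := ρ)
    (by linarith) one_pos hρ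
  simpa using this

theorem laplace_norm {z w : ℂ} {t : ℝ} (ht : 0 < t) :
    ‖(t : ℂ) ^ (z - 1) * Complex.exp (-(w * t))‖ = t ^ (z.re - 1) * Real.exp (-w.re * t) := by
  rw [norm_mul, Complex.norm_cpow_eq_rpow_re_of_pos ht, Complex.norm_exp]
  simp

theorem laplace_meas (z w : ℂ) :
    AEStronglyMeasurable (fun t : ℝ => (t : ℂ) ^ (z - 1) * Complex.exp (-(w * t)))
      (volume.restrict (Set.Ioi 0)) := by
  apply ContinuousOn.aestronglyMeasurable _ measurableSet_Ioi
  intro t ht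
  apply ContinuousAt.continuousWithinAt
  have : ContinuousAt (fun t : ℝ => (t : ℂ) ^ (z - 1)) t :=
    (continuousAt_cpow_const (Or.inl (by simpa using ht))).comp
      Complex.continuous_ofReal.continuousAt
  exact this.mul (by fun_prop)

theorem laplace_cintble {z w : ℂ} (hz : 0 < z.re) (hw : 0 < w.re) :
    IntegrableOn (fun t : ℝ => (t : ℂ) ^ (z - 1) * Complex.exp (-(w * t))) (Set.Ioi 0) volume := by
  refine (laplace_intble hz hw).mono' (laplace_meas z w) ?_
  filter_upwards [ae_restrict_mem measurableSet_Ioi] with t ht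
  rw [laplace_norm ht]

theorem gamma_cpx {z w : ℂ} (hz : 0 < z.re) (hw : 0 < w.re) :
    ∫ t : ℝ in Set.Ioi 0, (t : ℂ) ^ (z - 1) * Complex.exp (-(w * t))
      = (1 / w) ^ z * Complex.Gamma z := by
  have ho : IsOpen {w : ℂ | 0 < w.re} := isOpen_lt continuous_const Complex.continuous_re
  have hA : AnalyticOnNhd ℂ (fun w : ℂ => ∫ t : ℝ in Set.Ioi 0,
      (t : ℂ) ^ (z - 1) * Complex.exp (-(w * t))) {w : ℂ | 0 < w.re} := by
    apply DifferentiableOn.analyticOnNhd _ ho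
    intro w0 hw0
    have hw0 : 0 < w0.re := hw0
    apply DifferentiableAt.differentiableWithinAt
    have := hasDerivAt_integral_of_dominated_loc_of_deriv_le (𝕜 := ℂ)
      (μ := volume.restrict (Set.Ioi (0:ℝ)))
      (F := fun w t => (t : ℂ) ^ (z - 1) * Complex.exp (-(w * t))) (x₀ := w0)
      (s := {w : ℂ | w0.re / 2 < w.re})
      (F' := fun w t => (t : ℂ) ^ (z - 1) * (Complex.exp (-(w * t)) * (-(t:ℂ))))
      (bound := fun t => t ^ (z.re + 1 - 1) * Real.exp (-(w0.re/2) * t))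
      ((isOpen_lt continuous_const Complex.continuous_re).mem_nhds (by
        show w0.re / 2 < w0.re
        linarith))
      (Eventually.of_forall fun w => laplace_meas z w) (laplace_cintble hz hw0) ?_ ?_
      (laplace_intble (by linarith) (by linarith)) ?_
    · exact this.2.differentiableAt
    · have h1 := (laplace_meas z w0).mul
        (Complex.continuous_ofReal.neg.aestronglyMeasurable (μ := volume.restrict (Set.Ioi (0:ℝ))))
      refine h1.congr (Eventually.of_forall fun t => ?_)
      simp [mul_assoc]
    · filter_upwards [ae_restrict_mem measurableSet_Ioi] with t ht w hw
      have ht : 0 < t := ht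
      rw [← mul_assoc, norm_mul, laplace_norm ht, norm_neg, Complex.norm_real, Real.norm_of_nonneg ht.le]
      rw [mul_right_comm]
      have e : t ^ (z.re + 1 - 1) = t ^ (z.re - 1) * t := by
        rw [← Real.rpow_add_one ht.ne']; ring_nf
      rw [e]
      have hw : w0.re / 2 < w.re := hw
      have h5 := mul_le_mul_of_nonneg_right hw.le ht.le
      apply mul_le_mul_of_nonneg_left _ (by positivity)
      apply Real.exp_le_exp.2; linarith
    · filter_upwards with t w hw
      have h1 : HasDerivAt (fun w : ℂ => -(w * t)) (-(t:ℂ)) w := by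
        simpa using ((hasDerivAt_id w).mul_const (t:ℂ)).fun_neg
      exact (h1.cexp).const_mul _
  have hB : AnalyticOnNhd ℂ (fun w : ℂ => (1 / w) ^ z * Complex.Gamma z) {w : ℂ | 0 < w.re} := by
    apply DifferentiableOn.analyticOnNhd _ ho
    intro w0 hw0
    have hw0 : 0 < w0.re := hw0
    have hne : w0 ≠ 0 := by rintro rfl; simp at hw0
    apply DifferentiableAt.differentiableWithinAt
    have hs : 1 / w0 ∈ Complex.slitPlane := by
      left; rw [one_div, Complex.inv_re]
      exact div_pos hw0 (Complex.normSq_pos.2 hne)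
    have h1 : DifferentiableAt ℂ (fun w : ℂ => 1 / w) w0 := by
      fun_prop (disch := assumption)
    exact (h1.cpow_const hs).mul_const _
  have hc : IsPreconnected {w : ℂ | 0 < w.re} := (convex_halfSpace_re_gt 0).isPreconnected
  refine hA.eqOn_of_preconnected_of_frequently_eq hB hc (z₀ := 1) (by simp) ?_ hw
  have h1 : ∃ᶠ r : ℝ in 𝓝[≠] (1:ℝ), 0 < r := by
    apply Eventually.frequently
    exact (eventually_gt_nhds one_pos).filter_mono nhdsWithin_le_nhds
  have h2 : Tendsto (fun r : ℝ => (r : ℂ)) (𝓝[≠] (1:ℝ)) (𝓝[≠] (1:ℂ)) := by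
    apply tendsto_nhdsWithin_of_tendsto_nhds_of_eventually_within
    · exact (Complex.continuous_ofReal.tendsto' 1 1 (by simp)).mono_left nhdsWithin_le_nhds
    · filter_upwards [self_mem_nhdsWithin] with r hr
      simpa using hr
  refine h2.frequently (h1.mono fun r hr => ?_)
  exact Complex.integral_cpow_mul_exp_neg_mul_Ioi hz hr

/-- the symbol -/
def wsym {d : ℕ} (l : ℝ) (ξ : Rd d) : ℂ := (l + Complex.I) + (l - Complex.I) * ((‖ξ‖ ^ 2 : ℝ) : ℂ)

theorem wsym_re {d : ℕ} (l : ℝ) (ξ : Rd d) : (wsym l ξ).re = l * (1 + ‖ξ‖ ^ 2) := by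
  unfold wsym
  rw [Complex.add_re, Complex.re_mul_ofReal]
  simp; ring

theorem wsym_cont {d : ℕ} (l : ℝ) : Continuous (wsym (d := d) l) := by
  unfold wsym
  fun_prop

def zN (d : ℕ) (y : ℝ) : ℂ := ((((d:ℝ) + 1) / 2 : ℝ) : ℂ) + y * Complex.I

theorem zN_re (d : ℕ) (y : ℝ) : (zN d y).re = ((d:ℝ) + 1) / 2 := by
  unfold zN
  rw [Complex.add_re, Complex.re_ofReal_mul, Complex.ofReal_re]; simp

theorem Phi_norm {d : ℕ} {l t y : ℝ} (ht : 0 < t) (ξ : Rd d) :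
    ‖(t : ℂ) ^ (zN d y - 1) * Complex.exp (-(wsym l ξ * t))‖
      = t ^ (((d:ℝ) + 1) / 2 - 1) * Real.exp (-l * t) * Real.exp (-(l * t) * ‖ξ‖ ^ 2) := by
  rw [laplace_norm ht, zN_re, wsym_re, mul_assoc, ← Real.exp_add]
  ring_nf

theorem Phi_meas {d : ℕ} {l y : ℝ} :
    AEStronglyMeasurable (fun q : Rd d × ℝ => (q.2 : ℂ) ^ (zN d y - 1) * Complex.exp (-(wsym l q.1 * q.2)))
      (volume.prod (volume.restrict (Set.Ioi 0))) := by
  apply Measurable.aestronglyMeasurable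
  have := (wsym_cont (d := d) l).measurable
  fun_prop

theorem Phi_intble {d : ℕ} {l y : ℝ} (hl : 0 < l) :
    Integrable (fun q : Rd d × ℝ => (q.2 : ℂ) ^ (zN d y - 1) * Complex.exp (-(wsym l q.1 * q.2)))
      (volume.prod (volume.restrict (Set.Ioi 0))) := by
  rw [integrable_prod_iff' Phi_meas]
  constructor
  · filter_upwards [ae_restrict_mem measurableSet_Ioi] with t ht
    have ht : 0 < t := ht
    have hi : Integrable (fun ξ : Rd d => Real.exp (-(l * t) * ‖ξ‖ ^ 2)) volume := by
      have hlt : 0 < l * t := by positivity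
      have h1 := GaussianFourier.integrable_cexp_neg_mul_sq_norm_add (V := Rd d)
        (b := ((l * t : ℝ) : ℂ)) (by simpa using hlt) 0 0
      have h2 := h1.norm
      refine h2.congr (Eventually.of_forall fun ξ => ?_)
      simp only [Complex.norm_exp]
      congr 1
      simp [← Complex.ofReal_pow]
    refine (hi.const_mul (t ^ (((d:ℝ) + 1) / 2 - 1) * Real.exp (-l * t))).mono' ?_ ?_
    · have := (wsym_cont (d := d) l)
      apply Continuous.aestronglyMeasurable
      fun_prop
    · exact Eventually.of_forall fun ξ => (Phi_norm ht ξ).le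
  · have h1 := (laplace_intble (x := 1/2) (ρ := l) (by norm_num) hl).const_mul ((π / l) ^ ((d:ℝ) / 2))
    refine h1.congr ?_
    filter_upwards [ae_restrict_mem measurableSet_Ioi] with t ht
    have ht : 0 < t := ht
    simp only [Phi_norm ht]
    rw [integral_const_mul, GaussianFourier.integral_rexp_neg_mul_sq_norm (by positivity)]
    simp only [finrank_euclideanSpace, Fintype.card_fin]
    rw [div_mul_eq_div_div π l t, Real.div_rpow (by positivity) ht.le]
    have e : t ^ ((1:ℝ)/2 - 1) = t ^ (((d:ℝ)+1)/2 - 1) / t ^ ((d:ℝ)/2) := by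
      rw [← Real.rpow_sub ht]; congr 1; ring
    rw [e]; ring

/-- the multiplier -/
def mz {d : ℕ} (l y : ℝ) (ξ : Rd d) : ℂ :=
  (1 / wsym l ξ) ^ (zN d y) * Complex.Gamma (zN d y)

theorem mz_eq {d : ℕ} {l y : ℝ} (hl : 0 < l) (ξ : Rd d) :
    mz l y ξ = ∫ t : ℝ in Set.Ioi 0, (t : ℂ) ^ (zN d y - 1) * Complex.exp (-(wsym l ξ * t)) := by
  rw [gamma_cpx]; rfl
  · rw [zN_re]; positivity
  · rw [wsym_re]; positivity

theorem mz_intble {d : ℕ} {l y : ℝ} (hl : 0 < l) : Integrable (mz (d := d) l y) volume := by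
  have := (Phi_intble (d := d) (y := y) hl).integral_prod_left
  refine this.congr (Eventually.of_forall fun ξ => ?_)
  exact (mz_eq hl ξ).symm

theorem mz_fourier {d : ℕ} {l y : ℝ} (hl : 0 < l) (x : Rd d) :
    𝓕 (mz (d := d) l y) x = ∫ t : ℝ in Set.Ioi 0, (t : ℂ) ^ (zN d y - 1) *
      Complex.exp (-((l + Complex.I) * t)) *
      ((π / ((l - Complex.I) * t)) ^ ((d : ℂ) / 2) *
        Complex.exp (-π ^ 2 * ‖x‖ ^ 2 / ((l - Complex.I) * t))) := by
  rw [Real.fourier_eq']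
  have e1 : ∀ ξ : Rd d, Complex.exp (((-2 * π * ⟪ξ, x⟫ : ℝ) : ℂ) * Complex.I) • mz l y ξ
     = ∫ t : ℝ in Set.Ioi 0, Complex.exp (((-2 * π * ⟪ξ, x⟫ : ℝ) : ℂ) * Complex.I) * ((t : ℂ) ^ (zN d y - 1) * Complex.exp (-(wsym l ξ * t))) := by
    intro ξ
    rw [mz_eq hl, smul_eq_mul, ← integral_const_mul]
  rw [integral_congr_ae (Eventually.of_forall e1), integral_integral_swap]
  · apply setIntegral_congr_fun measurableSet_Ioi
    intro t ht
    have ht : 0 < t := ht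
    have h := fourier_gaussian_innerProductSpace (V := Rd d) (b := (l - Complex.I) * t)
      (by simp; positivity) x
    simp only [finrank_euclideanSpace, Fintype.card_fin] at h
    simp only
    rw [← h, Real.fourier_eq', ← integral_const_mul]
    congr 1; ext ξ
    rw [smul_eq_mul]
    have : Complex.exp (-(wsym l ξ * t)) = Complex.exp (-((l + Complex.I) * t)) *
        Complex.exp (-((l - Complex.I) * t) * ‖ξ‖ ^ 2) := by
      rw [← Complex.exp_add]; congr 1; unfold wsym; push_cast; ring
    rw [this]; ring
  · refine (Phi_intble (d := d) (y := y) hl).mono ?_ ?_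
    · apply AEStronglyMeasurable.mul _ Phi_meas
      apply Continuous.aestronglyMeasurable
      fun_prop
    · refine Eventually.of_forall fun q => ?_
      simp only [Function.uncurry, norm_mul]
      rw [Complex.norm_exp_ofReal_mul_I, one_mul]

theorem mz_pt {d : ℕ} {l y r : ℝ} (hr : 0 < r) (x : Rd d) :
    ((2:ℝ) * r ^ ((2:ℝ) - 1)) • (((r ^ (2:ℝ) : ℝ) : ℂ) ^ (zN d y - 1) *
      Complex.exp (-((l + Complex.I) * ((r ^ (2:ℝ) : ℝ) : ℂ))) *
      ((π / ((l - Complex.I) * ((r ^ (2:ℝ) : ℝ) : ℂ))) ^ ((d : ℂ) / 2) *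
        Complex.exp (-π ^ 2 * ‖x‖ ^ 2 / ((l - Complex.I) * ((r ^ (2:ℝ) : ℝ) : ℂ)))))
    = 2 * (π : ℂ) ^ ((d : ℂ) / 2) * (1 / (l - Complex.I)) ^ ((d : ℂ) / 2) *
      (Complex.exp (2*Complex.I*y*(Real.log r:ℝ)) * Complex.exp (-(l + Complex.I)*
       ((r^2+(π * ‖x‖ / √(1 + l^2))^2/r^2:ℝ):ℂ))) := by
  have hk : (l - Complex.I) ≠ 0 := by
    intro h; have := congrArg Complex.im h; simp at this
  have hb : (l + Complex.I) * (l - Complex.I) = ((1 + l^2 : ℝ) : ℂ) := by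
    push_cast; ring_nf; rw [Complex.I_sq]; ring
  have hbn : ((1 + l^2 : ℝ) : ℂ) ≠ 0 := by
    exact_mod_cast (by positivity : (1 + l^2 : ℝ) ≠ 0)
  have hrc : (r : ℂ) ≠ 0 := by exact_mod_cast hr.ne'
  have e0 : r ^ (2:ℝ) = r ^ 2 := by norm_cast
  rw [e0]
  have e1 : -(π : ℂ) ^ 2 * ‖x‖ ^ 2 / ((l - Complex.I) * ((r ^ 2 : ℝ) : ℂ)) =
      -(l + Complex.I) * (((π * ‖x‖ / √(1 + l^2))^2/r^2 : ℝ) : ℂ) := by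
    rw [div_pow, Real.sq_sqrt (by positivity)]
    have : (l + Complex.I) = ((1 + l^2 : ℝ) : ℂ) / (l - Complex.I) := by
      rw [← hb]; field_simp
    rw [this]
    have hbn' := hbn
    push_cast at hbn ⊢
    field_simp
  have e2 : (π : ℂ) / ((l - Complex.I) * ((r ^ 2 : ℝ) : ℂ)) = ((π / r ^ 2 : ℝ) : ℂ) * (1 / (l - Complex.I)) := by
    push_cast; field_simp
  have hkn : 1 / (l - Complex.I) ≠ 0 := by simpa using hk
  have hpos : 0 < π / r ^ 2 := by positivity
  rw [e1, e2]
  have hr2 : ((r ^ 2 : ℝ) : ℂ) ≠ 0 := by exact_mod_cast (by positivity : (r^2:ℝ) ≠ 0)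
  have hpi : (π : ℂ) ≠ 0 := by exact_mod_cast Real.pi_ne_zero
  rw [Complex.cpow_def_of_ne_zero hr2, Complex.cpow_def_of_ne_zero (x := _ * _) (mul_ne_zero (by exact_mod_cast hpos.ne') hkn),
    Complex.cpow_def_of_ne_zero hpi, Complex.cpow_def_of_ne_zero hkn, Complex.log_ofReal_mul hpos hkn,
    ← Complex.ofReal_log (by positivity), ← Complex.ofReal_log Real.pi_pos.le,
    Real.log_div Real.pi_ne_zero (by positivity), Real.log_pow]
  have e3 : ((2 * r ^ ((2:ℝ) - 1) : ℝ) : ℂ) = 2 * Complex.exp (Real.log r : ℝ) := by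
    rw [← Complex.ofReal_exp, Real.exp_log hr]
    norm_num
  rw [Complex.real_smul, e3]
  simp only [mul_assoc, ← Complex.exp_add]
  congr 2
  unfold zN
  push_cast
  ring

theorem mz_bound {d : ℕ} {l y : ℝ} (hl : 0 < l) (x : Rd d) (hd : 1 ≤ d) :
    ‖𝓕 (mz (d := d) l y) x‖ ≤ 2 * π ^ ((d:ℝ) / 2) * (4 * |y| + 5) := by
  have main : ∀ x : Rd d, x ≠ 0 → ‖𝓕 (mz (d := d) l y) x‖ ≤ 2 * π ^ ((d:ℝ) / 2) * (4 * |y| + 5) := by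
    intro x hx
    rw [mz_fourier hl, ← integral_comp_rpow_Ioi_of_pos (p := 2) (by norm_num)]
    rw [setIntegral_congr_fun measurableSet_Ioi (fun r hr => mz_pt hr x), integral_const_mul]
    have ho := osc_full (π * ‖x‖ / √(1 + l^2)) (by positivity) (l + Complex.I) (by simpa using hl)
      (by simpa using Complex.abs_im_le_norm ((l:ℂ) + Complex.I)) y
    rw [norm_mul]
    refine mul_le_mul ?_ ho (norm_nonneg _) (by positivity)
    rw [norm_mul, norm_mul]
    have h1 : ‖(π : ℂ) ^ ((d:ℂ) / 2)‖ = π ^ ((d:ℝ)/2) := by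
      rw [Complex.norm_cpow_eq_rpow_re_of_pos Real.pi_pos]; congr 1; simp
    have h2 : ‖(1 / (l - Complex.I)) ^ ((d : ℂ) / 2)‖ ≤ 1 := by
      have : ((d:ℂ) / 2) = (((d:ℝ)/2 : ℝ) : ℂ) := by push_cast; rfl
      rw [this, Complex.norm_cpow_real]
      apply Real.rpow_le_one (norm_nonneg _) _ (by positivity)
      rw [norm_div, norm_one]
      apply div_le_one_of_le₀ _ (norm_nonneg _)
      simpa using Complex.abs_im_le_norm ((l:ℂ) - Complex.I)
    rw [h1]
    have : 0 < π ^ ((d:ℝ)/2) := by positivity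
    simp only [Complex.norm_ofNat]
    nlinarith
  by_cases hx : x = 0
  · haveI : Nontrivial (Rd d) := by
      haveI : Nonempty (Fin d) := ⟨⟨0, hd⟩⟩
      infer_instance
    have hc : Continuous (fun x => ‖𝓕 (mz (d := d) l y) x‖) := (fourier_continuous (mz_intble hl)).norm
    have hcl : IsClosed {x : Rd d | ‖𝓕 (mz (d := d) l y) x‖ ≤ 2 * π ^ ((d:ℝ) / 2) * (4 * |y| + 5)} :=
      isClosed_le hc continuous_const
    have hden : Dense ({0}ᶜ : Set (Rd d)) := dense_compl_singleton 0
    exact hcl.closure_subset_iff.2 (fun x hx => main x hx) (hden x)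
  · exact main x hx

theorem cpow_norm_le {v z : ℂ} (hv : 0 < v.re) :
    ‖v ^ z‖ ≤ ‖v‖ ^ z.re * Real.exp (π / 2 * |z.im|) := by
  have hne : v ≠ 0 := by rintro rfl; simp at hv
  rw [Complex.norm_cpow_of_ne_zero hne, div_eq_mul_inv, ← Real.exp_neg]
  apply mul_le_mul_of_nonneg_left _ (by positivity)
  apply Real.exp_le_exp.2
  have h1 := Complex.abs_arg_le_pi_div_two_iff.2 hv.le
  calc -(v.arg * z.im) ≤ |v.arg * z.im| := neg_le_abs _
    _ = |v.arg| * |z.im| := abs_mul _ _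
    _ ≤ _ := by gcongr

theorem rpow_norm_le {v : ℂ} {V0 N x : ℝ} (hV : ‖v‖ ≤ V0) (hx0 : 0 ≤ x) (hxN : x ≤ N) :
    ‖v‖ ^ x ≤ (max 1 V0) ^ N := by
  calc ‖v‖ ^ x ≤ (max 1 V0) ^ x :=
        Real.rpow_le_rpow (norm_nonneg _) (hV.trans (le_max_right _ _)) hx0
    _ ≤ _ := Real.rpow_le_rpow_of_exponent_le (le_max_left _ _) hxN

theorem cpow_norm_le' {v z : ℂ} {V0 N Y : ℝ} (hv : 0 < v.re) (hV : ‖v‖ ≤ V0) (h0 : 0 ≤ z.re)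
    (hN : z.re ≤ N) (hY : |z.im| ≤ Y) :
    ‖v ^ z‖ ≤ (max 1 V0) ^ N * Real.exp (π / 2 * Y) := by
  refine (cpow_norm_le hv).trans ?_
  have := rpow_norm_le hV h0 hN
  gcongr

theorem Gamma_norm_le {z : ℂ} (hz : 0 < z.re) : ‖Complex.Gamma z‖ ≤ Real.Gamma z.re := by
  rw [Complex.Gamma_eq_integral hz, Real.Gamma_eq_integral hz, Complex.GammaIntegral]
  refine (norm_integral_le_integral_norm _).trans (le_of_eq ?_)
  apply setIntegral_congr_fun measurableSet_Ioi
  intro t ht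
  simp only
  rw [norm_mul, Complex.norm_cpow_eq_rpow_re_of_pos ht, Complex.norm_real, Real.norm_eq_abs, Real.abs_exp]
  simp

section
variable {d : ℕ} {v : Rd d → ℂ} {k : Rd d → ℂ} {V0 N : ℝ}

theorem M_meas (hv : Measurable v) (hk : Integrable k volume) (z : ℂ) :
    AEStronglyMeasurable (fun ξ => v ξ ^ z * k ξ) volume :=
  (hv.pow_const z).aestronglyMeasurable.mul hk.1

theorem M_bd (hre : ∀ ξ, 0 < (v ξ).re) (hV : ∀ ξ, ‖v ξ‖ ≤ V0)
    {z : ℂ} {Y : ℝ} (h0 : 0 ≤ z.re) (hN : z.re ≤ N) (hY : |z.im| ≤ Y) (ξ : Rd d) :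
    ‖v ξ ^ z * k ξ‖ ≤ (max 1 V0) ^ N * Real.exp (π / 2 * Y) * ‖k ξ‖ := by
  rw [norm_mul]
  have := cpow_norm_le' (hre ξ) (hV ξ) h0 hN hY
  gcongr

theorem M_intble (hv : Measurable v) (hre : ∀ ξ, 0 < (v ξ).re) (hV : ∀ ξ, ‖v ξ‖ ≤ V0)
    (hk : Integrable k volume) {z : ℂ} (h0 : 0 ≤ z.re) :
    Integrable (fun ξ => v ξ ^ z * k ξ) volume :=
  (hk.norm.const_mul _).mono' (M_meas hv hk z)
    (Eventually.of_forall fun ξ => M_bd hre hV h0 le_rfl le_rfl ξ)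

theorem M_norm (hre : ∀ ξ, 0 < (v ξ).re) (hV : ∀ ξ, ‖v ξ‖ ≤ V0)
    (hk : Integrable k volume) {z : ℂ} (h0 : 0 ≤ z.re) (hN : z.re ≤ N) :
    ‖∫ ξ, v ξ ^ z * k ξ‖ ≤ (max 1 V0) ^ N * Real.exp (π / 2 * |z.im|) * ∫ ξ, ‖k ξ‖ := by
  rw [← integral_const_mul]
  exact norm_integral_le_of_norm_le (hk.norm.const_mul _)
    (Eventually.of_forall fun ξ => M_bd hre hV h0 hN le_rfl ξ)

theorem M_cont (hv : Measurable v) (hre : ∀ ξ, 0 < (v ξ).re) (hV : ∀ ξ, ‖v ξ‖ ≤ V0)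
    (hk : Integrable k volume) :
    ContinuousOn (fun z : ℂ => ∫ ξ, v ξ ^ z * k ξ) (Complex.re ⁻¹' Set.Icc 0 N) := by
  intro z0 hz0
  apply continuousWithinAt_of_dominated
    (bound := fun ξ => (max 1 V0) ^ N * Real.exp (π / 2 * (|z0.im| + 1)) * ‖k ξ‖)
  · exact Eventually.of_forall fun z => M_meas hv hk z
  · have h1 : ∀ᶠ z in 𝓝 z0, |z.im| < |z0.im| + 1 :=
      (continuous_abs.comp Complex.continuous_im).continuousAt.eventually_lt
        continuousAt_const (by simp)
    filter_upwards [h1.filter_mono nhdsWithin_le_nhds, self_mem_nhdsWithin] with z hz hz2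
    exact Eventually.of_forall fun ξ => M_bd hre hV hz2.1 hz2.2 hz.le ξ
  · exact hk.norm.const_mul _
  · refine Eventually.of_forall fun ξ => ?_
    have hne : v ξ ≠ 0 := by intro h; have := hre ξ; simp [h] at this
    apply ContinuousAt.continuousWithinAt
    exact (continuousAt_const_cpow hne).mul_const _

theorem M_diff (hv : Measurable v) (hre : ∀ ξ, 0 < (v ξ).re) (hV : ∀ ξ, ‖v ξ‖ ≤ V0)
    (hk : Integrable k volume) :
    DifferentiableOn ℂ (fun z : ℂ => ∫ ξ, v ξ ^ z * k ξ) (Complex.re ⁻¹' Set.Ioo 0 N) := by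
  intro z0 hz0
  have hz0 : 0 < z0.re := hz0.1
  apply DifferentiableAt.differentiableWithinAt
  have hne : ∀ ξ, v ξ ≠ 0 := by intro ξ h; have := hre ξ; simp [h] at this
  set R := z0.re / 2 with hR
  have hRp : 0 < R := by positivity
  have hd : ∀ (ξ) (z : ℂ), HasDerivAt (fun z : ℂ => v ξ ^ z) (v ξ ^ z * Complex.log (v ξ)) z := by
    intro ξ z
    simpa using (hasDerivAt_id z).const_cpow (Or.inl (hne ξ))
  have := hasDerivAt_integral_of_dominated_loc_of_deriv_le (𝕜 := ℂ)
      (μ := (volume : Measure (Rd d)))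
      (F := fun z ξ => v ξ ^ z * k ξ) (x₀ := z0)
      (s := Metric.ball z0 R)
      (F' := fun z ξ => v ξ ^ z * Complex.log (v ξ) * k ξ)
      (bound := fun ξ => (max 1 V0) ^ (z0.re + 2 * R) * Real.exp (π / 2 * (|z0.im| + 2 * R)) / R * ‖k ξ‖)
      (Metric.ball_mem_nhds _ hRp)
      (Eventually.of_forall fun w => M_meas hv hk w) (M_intble hv hre hV hk hz0.le) ?_ ?_
      (hk.norm.const_mul _) ?_
  · exact this.2.differentiableAt
  · exact ((hv.pow_const z0).mul (Complex.measurable_log.comp hv)).aestronglyMeasurable.mul hk.1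
  · refine Eventually.of_forall fun ξ z hz => ?_
    rw [norm_mul]
    apply mul_le_mul_of_nonneg_right _ (norm_nonneg _)
    rw [← (hd ξ z).deriv]
    apply Complex.norm_deriv_le_of_forall_mem_sphere_norm_le hRp
    · exact Differentiable.diffContOnCl fun w => (hd ξ w).differentiableAt
    · intro w hw
      have h1 : ‖w - z0‖ ≤ 2 * R := by
        have h2 : ‖w - z‖ = R := by simpa [dist_eq_norm] using hw
        have h3 : ‖z - z0‖ < R := by simpa [dist_eq_norm] using hz
        calc ‖w - z0‖ = ‖(w - z) + (z - z0)‖ := by ring_nf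
          _ ≤ _ := norm_add_le _ _
          _ ≤ _ := by linarith
      have h4 := (abs_le.1 ((Complex.abs_re_le_norm (w - z0)).trans h1))
      have h5 := (abs_le.1 ((Complex.abs_im_le_norm (w - z0)).trans h1))
      simp only [Complex.sub_re, Complex.sub_im] at h4 h5
      apply cpow_norm_le' (hre ξ) (hV ξ)
      · linarith
      · linarith
      · have h6 : |w.im - z0.im| ≤ 2 * R := abs_le.2 h5
        have h7 := abs_sub_abs_le_abs_sub w.im z0.im
        linarith
  · refine Eventually.of_forall fun ξ z hz => ?_
    exact (hd ξ z).mul_const _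

end

theorem kernel_pair {d : ℕ} {m f g : Rd d → ℂ} {A : ℝ} (hm : Integrable m volume)
    (hA : ∀ x, ‖𝓕 m x‖ ≤ A) (hf : Integrable f volume) (hg : Integrable g volume) :
    ‖∫ ξ, m ξ * (𝓕 f ξ * (starRingEnd ℂ) (𝓕 g ξ))‖ ≤ A * (∫ x, ‖f x‖) * ∫ x, ‖g x‖ := by
  have hgc : Integrable (fun x => (starRingEnd ℂ) (g x)) volume := by
    exact memLp_one_iff_integrable.1 (memLp_conj (memLp_one_iff_integrable.2 hg))
  have e0 : ∀ ξ, (starRingEnd ℂ) (𝓕 g ξ) = 𝓕⁻ (fun x => (starRingEnd ℂ) (g x)) ξ := by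
    intro ξ
    rw [← fourier_conj]; simp
  have hb : ∀ ξ, ‖(starRingEnd ℂ) (𝓕 g ξ)‖ ≤ ∫ x, ‖g x‖ := by
    intro ξ; rw [RCLike.norm_conj]; exact fourier_norm_le g ξ
  have hgm : AEStronglyMeasurable (fun ξ => (starRingEnd ℂ) (𝓕 g ξ)) volume :=
    (Complex.continuous_conj.comp (fourier_continuous hg)).aestronglyMeasurable
  have hmg : Integrable (fun ξ => m ξ * (starRingEnd ℂ) (𝓕 g ξ)) volume :=
    hm.mul_bdd hgm (Eventually.of_forall hb)
  have e1 : ∫ ξ, m ξ * (𝓕 f ξ * (starRingEnd ℂ) (𝓕 g ξ)) =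
      ∫ x, f x * 𝓕 (fun ξ => m ξ * (starRingEnd ℂ) (𝓕 g ξ)) x := by
    rw [← fourier_pair_L1 hf hmg]
    congr 1; ext ξ; ring
  have e2 : ∀ x, ‖𝓕 (fun ξ => m ξ * (starRingEnd ℂ) (𝓕 g ξ)) x‖ ≤ A * ∫ x, ‖g x‖ := by
    intro x
    set Mx : Rd d → ℂ := fun ξ => Complex.exp (((-2 * π * ⟪ξ, x⟫ : ℝ) : ℂ) * Complex.I) * m ξ with hMx
    have hMi : Integrable Mx volume := by
      refine hm.bdd_mul (c := 1) ?_ ?_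
      · apply Continuous.aestronglyMeasurable; fun_prop
      · exact Eventually.of_forall fun ξ => (Complex.norm_exp_ofReal_mul_I _).le
    have e3 : 𝓕 (fun ξ => m ξ * (starRingEnd ℂ) (𝓕 g ξ)) x =
        ∫ y, (starRingEnd ℂ) (g y) * 𝓕⁻ Mx y := by
      rw [← fourierInv_pair_L1 hgc hMi, Real.fourier_eq']
      congr 1; ext ξ
      rw [← e0, hMx, smul_eq_mul]; ring
    have e4 : ∀ y, 𝓕⁻ Mx y = 𝓕 m (x - y) := by
      intro y
      rw [Real.fourierInv_eq', Real.fourier_eq']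
      congr 1; ext ξ
      rw [hMx, smul_eq_mul, smul_eq_mul, ← mul_assoc, ← Complex.exp_add, inner_sub_right]
      congr 2; push_cast; ring
    rw [e3, ← integral_const_mul]
    apply norm_integral_le_of_norm_le (hg.norm.const_mul A)
    refine Eventually.of_forall fun y => ?_
    rw [norm_mul, RCLike.norm_conj, e4, mul_comm]
    exact mul_le_mul_of_nonneg_right (hA _) (norm_nonneg _)
  rw [e1, mul_right_comm, ← integral_const_mul]
  apply norm_integral_le_of_norm_le (hf.norm.const_mul _)
  refine Eventually.of_forall fun y => ?_
  rw [norm_mul, mul_comm]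
  exact mul_le_mul_of_nonneg_right (e2 _) (norm_nonneg _)

/-- finite simple function -/
def fs {d : ℕ} {ι : Type} [Fintype ι] (S : ι → Set (Rd d)) (a : ι → ℂ) (x : Rd d) : ℂ :=
  ∑ i, (S i).indicator (fun _ => a i) x

section
variable {d : ℕ} {ι : Type} [Fintype ι] {S : ι → Set (Rd d)}

theorem ind_memLp {S : Set (Rd d)} (hS : MeasurableSet S) (hf : volume S ≠ ∞) (a : ℂ) (p : ℝ≥0∞) :
    MemLp (S.indicator (fun _ => a)) p volume :=
  memLp_indicator_const p hS a (Or.inr hf)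

theorem fs_memLp (hS : ∀ i, MeasurableSet (S i)) (hf : ∀ i, volume (S i) ≠ ∞) (a : ι → ℂ) (p : ℝ≥0∞) :
    MemLp (fs S a) p volume := by
  unfold fs
  exact memLp_finsetSum _ fun i _ => ind_memLp (hS i) (hf i) (a i) p

theorem fs_int (hS : ∀ i, MeasurableSet (S i)) (hf : ∀ i, volume (S i) ≠ ∞) (a : ι → ℂ) :
    Integrable (fs S a) volume := memLp_one_iff_integrable.1 (fs_memLp hS hf a 1)

theorem fs_fourier (hS : ∀ i, MeasurableSet (S i)) (hf : ∀ i, volume (S i) ≠ ∞) (a : ι → ℂ) (ξ : Rd d) :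
    𝓕 (fs S a) ξ = ∑ i, a i * 𝓕 ((S i).indicator (fun _ => (1:ℂ))) ξ := by
  have h1 : ∀ i, Integrable ((S i).indicator (fun _ => (1:ℂ))) volume := fun i =>
    memLp_one_iff_integrable.1 (ind_memLp (hS i) (hf i) 1 1)
  have h2 := fun i => (Real.fourierIntegral_convergent_iff ξ).2 (h1 i)
  simp only [Real.fourier_eq, ← integral_const_mul]
  rw [← integral_finsetSum]
  · congr 1; ext x
    unfold fs
    rw [Finset.smul_sum]
    congr 1; ext i
    by_cases hx : x ∈ S i <;> simp [hx, Circle.smul_def, mul_comm]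
  · intro i _
    exact (h2 i).const_mul _

theorem fs_pow (hdj : Pairwise (Function.onFun Disjoint S)) (a : ι → ℂ) {q : ℝ} (hq : q ≠ 0) (x : Rd d) :
    ‖fs S a x‖ ^ q = ∑ i, (S i).indicator (fun _ => ‖a i‖ ^ q) x := by
  unfold fs
  by_cases h : ∃ i, x ∈ S i
  · obtain ⟨i, hi⟩ := h
    have hn : ∀ j, j ≠ i → x ∉ S j := fun j hj hx => Set.disjoint_left.1 (hdj hj) hx hi
    rw [Finset.sum_eq_single i, Finset.sum_eq_single i]
    · simp [hi]
    · intro j _ hj; simp [hn j hj]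
    · simp
    · intro j _ hj; simp [hn j hj]
    · simp
  · push Not at h
    simp [h, hq]

theorem fs_int_pow (hS : ∀ i, MeasurableSet (S i)) (hf : ∀ i, volume (S i) ≠ ∞)
    (hdj : Pairwise (Function.onFun Disjoint S)) (a : ι → ℂ) {q : ℝ} (hq : q ≠ 0) :
    ∫ x, ‖fs S a x‖ ^ q = ∑ i, ‖a i‖ ^ q * (volume (S i)).toReal := by
  simp only [fs_pow hdj a hq]
  rw [integral_finsetSum]
  · congr 1; ext i
    rw [integral_indicator (hS i), setIntegral_const, smul_eq_mul, mul_comm]; rfl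
  · intro i _
    exact (integrable_indicator_iff (hS i)).2 (integrableOn_const (hf i))

end

def Acoef (N : ℝ) (a : ℂ) (z : ℂ) : ℂ :=
  Complex.exp (Real.log ‖a‖ * ((N + z) / (N + 1))) * (a / ‖a‖)

theorem Acoef_norm {N : ℝ} {a : ℂ} (ha : a ≠ 0) (z : ℂ) :
    ‖Acoef N a z‖ = ‖a‖ ^ ((N + z.re) / (N + 1)) := by
  unfold Acoef
  have h1 : ‖a / (‖a‖ : ℂ)‖ = 1 := by
    rw [norm_div, Complex.norm_real, norm_norm, div_self (norm_ne_zero_iff.2 ha)]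
  rw [norm_mul, h1, mul_one, Complex.norm_exp, Complex.re_ofReal_mul,
    Real.rpow_def_of_pos (norm_pos_iff.2 ha)]
  congr 2
  have : ((N:ℂ) + z) / ((N:ℂ) + 1) = (N + z) / ((N + 1 : ℝ) : ℂ) := by push_cast; rfl
  rw [this, Complex.div_ofReal_re]; simp

theorem Acoef_one {N : ℝ} (hN : 0 < N) {a : ℂ} (ha : a ≠ 0) : Acoef N a 1 = a := by
  unfold Acoef
  have h1 : ((N:ℂ) + 1) ≠ 0 := by exact_mod_cast (by positivity : N + 1 ≠ 0)
  have h2 : (‖a‖ : ℂ) ≠ 0 := by exact_mod_cast norm_ne_zero_iff.2 ha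
  rw [div_self h1, mul_one, ← Complex.ofReal_exp, Real.exp_log (norm_pos_iff.2 ha)]
  field_simp

theorem Acoef_diff (N : ℝ) (a : ℂ) : Differentiable ℂ (Acoef N a) := by
  unfold Acoef; fun_prop

theorem Acoef_conj (N : ℝ) (a : ℂ) (z : ℂ) :
    (starRingEnd ℂ) (Acoef N ((starRingEnd ℂ) a) z) = Acoef N a ((starRingEnd ℂ) z) := by
  unfold Acoef
  simp [← Complex.exp_conj]

/-- the analytic family -/
def SF {d : ℕ} {ι : Type} [Fintype ι] (S : ι → Set (Rd d)) (a : ι → ℂ) (v : Rd d → ℂ) (N : ℝ) (z : ℂ) : ℂ :=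
  Complex.exp (z ^ 2) * Complex.Gamma (z + 1) *
    ∑ i, ∑ j, Acoef N (a i) z * Acoef N ((starRingEnd ℂ) (a j)) z *
      ∫ ξ, v ξ ^ z * (𝓕 ((S i).indicator (fun _ => (1:ℂ))) ξ *
        (starRingEnd ℂ) (𝓕 ((S j).indicator (fun _ => (1:ℂ))) ξ))

section
variable {d : ℕ} {ι : Type} [Fintype ι] {S : ι → Set (Rd d)} {a : ι → ℂ} {v : Rd d → ℂ} {V0 N : ℝ}

theorem hij_int (hS : ∀ i, MeasurableSet (S i)) (hf : ∀ i, volume (S i) ≠ ∞) (i j : ι) :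
    Integrable (fun ξ => 𝓕 ((S i).indicator (fun _ => (1:ℂ))) ξ *
        (starRingEnd ℂ) (𝓕 ((S j).indicator (fun _ => (1:ℂ))) ξ)) volume := by
  have h : ∀ i, MemLp (𝓕 ((S i).indicator (fun _ => (1:ℂ)))) 2 volume := fun i =>
    fourier_memL2 (memLp_one_iff_integrable.1 (ind_memLp (hS i) (hf i) 1 1)) (ind_memLp (hS i) (hf i) 1 2)
  exact (h i).integrable_mul (memLp_conj (h j))

theorem SF_sum (hS : ∀ i, MeasurableSet (S i)) (hf : ∀ i, volume (S i) ≠ ∞)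
    (hv : Measurable v) (hre : ∀ ξ, 0 < (v ξ).re) (hV : ∀ ξ, ‖v ξ‖ ≤ V0) {z : ℂ} (hz : 0 ≤ z.re) :
    SF S a v N z = Complex.exp (z ^ 2) * Complex.Gamma (z + 1) *
     ∫ ξ, v ξ ^ z * (𝓕 (fs S (fun i => Acoef N (a i) z)) ξ *
      (starRingEnd ℂ) (𝓕 (fs S (fun i => Acoef N (a i) ((starRingEnd ℂ) z))) ξ)) := by
  unfold SF
  congr 1
  have e : ∀ ξ, v ξ ^ z * (𝓕 (fs S (fun i => Acoef N (a i) z)) ξ *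
      (starRingEnd ℂ) (𝓕 (fs S (fun i => Acoef N (a i) ((starRingEnd ℂ) z))) ξ)) =
      ∑ i, ∑ j, Acoef N (a i) z * Acoef N ((starRingEnd ℂ) (a j)) z *
      (v ξ ^ z * (𝓕 ((S i).indicator (fun _ => (1:ℂ))) ξ *
        (starRingEnd ℂ) (𝓕 ((S j).indicator (fun _ => (1:ℂ))) ξ))) := by
    intro ξ
    rw [fs_fourier hS hf, fs_fourier hS hf, map_sum, Finset.sum_mul_sum, Finset.mul_sum]
    congr 1; ext i
    rw [Finset.mul_sum]
    congr 1; ext j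
    rw [map_mul, ← Acoef_conj, Complex.conj_conj]
    ring
  rw [integral_congr_ae (Eventually.of_forall e), integral_finsetSum]
  · congr 1; ext i
    rw [integral_finsetSum]
    · congr 1; ext j
      rw [integral_const_mul]
    · intro j _
      exact (M_intble hv hre hV (hij_int hS hf i j) hz).const_mul _
  · intro i _
    apply integrable_finsetSum
    intro j _
    exact (M_intble hv hre hV (hij_int hS hf i j) hz).const_mul _

theorem Gamma_succ_diff {z : ℂ} (hz : 0 ≤ z.re) : DifferentiableAt ℂ (fun z : ℂ => Complex.Gamma (z + 1)) z := by
  have h1 : DifferentiableAt ℂ Complex.Gamma (z + 1) := by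
    apply Complex.differentiableAt_Gamma
    intro m h
    have := congrArg Complex.re h
    simp at this
    have h2 : (0:ℝ) ≤ m := by positivity
    linarith
  have h2 : DifferentiableAt ℂ (fun z : ℂ => z + 1) z := by fun_prop
  exact DifferentiableAt.comp z h1 h2

theorem Gamma_succ_cont {z : ℂ} (hz : 0 ≤ z.re) : ContinuousAt (fun z : ℂ => Complex.Gamma (z + 1)) z :=
  (Gamma_succ_diff hz).continuousAt

set_option maxHeartbeats 1600000 in
theorem SF_diffCont (hN : 0 < N) (hS : ∀ i, MeasurableSet (S i)) (hf : ∀ i, volume (S i) ≠ ∞)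
    (hv : Measurable v) (hre : ∀ ξ, 0 < (v ξ).re) (hV : ∀ ξ, ‖v ξ‖ ≤ V0) :
    DiffContOnCl ℂ (SF S a v N) (Complex.HadamardThreeLines.verticalStrip 0 N) := by
  unfold Complex.HadamardThreeLines.verticalStrip
  constructor
  · intro z hz
    unfold SF
    apply DifferentiableWithinAt.mul
    · apply DifferentiableWithinAt.mul
      · fun_prop
      · exact (Gamma_succ_diff hz.1.le).differentiableWithinAt
    · apply DifferentiableWithinAt.fun_sum
      intro i _
      apply DifferentiableWithinAt.fun_sum
      intro j _
      apply DifferentiableWithinAt.mul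
      · exact ((Acoef_diff N _ z).mul (Acoef_diff N _ z)).differentiableWithinAt
      · exact M_diff hv hre hV (hij_int hS hf i j) z hz
  · rw [Complex.closure_preimage_re, closure_Ioo hN.ne]
    have h1 : ContinuousOn (fun z : ℂ => Complex.exp (z ^ 2)) (Complex.re ⁻¹' Set.Icc 0 N) :=
      Continuous.continuousOn (by fun_prop)
    have h2 : ContinuousOn (fun z : ℂ => Complex.Gamma (z + 1)) (Complex.re ⁻¹' Set.Icc 0 N) :=
      fun z hz => (Gamma_succ_cont hz.1).continuousWithinAt
    have h3 : ContinuousOn (fun z : ℂ => ∑ i, ∑ j, Acoef N (a i) z * Acoef N ((starRingEnd ℂ) (a j)) z *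
      ∫ ξ, v ξ ^ z * (𝓕 ((S i).indicator (fun _ => (1:ℂ))) ξ *
        (starRingEnd ℂ) (𝓕 ((S j).indicator (fun _ => (1:ℂ))) ξ))) (Complex.re ⁻¹' Set.Icc 0 N) := by
      apply continuousOn_finsetSum
      intro i _
      apply continuousOn_finsetSum
      intro j _
      have h4 : ContinuousOn (fun z => Acoef N (a i) z * Acoef N ((starRingEnd ℂ) (a j)) z)
          (Complex.re ⁻¹' Set.Icc 0 N) :=
        ((Acoef_diff N _).continuous.mul (Acoef_diff N _).continuous).continuousOn
      exact h4.mul (M_cont hv hre hV (hij_int hS hf i j))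
    exact (h1.mul h2).mul h3

theorem exp_sq_norm (z : ℂ) : ‖Complex.exp (z ^ 2)‖ = Real.exp (z.re ^ 2 - z.im ^ 2) := by
  rw [Complex.norm_exp]; congr 1; simp [sq]

theorem Acoef_norm_le (hN : 0 < N) (a : ℂ) {z : ℂ} (h0 : 0 ≤ z.re) (h1 : z.re ≤ N) :
    ‖Acoef N a z‖ ≤ (max 1 ‖a‖) ^ (2:ℝ) := by
  by_cases ha : a = 0
  · simp [Acoef, ha]
  rw [Acoef_norm ha]
  have h2 : 0 ≤ (N + z.re) / (N + 1) := by positivity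
  calc ‖a‖ ^ ((N + z.re) / (N + 1)) ≤ (max 1 ‖a‖) ^ ((N + z.re) / (N + 1)) :=
        Real.rpow_le_rpow (norm_nonneg _) (le_max_right _ _) h2
    _ ≤ _ := by
      apply Real.rpow_le_rpow_of_exponent_le (le_max_left _ _)
      rw [div_le_iff₀ (by positivity)]; linarith

theorem exp_aux (y : ℝ) : Real.exp (-y ^ 2) * Real.exp (π / 2 * |y|) ≤ Real.exp 1 := by
  rw [← Real.exp_add]
  apply Real.exp_le_exp.2
  have h1 := Real.pi_le_four
  have h2 : 0 ≤ |y| := abs_nonneg y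
  have h3 : y ^ 2 = |y| ^ 2 := (sq_abs y).symm
  rw [h3]
  nlinarith [sq_nonneg (|y| - 1)]

theorem SF_bdd (hN : 0 < N) (hS : ∀ i, MeasurableSet (S i)) (hf : ∀ i, volume (S i) ≠ ∞)
    (hre : ∀ ξ, 0 < (v ξ).re) (hV : ∀ ξ, ‖v ξ‖ ≤ V0) :
    BddAbove (norm ∘ (SF S a v N) '' Complex.HadamardThreeLines.verticalClosedStrip 0 N) := by
  have hGc : ContinuousOn Real.Gamma (Set.Icc 1 (N+1)) := by
    intro x hx
    apply ContinuousAt.continuousWithinAt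
    apply DifferentiableAt.continuousAt (𝕜 := ℝ)
    apply Real.differentiableAt_Gamma
    intro m h
    have h2 : (0:ℝ) ≤ m := by positivity
    have := hx.1
    linarith
  obtain ⟨G, hG⟩ := isCompact_Icc.exists_bound_of_continuousOn hGc
  have hG0 : 0 ≤ G := (norm_nonneg _).trans (hG 1 (by simp [hN.le]))
  refine ⟨∑ i, ∑ j, Real.exp (N ^ 2) * G * ((max 1 ‖a i‖) ^ (2:ℝ) * (max 1 ‖(starRingEnd ℂ) (a j)‖) ^ (2:ℝ) *
    ((max 1 V0) ^ N * Real.exp 1 * ∫ ξ, ‖𝓕 ((S i).indicator (fun _ => (1:ℂ))) ξ *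
        (starRingEnd ℂ) (𝓕 ((S j).indicator (fun _ => (1:ℂ))) ξ)‖)), ?_⟩
  rintro _ ⟨z, hz, rfl⟩
  have hz0 : 0 ≤ z.re := hz.1
  have hzN : z.re ≤ N := hz.2
  simp only [Function.comp]
  unfold SF
  rw [Finset.mul_sum]
  refine (norm_sum_le _ _).trans (Finset.sum_le_sum fun i _ => ?_)
  rw [Finset.mul_sum]
  refine (norm_sum_le _ _).trans (Finset.sum_le_sum fun j _ => ?_)
  have h1 := Acoef_norm_le hN (a i) hz0 hzN
  have h2 := Acoef_norm_le hN ((starRingEnd ℂ) (a j)) hz0 hzN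
  have h3 := M_norm (N := N) hre hV (hij_int hS hf i j) hz0 hzN
  have h4 : ‖Complex.Gamma (z + 1)‖ ≤ G := by
    refine (Gamma_norm_le (by simp; linarith)).trans ?_
    refine (Real.le_norm_self _).trans (hG _ ?_)
    simp; exact ⟨hz0, hzN⟩
  set I := ∫ ξ, ‖𝓕 ((S i).indicator (fun _ => (1:ℂ))) ξ *
        (starRingEnd ℂ) (𝓕 ((S j).indicator (fun _ => (1:ℂ))) ξ)‖ with hI
  have hI0 : 0 ≤ I := integral_nonneg fun ξ => norm_nonneg _
  simp only [norm_mul]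
  rw [exp_sq_norm, sub_eq_add_neg, Real.exp_add]
  have h5 : Real.exp (z.re ^ 2) ≤ Real.exp (N ^ 2) := Real.exp_le_exp.2 (by nlinarith)
  have h6 := exp_aux z.im
  set M := ‖∫ ξ, v ξ ^ z * (𝓕 ((S i).indicator (fun _ => (1:ℂ))) ξ *
        (starRingEnd ℂ) (𝓕 ((S j).indicator (fun _ => (1:ℂ))) ξ))‖ with hM
  have h7 : Real.exp (-z.im ^ 2) * M ≤ (max 1 V0) ^ N * Real.exp 1 * I := by
    calc Real.exp (-z.im ^ 2) * M ≤ Real.exp (-z.im ^ 2) * ((max 1 V0) ^ N * Real.exp (π / 2 * |z.im|) * I) := by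
          gcongr
      _ = (max 1 V0) ^ N * (Real.exp (-z.im ^ 2) * Real.exp (π / 2 * |z.im|)) * I := by ring
      _ ≤ _ := by gcongr
  calc Real.exp (z.re ^ 2) * Real.exp (-z.im ^ 2) * ‖Complex.Gamma (z + 1)‖ *
        (‖Acoef N (a i) z‖ * ‖Acoef N ((starRingEnd ℂ) (a j)) z‖ * M)
      = Real.exp (z.re ^ 2) * ‖Complex.Gamma (z + 1)‖ *
        (‖Acoef N (a i) z‖ * ‖Acoef N ((starRingEnd ℂ) (a j)) z‖ * (Real.exp (-z.im ^ 2) * M)) := by ring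
    _ ≤ _ := by gcongr

theorem SF_edge0 (hS : ∀ i, MeasurableSet (S i)) (hf : ∀ i, volume (S i) ≠ ∞)
    (hdj : Pairwise (Function.onFun Disjoint S)) (ha : ∀ i, a i ≠ 0)
    (hv : Measurable v) (hre : ∀ ξ, 0 < (v ξ).re) (hV : ∀ ξ, ‖v ξ‖ ≤ V0) {z : ℂ} (hz : z.re = 0) :
    ‖SF S a v N z‖ ≤ Real.exp 1 * ∑ i, ‖a i‖ ^ (2 * N / (N + 1)) * (volume (S i)).toReal := by
  rw [SF_sum hS hf hv hre hV hz.ge, norm_mul, norm_mul, exp_sq_norm]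
  have hG : ‖Complex.Gamma (z + 1)‖ ≤ 1 := by
    refine (Gamma_norm_le (by simp [hz])).trans ?_
    simp [hz]
  set s := ∑ i, ‖a i‖ ^ (2 * N / (N + 1)) * (volume (S i)).toReal with hs
  have hs0 : 0 ≤ s := Finset.sum_nonneg fun i _ => by positivity
  have key : ∀ w : ℂ, w.re = 0 → MemLp (𝓕 (fs S (fun i => Acoef N (a i) w))) 2 volume ∧
     ∫ ξ, ‖𝓕 (fs S (fun i => Acoef N (a i) w)) ξ‖ ^ 2 = s := by
    intro w hw
    refine ⟨fourier_memL2 (fs_int hS hf _) (fs_memLp hS hf _ 2), ?_⟩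
    rw [plancherel_int (fs_int hS hf _) (fs_memLp hS hf _ 2)]
    have := fs_int_pow hS hf hdj (fun i => Acoef N (a i) w) (q := 2) (by norm_num)
    simp only [Real.rpow_two] at this
    rw [this]
    apply Finset.sum_congr rfl
    intro i _
    rw [Acoef_norm (ha i), hw, ← Real.rpow_natCast, ← Real.rpow_mul (norm_nonneg _)]
    congr 2; push_cast; ring
  obtain ⟨m1, i1⟩ := key z hz
  obtain ⟨m2, i2⟩ := key ((starRingEnd ℂ) z) (by simpa using hz)
  set F1 := 𝓕 (fs S (fun i => Acoef N (a i) z))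
  set F2 := 𝓕 (fs S (fun i => Acoef N (a i) ((starRingEnd ℂ) z)))
  have hI : ‖∫ ξ, v ξ ^ z * (F1 ξ * (starRingEnd ℂ) (F2 ξ))‖ ≤ Real.exp (π / 2 * |z.im|) * s := by
    have hi1 : Integrable (fun ξ => ‖F1 ξ‖ ^ 2) volume := m1.integrable_norm_pow (by norm_num)
    have hi2 : Integrable (fun ξ => ‖F2 ξ‖ ^ 2) volume := m2.integrable_norm_pow (by norm_num)
    have e : Real.exp (π / 2 * |z.im|) * s = ∫ ξ, Real.exp (π / 2 * |z.im|) * ((‖F1 ξ‖ ^ 2 + ‖F2 ξ‖ ^ 2) / 2) := by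
      rw [integral_const_mul, integral_div, integral_add hi1 hi2, i1, i2]; ring
    rw [e]
    apply norm_integral_le_of_norm_le (((hi1.add hi2).div_const 2).const_mul _)
    refine Eventually.of_forall fun ξ => ?_
    rw [norm_mul, norm_mul, RCLike.norm_conj]
    have h1 := cpow_norm_le (z := z) (hre ξ)
    rw [hz, Real.rpow_zero, one_mul] at h1
    have h2 : ‖F1 ξ‖ * ‖F2 ξ‖ ≤ (‖F1 ξ‖ ^ 2 + ‖F2 ξ‖ ^ 2) / 2 := by
      nlinarith [sq_nonneg (‖F1 ξ‖ - ‖F2 ξ‖)]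
    gcongr
    simpa using h2
  have h6 := exp_aux z.im
  calc _ ≤ Real.exp (z.re ^ 2 - z.im ^ 2) * 1 * (Real.exp (π / 2 * |z.im|) * s) := by gcongr
    _ = (Real.exp (-z.im ^ 2) * Real.exp (π / 2 * |z.im|)) * s := by rw [hz]; ring_nf
    _ ≤ _ := by gcongr

theorem SF_edgeN {A : ℝ} (hA : 0 ≤ A) (hN : 0 < N) (hS : ∀ i, MeasurableSet (S i)) (hf : ∀ i, volume (S i) ≠ ∞)
    (hdj : Pairwise (Function.onFun Disjoint S)) (ha : ∀ i, a i ≠ 0)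
    (hv : Measurable v) (hre : ∀ ξ, 0 < (v ξ).re) (hV : ∀ ξ, ‖v ξ‖ ≤ V0)
    (hm : ∀ y : ℝ, Integrable (fun ξ => v ξ ^ ((N:ℂ) + y * Complex.I) * Complex.Gamma ((N:ℂ) + y * Complex.I)) volume ∧
      ∀ x, ‖𝓕 (fun ξ => v ξ ^ ((N:ℂ) + y * Complex.I) * Complex.Gamma ((N:ℂ) + y * Complex.I)) x‖ ≤ A * (1 + |y|))
    {z : ℂ} (hz : z.re = N) :
    ‖SF S a v N z‖ ≤ 2 * (N + 1) * Real.exp (N ^ 2) * A *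
      (∑ i, ‖a i‖ ^ (2 * N / (N + 1)) * (volume (S i)).toReal) ^ 2 := by
  have hzz : (N:ℂ) + z.im * Complex.I = z := by
    rw [← hz]; exact Complex.re_add_im z
  have hz0 : z ≠ 0 := by rintro rfl; simp at hz; linarith
  obtain ⟨hmi, hmb⟩ := hm z.im
  rw [hzz] at hmi hmb
  rw [SF_sum hS hf hv hre hV (hz ▸ hN.le), Complex.Gamma_add_one z hz0]
  set s := ∑ i, ‖a i‖ ^ (2 * N / (N + 1)) * (volume (S i)).toReal with hs
  have key : ∀ w : ℂ, w.re = N → ∫ x, ‖fs S (fun i => Acoef N (a i) w) x‖ = s := by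
    intro w hw
    have := fs_int_pow hS hf hdj (fun i => Acoef N (a i) w) (q := 1) (by norm_num)
    simp only [Real.rpow_one] at this
    rw [this]
    apply Finset.sum_congr rfl
    intro i _
    rw [Acoef_norm (ha i), hw]
    congr 2; ring
  have hk := kernel_pair hmi hmb (fs_int hS hf (fun i => Acoef N (a i) z))
    (fs_int hS hf (fun i => Acoef N (a i) ((starRingEnd ℂ) z)))
  rw [key z hz, key _ (by simpa using hz)] at hk
  set F1 := 𝓕 (fs S (fun i => Acoef N (a i) z))
  set F2 := 𝓕 (fs S (fun i => Acoef N (a i) ((starRingEnd ℂ) z)))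
  have e : Complex.exp (z ^ 2) * (z * Complex.Gamma z) * ∫ ξ, v ξ ^ z * (F1 ξ * (starRingEnd ℂ) (F2 ξ))
     = Complex.exp (z ^ 2) * z * ∫ ξ, (v ξ ^ z * Complex.Gamma z) * (F1 ξ * (starRingEnd ℂ) (F2 ξ)) := by
    rw [mul_assoc, mul_assoc, mul_assoc, ← integral_const_mul]
    congr 3; congr 1; ext ξ; ring
  rw [e, norm_mul, norm_mul, exp_sq_norm, hz]
  have hzn : ‖z‖ ≤ (N + 1) * (1 + |z.im|) := by
    have := Complex.norm_le_abs_re_add_abs_im z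
    rw [hz, abs_of_pos hN] at this
    nlinarith [abs_nonneg z.im]
  have hy : Real.exp (- z.im ^ 2) * (1 + |z.im|) ^ 2 ≤ 2 := by
    have h1 := Real.add_one_le_exp (z.im ^ 2)
    rw [Real.exp_neg, inv_mul_le_iff₀ (Real.exp_pos _)]
    have h2 : z.im ^ 2 = |z.im| ^ 2 := (sq_abs _).symm
    rw [h2] at h1 ⊢
    nlinarith [sq_nonneg (|z.im| - 1)]
  calc _ ≤ Real.exp (N ^ 2 - z.im ^ 2) * ((N + 1) * (1 + |z.im|)) * (A * (1 + |z.im|) * s * s) := by gcongr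
    _ = (N + 1) * Real.exp (N ^ 2) * A * s ^ 2 * (Real.exp (- z.im ^ 2) * (1 + |z.im|) ^ 2) := by
      rw [sub_eq_add_neg, Real.exp_add]; ring
    _ ≤ (N + 1) * Real.exp (N ^ 2) * A * s ^ 2 * 2 := by gcongr
    _ = _ := by ring

/-- Stein interpolation. -/
theorem stein {A : ℝ} (hA : 0 ≤ A) (hN : 1 < N) (hS : ∀ i, MeasurableSet (S i)) (hf : ∀ i, volume (S i) ≠ ∞)
    (hdj : Pairwise (Function.onFun Disjoint S)) (ha : ∀ i, a i ≠ 0)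
    (hv : Measurable v) (hre : ∀ ξ, 0 < (v ξ).re) (hV : ∀ ξ, ‖v ξ‖ ≤ V0)
    (hm : ∀ y : ℝ, Integrable (fun ξ => v ξ ^ ((N:ℂ) + y * Complex.I) * Complex.Gamma ((N:ℂ) + y * Complex.I)) volume ∧
      ∀ x, ‖𝓕 (fun ξ => v ξ ^ ((N:ℂ) + y * Complex.I) * Complex.Gamma ((N:ℂ) + y * Complex.I)) x‖ ≤ A * (1 + |y|)) :
    ∫ ξ, (v ξ).re * ‖𝓕 (fs S a) ξ‖ ^ 2 ≤ (Real.exp 1 + 2 * (N + 1) * Real.exp (N ^ 2) * A) *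
      (∫ x, ‖fs S a x‖ ^ (2 * N / (N + 1))) ^ (1 + 1 / N) := by
  have hN0 : 0 < N := by linarith
  rw [fs_int_pow hS hf hdj a (by positivity)]
  set s := ∑ i, ‖a i‖ ^ (2 * N / (N + 1)) * (volume (S i)).toReal with hs
  have hs0 : 0 ≤ s := Finset.sum_nonneg fun i _ => by positivity
  set K := Real.exp 1 + 2 * (N + 1) * Real.exp (N ^ 2) * A with hK
  have hK0 : 0 ≤ K := by positivity
  have h3 := Complex.HadamardThreeLines.norm_le_interp_of_mem_verticalClosedStrip' (f := SF S a v N)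
    (z := 1) (a := K * s) (b := K * s ^ 2) hN0
    (by show (1:ℂ).re ∈ Set.Icc 0 N; simp [hN.le])
    (SF_diffCont hN0 hS hf hv hre hV) (SF_bdd hN0 hS hf hre hV)
    (fun z hz => (SF_edge0 hS hf hdj ha hv hre hV hz).trans (by
      apply mul_le_mul_of_nonneg_right _ hs0
      rw [hK]
      have : 0 ≤ 2 * (N + 1) * Real.exp (N ^ 2) * A := by positivity
      linarith))
    (fun z hz => (SF_edgeN hA hN0 hS hf hdj ha hv hre hV hm hz).trans (by
      apply mul_le_mul_of_nonneg_right _ (by positivity)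
      rw [hK]
      have : 0 ≤ Real.exp 1 := by positivity
      linarith))
  simp only [Complex.one_re, sub_zero] at h3
  have e1 : (K * s) ^ (1 - 1 / N) * (K * s ^ 2) ^ (1 / N) = K * s ^ (1 + 1 / N) := by
    have hi : 1 / N < 1 := by rw [div_lt_one hN0]; exact hN
    have hi0 : 0 < 1 / N := by positivity
    rw [Real.mul_rpow hK0 hs0, Real.mul_rpow hK0 (by positivity), ← Real.rpow_natCast s 2, ← Real.rpow_mul hs0]
    have e2 : K ^ (1 - 1 / N) * K ^ (1 / N) = K := by
      rw [← Real.rpow_add_of_nonneg hK0 (by linarith) hi0.le]; simp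
    have e3 : s ^ (1 - 1 / N) * s ^ (((2:ℕ):ℝ) * (1 / N)) = s ^ (1 + 1 / N) := by
      rw [← Real.rpow_add_of_nonneg hs0 (by linarith) (by positivity)]
      congr 1; push_cast; ring
    calc _ = (K ^ (1 - 1 / N) * K ^ (1 / N)) * (s ^ (1 - 1 / N) * s ^ (((2:ℕ):ℝ) * (1 / N))) := by ring
      _ = _ := by rw [e2, e3]
  rw [e1] at h3
  refine le_trans ?_ h3
  rw [SF_sum hS hf hv hre hV (by simp)]
  simp only [map_one, Acoef_one hN0 (ha _), Complex.cpow_one]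
  have e4 : ∀ ξ, v ξ * (𝓕 (fs S fun i => a i) ξ * (starRingEnd ℂ) (𝓕 (fs S fun i => a i) ξ))
     = v ξ * ((‖𝓕 (fs S a) ξ‖ ^ 2 : ℝ) : ℂ) := by
    intro ξ
    rw [Complex.mul_conj, Complex.normSq_eq_norm_sq]
  simp only [e4]
  have hL2 : MemLp (𝓕 (fs S a)) 2 volume := fourier_memL2 (fs_int hS hf a) (fs_memLp hS hf a 2)
  have hi : Integrable (fun ξ => v ξ * ((‖𝓕 (fs S a) ξ‖ ^ 2 : ℝ) : ℂ)) volume := by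
    have h1 := (hL2.integrable_norm_pow (by norm_num)).ofReal (𝕜 := ℂ)
    have := M_intble (z := 1) hv hre hV h1 (by simp)
    simpa using this
  have e5 : ∫ ξ, (v ξ).re * ‖𝓕 (fs S a) ξ‖ ^ 2 = (∫ ξ, v ξ * ((‖𝓕 (fs S a) ξ‖ ^ 2 : ℝ) : ℂ)).re := by
    have := integral_re hi
    simp only [RCLike.re_to_complex] at this
    rw [← this]
    congr 1; ext ξ
    rw [Complex.re_mul_ofReal]
  rw [e5]
  have e6 : Complex.Gamma ((1:ℂ) + 1) = 1 := by
    rw [Complex.Gamma_add_one _ one_ne_zero]; simp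
  rw [norm_mul, norm_mul, e6, norm_one, mul_one, exp_sq_norm]
  refine (Complex.re_le_norm _).trans ?_
  have : (1:ℝ) ≤ Real.exp ((1:ℂ).re ^ 2 - (1:ℂ).im ^ 2) := by
    apply Real.one_le_exp; simp
  exact le_mul_of_one_le_left (norm_nonneg _) this

end

/-- finite simple functions with finite measure support -/
def IsSimp {d : ℕ} (f : Rd d → ℂ) : Prop :=
  ∃ (ι : Type) (_ : Fintype ι) (S : ι → Set (Rd d)) (a : ι → ℂ),
    (∀ i, MeasurableSet (S i)) ∧ (∀ i, volume (S i) ≠ ∞) ∧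
    Pairwise (Function.onFun Disjoint S) ∧ (∀ i, a i ≠ 0) ∧ f = fs S a

theorem IsSimp.memLp {d : ℕ} {f : Rd d → ℂ} (h : IsSimp f) (p : ℝ≥0∞) : MemLp f p volume := by
  obtain ⟨ι, _, S, a, hS, hf, _, _, rfl⟩ := h
  exact fs_memLp hS hf a p

theorem IsSimp.int {d : ℕ} {f : Rd d → ℂ} (h : IsSimp f) : Integrable f volume :=
  memLp_one_iff_integrable.1 (h.memLp 1)

theorem simp_int_sq {d : ℕ} {f : Rd d → ℂ} (h : IsSimp f) :
    Integrable (fun ξ => ‖𝓕 f ξ‖ ^ 2) volume :=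
  (fourier_memL2 h.int (h.memLp 2)).integrable_norm_pow (by norm_num)

/-- Thickened Stein-Tomas estimate (dual form). -/
theorem thick {d : ℕ} (hd : 2 ≤ d) : ∃ C : ℝ, 0 < C ∧ ∀ l : ℝ, 0 < l → l ≤ 1 → ∀ f : Rd d → ℂ, IsSimp f →
    ∫ ξ in {ξ : Rd d | |‖ξ‖ - 1| ≤ l}, ‖𝓕 f ξ‖ ^ 2 ≤
      C * l * (∫ x, ‖f x‖ ^ (2 * ((d:ℝ)+1) / ((d:ℝ) + 3))) ^ (((d:ℝ)+3) / ((d:ℝ)+1)) := by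
  set N : ℝ := ((d:ℝ) + 1) / 2 with hN
  have hd' : (2:ℝ) ≤ d := by exact_mod_cast hd
  have hN1 : 1 < N := by rw [hN]; linarith
  set A : ℝ := 10 * π ^ ((d:ℝ)/2) with hA
  have hA0 : 0 < A := by positivity
  refine ⟨34 * (Real.exp 1 + 2 * (N + 1) * Real.exp (N ^ 2) * A), by positivity, ?_⟩
  intro l hl hl1 f hs
  have hsq := simp_int_sq hs
  obtain ⟨ι, _, S, a, hS, hf, hdj, ha, rfl⟩ := hs
  have hwre : ∀ ξ : Rd d, l ≤ (wsym l ξ).re := by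
    intro ξ; rw [wsym_re]; nlinarith [sq_nonneg ‖ξ‖]
  have hwn : ∀ ξ : Rd d, l ≤ ‖wsym l ξ‖ := fun ξ => (hwre ξ).trans (Complex.re_le_norm _)
  have hw0 : ∀ ξ : Rd d, wsym l ξ ≠ 0 := fun ξ => norm_pos_iff.1 (hl.trans_le (hwn ξ))
  have hvre : ∀ ξ : Rd d, (1 / wsym l ξ).re = (wsym l ξ).re / ‖wsym l ξ‖ ^ 2 := by
    intro ξ; rw [one_div, Complex.inv_re, Complex.normSq_eq_norm_sq]
  have hvpos : ∀ ξ : Rd d, 0 < (1 / wsym l ξ).re := by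
    intro ξ; rw [hvre]
    have := hwre ξ
    have := hwn ξ
    apply div_pos (by linarith) (pow_pos (by linarith) 2)
  have hvV : ∀ ξ : Rd d, ‖1 / wsym l ξ‖ ≤ 1 / l := by
    intro ξ; rw [norm_div, norm_one]
    exact one_div_le_one_div_of_le hl (hwn ξ)
  have hvm : Measurable (fun ξ : Rd d => 1 / wsym l ξ) := by
    have := (wsym_cont (d := d) l).measurable
    fun_prop
  have key := stein (N := N) (V0 := 1 / l) (v := fun ξ : Rd d => 1 / wsym l ξ) hA0.le hN1 hS hf hdj ha hvm hvpos hvV (by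
    intro y
    refine ⟨mz_intble (d := d) (y := y) hl, fun x => ?_⟩
    refine (mz_bound (d := d) (y := y) hl x (by omega)).trans ?_
    rw [hA]
    have : 0 < π ^ ((d:ℝ)/2) := by positivity
    nlinarith [abs_nonneg y, mul_nonneg this.le (abs_nonneg y)])
  have e1 : 2 * N / (N + 1) = 2 * ((d:ℝ)+1) / ((d:ℝ) + 3) := by
    rw [hN]; field_simp; ring
  have e2 : 1 + 1 / N = ((d:ℝ)+3) / ((d:ℝ)+1) := by
    rw [hN]; field_simp; ring
  rw [e1, e2] at key
  have hIntg : Integrable (fun ξ : Rd d => (1 / wsym l ξ).re * ‖𝓕 (fs S a) ξ‖ ^ 2) volume := by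
    refine hsq.bdd_mul (c := 1 / l) (Complex.measurable_re.comp hvm).aestronglyMeasurable ?_
    exact Eventually.of_forall fun ξ => (Complex.abs_re_le_norm _).trans (hvV ξ)
  have hms : MeasurableSet {ξ : Rd d | |‖ξ‖ - 1| ≤ l} :=
    (isClosed_le (by fun_prop) continuous_const).measurableSet
  have step : ∫ ξ in {ξ : Rd d | |‖ξ‖ - 1| ≤ l}, ‖𝓕 (fs S a) ξ‖ ^ 2 ≤
      34 * l * ∫ ξ, (1 / wsym l ξ).re * ‖𝓕 (fs S a) ξ‖ ^ 2 := by
    rw [← integral_const_mul]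
    calc _ ≤ ∫ ξ in {ξ : Rd d | |‖ξ‖ - 1| ≤ l}, 34 * l * ((1 / wsym l ξ).re * ‖𝓕 (fs S a) ξ‖ ^ 2) := by
          apply setIntegral_mono_on hsq.integrableOn (hIntg.const_mul _).integrableOn hms
          intro ξ hξ
          have hξ : |‖ξ‖ - 1| ≤ l := hξ
          have h1 := abs_le.1 hξ
          have hr : ‖ξ‖ ≤ 2 := by linarith
          have hr0 : 0 ≤ ‖ξ‖ := norm_nonneg ξ
          have him : (wsym l ξ).im = 1 - ‖ξ‖ ^ 2 := by
            unfold wsym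
            rw [Complex.add_im, Complex.im_mul_ofReal]; simp; ring
          have hno : ‖wsym l ξ‖ ^ 2 = (l * (1 + ‖ξ‖ ^ 2)) ^ 2 + (1 - ‖ξ‖ ^ 2) ^ 2 := by
            rw [← Complex.normSq_eq_norm_sq, Complex.normSq_apply, wsym_re, him]; ring
          have hle : ‖wsym l ξ‖ ^ 2 ≤ 34 * l ^ 2 := by
            rw [hno]
            have h2 : (1 - ‖ξ‖ ^ 2) ^ 2 ≤ 9 * l ^ 2 := by
              have h3 : (1 - ‖ξ‖) ^ 2 ≤ l ^ 2 := by
                apply sq_le_sq'; linarith; linarith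
              have h4 : (1 + ‖ξ‖) ^ 2 ≤ 9 := by nlinarith
              calc (1 - ‖ξ‖ ^ 2) ^ 2 = (1 + ‖ξ‖) ^ 2 * (1 - ‖ξ‖) ^ 2 := by ring
                _ ≤ 9 * l ^ 2 := by gcongr
            have h5 : (1 + ‖ξ‖ ^ 2) ^ 2 ≤ 25 := by nlinarith
            have : (l * (1 + ‖ξ‖ ^ 2)) ^ 2 ≤ 25 * l ^ 2 := by
              rw [mul_pow, mul_comm]; gcongr
            linarith
          have hpos : 0 < ‖wsym l ξ‖ ^ 2 := pow_pos (hl.trans_le (hwn ξ)) 2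
          have h6 : 1 ≤ 34 * l * (1 / wsym l ξ).re := by
            rw [hvre, ← mul_div_assoc, le_div_iff₀ hpos]
            nlinarith [hwre ξ]
          rw [← mul_assoc]
          exact le_mul_of_one_le_left (by positivity) h6
      _ ≤ _ := by
          apply setIntegral_le_integral (hIntg.const_mul _)
          exact Eventually.of_forall fun ξ => mul_nonneg (by positivity) (mul_nonneg (hvpos ξ).le (by positivity))
  refine step.trans ?_
  calc _ ≤ 34 * l * ((Real.exp 1 + 2 * (N + 1) * Real.exp (N ^ 2) * A) *
      (∫ x, ‖fs S a x‖ ^ (2 * ((d:ℝ)+1) / ((d:ℝ) + 3))) ^ (((d:ℝ)+3) / ((d:ℝ)+1))) := by gcongr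
    _ = _ := by ring

/-- Dual Sobolev estimate. -/
theorem sobolev_dual {d : ℕ} (s p : ℝ) (hs : 0 < s) (hp : 2 < p)
    (hN : (d:ℝ) < 2 * s * (p / (p - 2))) : ∃ C : ℝ, 0 < C ∧ ∀ f : Rd d → ℂ, IsSimp f →
    ∫ ξ : Rd d, (1 + ‖ξ‖ ^ 2) ^ (-s) * ‖𝓕 f ξ‖ ^ 2 ≤
      C * (∫ x, ‖f x‖ ^ (p / (p - 1))) ^ (2 * (p - 1) / p) := by
  set N : ℝ := p / (p - 2) with hNd
  have hp2 : 0 < p - 2 := by linarith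
  have hN1 : 1 < N := by rw [hNd, lt_div_iff₀ hp2]; linarith
  have hI := integrable_rpow_neg_one_add_norm_sq (E := Rd d) (μ := volume) (r := 2 * s * N) (by simpa using hN)
  set J : ℝ := ∫ ξ : Rd d, (1 + ‖ξ‖ ^ 2) ^ (-(2 * s * N) / 2) with hJ
  have hJ0 : 0 ≤ J := integral_nonneg fun ξ => by positivity
  set A : ℝ := Real.Gamma N * J with hA
  have hA0 : 0 ≤ A := mul_nonneg (Real.Gamma_pos_of_pos (by linarith)).le hJ0
  refine ⟨Real.exp 1 + 2 * (N + 1) * Real.exp (N ^ 2) * A, by positivity, ?_⟩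
  intro f hs'
  obtain ⟨ι, _, S, a, hS, hf, hdj, ha, rfl⟩ := hs'
  have hb : ∀ ξ : Rd d, 0 < (1 + ‖ξ‖ ^ 2) ^ (-s) := fun ξ => by positivity
  have hvm : Measurable (fun ξ : Rd d => (((1 + ‖ξ‖ ^ 2) ^ (-s) : ℝ) : ℂ)) := by fun_prop
  have hno : ∀ (y : ℝ) (ξ : Rd d), ‖((((1 + ‖ξ‖ ^ 2) ^ (-s) : ℝ) : ℂ)) ^ ((N:ℂ) + y * Complex.I) * Complex.Gamma ((N:ℂ) + y * Complex.I)‖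
      ≤ Real.Gamma N * (1 + ‖ξ‖ ^ 2) ^ (-(2 * s * N) / 2) := by
    intro y ξ
    have h1 : ((N:ℂ) + y * Complex.I).re = N := by simp
    have h2 := Gamma_norm_le (z := (N:ℂ) + y * Complex.I) (by rw [h1]; linarith)
    rw [h1] at h2
    rw [norm_mul, Complex.norm_cpow_eq_rpow_re_of_pos (hb ξ), h1, ← Real.rpow_mul (by positivity), mul_comm]
    have e : -s * N = -(2 * s * N) / 2 := by ring
    rw [e]
    gcongr
  have key := stein (N := N) (V0 := 1) (v := fun ξ : Rd d => (((1 + ‖ξ‖ ^ 2) ^ (-s) : ℝ) : ℂ)) hA0 hN1 hS hf hdj ha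
    hvm (fun ξ => by simpa using hb ξ) (fun ξ => by
      rw [Complex.norm_real, Real.norm_of_nonneg (hb ξ).le]
      apply Real.rpow_le_one_of_one_le_of_nonpos
      · nlinarith [sq_nonneg ‖ξ‖]
      · linarith) (by
    intro y
    have hi : Integrable (fun ξ : Rd d => ((((1 + ‖ξ‖ ^ 2) ^ (-s) : ℝ) : ℂ)) ^ ((N:ℂ) + y * Complex.I) * Complex.Gamma ((N:ℂ) + y * Complex.I)) volume := by
      refine (hI.const_mul (Real.Gamma N)).mono' ?_ (Eventually.of_forall (hno y))
      exact ((hvm.pow_const _).mul_const _).aestronglyMeasurable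
    refine ⟨hi, fun x => ?_⟩
    refine (fourier_norm_le _ x).trans ?_
    have h3 : ∫ ξ : Rd d, ‖((((1 + ‖ξ‖ ^ 2) ^ (-s) : ℝ) : ℂ)) ^ ((N:ℂ) + y * Complex.I) * Complex.Gamma ((N:ℂ) + y * Complex.I)‖ ≤ A := by
      rw [hA, hJ, ← integral_const_mul]
      exact integral_mono hi.norm (hI.const_mul (Real.Gamma N)) (hno y)
    refine h3.trans ?_
    nlinarith [mul_nonneg hA0 (abs_nonneg y)])
  have e1 : 2 * N / (N + 1) = p / (p - 1) := by
    rw [hNd]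
    have h1 : p - 1 ≠ 0 := by linarith
    have h2 : p / (p - 2) + 1 ≠ 0 := by
      have : 0 < p / (p - 2) := by apply div_pos <;> linarith
      linarith
    field_simp; ring
  have e2 : 1 + 1 / N = 2 * (p - 1) / p := by
    rw [hNd]; field_simp; ring
  rw [e1, e2] at key
  simpa using key

theorem dyadic {d : ℕ} {γ : ℝ} (hγ : 1 < γ) : ∃ C : ℝ, 0 < C ∧ ∀ (ν : Measure (Rd d)) (K : ℝ≥0∞),
    (∀ l : ℝ, 0 < l → l ≤ 1 → ν {ξ : Rd d | |‖ξ‖ - 1| ≤ l} ≤ K * ENNReal.ofReal l) →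
    ∀ ε : ℝ, 0 < ε → ε < 1 →
    ∫⁻ ξ in {ξ : Rd d | |‖ξ‖ - 1| ≤ 1/2}, ENNReal.ofReal (1 / (ε + |‖ξ‖ - 1| ^ γ)) ∂ν ≤
      K * ENNReal.ofReal (C * ε ^ (1 / γ - 1)) := by
  set ρ : ℝ := 2 ^ (1 - γ) with hρ
  have hρ0 : 0 < ρ := by positivity
  have hρ1 : ρ < 1 := Real.rpow_lt_one_of_one_lt_of_neg (by norm_num) (by linarith)
  have hγ0 : 0 < γ := by linarith
  have h1ρ : 0 < 1 - ρ := by linarith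
  refine ⟨2 ^ γ * (1 - ρ)⁻¹, by positivity, ?_⟩
  intro ν K hν ε hε hε1
  set δ : ℝ := ε ^ (1 / γ) with hδ
  have hδ0 : 0 < δ := by positivity
  have hδ1 : δ < 1 := Real.rpow_lt_one hε.le hε1 (by positivity)
  have hδγ : δ ^ γ = ε := by
    rw [hδ, ← Real.rpow_mul hε.le]; field_simp; simp
  have hms : ∀ l : ℝ, MeasurableSet {ξ : Rd d | |‖ξ‖ - 1| ≤ l} := fun l =>
    (isClosed_le (by fun_prop) continuous_const).measurableSet
  set B : ℕ → Set (Rd d) := fun j => if 2 ^ j * δ ≤ 1 then {ξ : Rd d | |‖ξ‖ - 1| ≤ 2 ^ j * δ} else ∅ with hB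
  have hBm : ∀ j, MeasurableSet (B j) := by
    intro j; simp only [hB]; split_ifs
    · exact hms _
    · exact MeasurableSet.empty
  have hBν : ∀ j, ν (B j) ≤ K * ENNReal.ofReal (2 ^ j * δ) := by
    intro j; simp only [hB]; split_ifs with h
    · exact hν _ (by positivity) h
    · simp
  set c : ℕ → ℝ := fun j => 2 ^ γ * (2 ^ j * δ) ^ (-γ) with hc
  have hc0 : ∀ j, 0 ≤ c j := fun j => by positivity
  have pt : ∀ ξ : Rd d, |‖ξ‖ - 1| ≤ 1/2 → ENNReal.ofReal (1 / (ε + |‖ξ‖ - 1| ^ γ)) ≤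
      ∑' j, (B j).indicator (fun _ => ENNReal.ofReal (c j)) ξ := by
    intro ξ hξ
    set t := |‖ξ‖ - 1| with ht
    have ht0 : 0 ≤ t := abs_nonneg _
    have sel : ∀ j, ξ ∈ B j → 1 / (ε + t ^ γ) ≤ c j → ENNReal.ofReal (1 / (ε + t ^ γ)) ≤
      ∑' j, (B j).indicator (fun _ => ENNReal.ofReal (c j)) ξ := by
      intro j hj hle
      refine le_trans ?_ (ENNReal.le_tsum j)
      rw [Set.indicator_of_mem hj]
      exact ENNReal.ofReal_le_ofReal hle
    by_cases h : t ≤ δ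
    · apply sel 0
      · simp only [hB, pow_zero, one_mul, if_pos hδ1.le]; exact h
      · simp only [hc, pow_zero, one_mul]
        rw [Real.rpow_neg hδ0.le, hδγ, one_div]
        have h1 : (ε + t ^ γ)⁻¹ ≤ ε⁻¹ := by
          apply inv_anti₀ hε
          have : 0 ≤ t ^ γ := by positivity
          linarith
        have h2 : (1:ℝ) ≤ 2 ^ γ := Real.one_le_rpow (by norm_num) hγ0.le
        exact h1.trans (le_mul_of_one_le_left (by positivity) h2)
    · push Not at h
      obtain ⟨n, hn1, hn2⟩ := exists_nat_pow_near (x := t / δ) (y := 2) ((one_le_div hδ0).2 h.le) (by norm_num)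
      rw [le_div_iff₀ hδ0] at hn1
      rw [div_lt_iff₀ hδ0] at hn2
      apply sel (n + 1)
      · have : 2 ^ (n + 1) * δ ≤ 1 := by rw [pow_succ]; linarith
        simp only [hB, if_pos this]; exact hn2.le
      · simp only [hc]
        have htp : 0 < t := hδ0.trans h
        have e : (2:ℝ) ^ γ * (2 ^ (n + 1) * δ) ^ (-γ) = ((2 ^ n * δ) ^ γ)⁻¹ := by
          rw [pow_succ, mul_right_comm, Real.mul_rpow (by positivity) (by norm_num), Real.rpow_neg (by norm_num : (0:ℝ) ≤ 2),
            Real.rpow_neg (by positivity)]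
          field_simp
        rw [e, one_div]
        apply inv_anti₀ (by positivity)
        have h3 : (2 ^ n * δ) ^ γ ≤ t ^ γ := Real.rpow_le_rpow (by positivity) hn1 hγ0.le
        linarith
  have hterm : ∀ j, c j * (2 ^ j * δ) = 2 ^ γ * ε ^ (1 / γ - 1) * ρ ^ j := by
    intro j
    simp only [hc]
    rw [mul_assoc, mul_assoc]
    congr 1
    have hx : (0:ℝ) < 2 ^ j * δ := by positivity
    rw [← Real.rpow_add_one hx.ne', Real.mul_rpow (by positivity) hδ0.le, mul_comm]
    congr 1
    · rw [hδ, ← Real.rpow_mul hε.le]; congr 1; field_simp; ring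
    · rw [hρ, ← Real.rpow_natCast, ← Real.rpow_natCast, ← Real.rpow_mul (by norm_num), ← Real.rpow_mul (by norm_num)]
      congr 1; ring
  calc _ ≤ ∫⁻ ξ in {ξ : Rd d | |‖ξ‖ - 1| ≤ 1/2}, ∑' j, (B j).indicator (fun _ => ENNReal.ofReal (c j)) ξ ∂ν :=
        setLIntegral_mono' (hms _) pt
    _ ≤ ∫⁻ ξ, ∑' j, (B j).indicator (fun _ => ENNReal.ofReal (c j)) ξ ∂ν := setLIntegral_le_lintegral _ _
    _ = ∑' j, ENNReal.ofReal (c j) * ν (B j) := by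
        rw [lintegral_tsum]
        · congr 1; ext j
          rw [lintegral_indicator_const (hBm j)]
        · intro j
          exact (measurable_const.indicator (hBm j)).aemeasurable
    _ ≤ ∑' j, K * ENNReal.ofReal (2 ^ γ * ε ^ (1 / γ - 1) * ρ ^ j) := by
        apply ENNReal.tsum_le_tsum
        intro j
        calc ENNReal.ofReal (c j) * ν (B j) ≤ ENNReal.ofReal (c j) * (K * ENNReal.ofReal (2 ^ j * δ)) := by
              gcongr; exact hBν j
          _ = _ := by
              rw [← hterm, ENNReal.ofReal_mul (hc0 j)]; ring
    _ = _ := by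
        rw [ENNReal.tsum_mul_left, ← ENNReal.ofReal_tsum_of_nonneg]
        · rw [tsum_mul_left, tsum_geometric_of_lt_one hρ0.le hρ1]
          congr 2; ring
        · intro j; positivity
        · exact (summable_geometric_of_lt_one hρ0.le hρ1).mul_left _

theorem ann_meas {d : ℕ} (l : ℝ) : MeasurableSet {ξ : Rd d | |‖ξ‖ - 1| ≤ l} :=
  (isClosed_le (by fun_prop) continuous_const).measurableSet

theorem annulus_upper {d : ℕ} (hd : 1 ≤ d) : ∃ C : ℝ, 0 < C ∧ ∀ l : ℝ, 0 < l → l ≤ 1 →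
    volume {ξ : Rd d | |‖ξ‖ - 1| ≤ l} ≤ ENNReal.ofReal C * ENNReal.ofReal l := by
  have : Nonempty (Fin d) := ⟨⟨0, hd⟩⟩
  set ω := (volume (Metric.ball (0 : Rd d) 1)).toReal with hω
  have hωf : volume (Metric.ball (0 : Rd d) 1) ≠ ∞ := measure_ball_lt_top.ne
  have hω0 : 0 < ω := ENNReal.toReal_pos (Metric.measure_ball_pos _ _ one_pos).ne' hωf
  refine ⟨(2 ^ d + d) * ω, by positivity, fun l hl hl1 => ?_⟩
  have hsub : {ξ : Rd d | |‖ξ‖ - 1| ≤ l} ⊆ Metric.closedBall 0 (1 + l) \ Metric.ball 0 (1 - l) := by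
    intro ξ hξ
    have h := abs_le.1 (show |‖ξ‖ - 1| ≤ l from hξ)
    simp only [Set.mem_sdiff, Metric.mem_closedBall, Metric.mem_ball, dist_zero_right]
    constructor <;> linarith
  have hω' : volume (Metric.ball (0 : Rd d) 1) = ENNReal.ofReal ω := (ENNReal.ofReal_toReal hωf).symm
  have hcb : volume (Metric.closedBall (0 : Rd d) (1 + l)) = ENNReal.ofReal ((1 + l) ^ d) * ENNReal.ofReal ω := by
    rw [Measure.addHaar_closedBall volume (0 : Rd d) (r := 1 + l) (by linarith), hω', finrank_euclideanSpace, Fintype.card_fin]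
  have hob : volume (Metric.ball (0 : Rd d) (1 - l)) = ENNReal.ofReal ((1 - l) ^ d) * ENNReal.ofReal ω := by
    rw [Measure.addHaar_ball volume (0 : Rd d) (r := 1 - l) (by linarith), hω', finrank_euclideanSpace, Fintype.card_fin]
  refine (measure_mono hsub).trans ?_
  rw [measure_sdiff ((Metric.ball_subset_closedBall).trans (Metric.closedBall_subset_closedBall (by linarith)))
    measurableSet_ball.nullMeasurableSet measure_ball_lt_top.ne,
    hcb, hob, ← ENNReal.ofReal_mul (by positivity), ← ENNReal.ofReal_mul (pow_nonneg (by linarith) _),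
    ← ENNReal.ofReal_sub _ (mul_nonneg (pow_nonneg (by linarith) _) hω0.le), ← ENNReal.ofReal_mul (by positivity)]
  apply ENNReal.ofReal_le_ofReal
  have h1 := one_add_mul_le_pow (a := -l) (by linarith) d
  have h2 : ∀ n : ℕ, (1 + l) ^ n ≤ 1 + (2 ^ n - 1) * l := by
    intro n
    induction n with
    | zero => simp
    | succ n ih =>
      have h3 : (1:ℝ) ≤ 2 ^ n := one_le_pow₀ (by norm_num)
      rw [pow_succ, pow_succ]
      calc (1 + l) ^ n * (1 + l) ≤ (1 + (2 ^ n - 1) * l) * (1 + l) := by gcongr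
        _ ≤ 1 + (2 ^ n * 2 - 1) * l := by
          nlinarith [mul_nonneg (mul_nonneg (sub_nonneg.2 h3) hl.le) (sub_nonneg.2 hl1)]
  have h3 := h2 d
  have h4 : (1 + l) ^ d - (1 - l) ^ d ≤ (2 ^ d + d) * l := by
    have : (1 - l) = 1 + -l := by ring
    rw [this]; linarith
  calc (1 + l) ^ d * ω - (1 - l) ^ d * ω = ((1 + l) ^ d - (1 - l) ^ d) * ω := by ring
    _ ≤ (2 ^ d + d) * l * ω := by gcongr
    _ = _ := by ring

theorem annulus_lower {d : ℕ} (hd : 1 ≤ d) : ∃ c : ℝ, 0 < c ∧ ∀ l : ℝ, 0 < l → l ≤ 1 →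
    ENNReal.ofReal (c * l) ≤ volume {ξ : Rd d | |‖ξ‖ - 1| ≤ l} := by
  have : Nonempty (Fin d) := ⟨⟨0, hd⟩⟩
  set ω := (volume (Metric.ball (0 : Rd d) 1)).toReal with hω
  have hωf : volume (Metric.ball (0 : Rd d) 1) ≠ ∞ := measure_ball_lt_top.ne
  have hω0 : 0 < ω := ENNReal.toReal_pos (Metric.measure_ball_pos _ _ one_pos).ne' hωf
  have hd0 : (0:ℝ) < d := by exact_mod_cast hd
  refine ⟨d * ω, by positivity, fun l hl hl1 => ?_⟩
  have hsub : Metric.closedBall 0 (1 + l) \ Metric.ball 0 (1 - l) ⊆ {ξ : Rd d | |‖ξ‖ - 1| ≤ l} := by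
    intro ξ hξ
    simp only [Set.mem_sdiff, Metric.mem_closedBall, Metric.mem_ball, dist_zero_right] at hξ
    show |‖ξ‖ - 1| ≤ l
    rw [abs_le]
    constructor <;> linarith [hξ.1, hξ.2]
  have hω' : volume (Metric.ball (0 : Rd d) 1) = ENNReal.ofReal ω := (ENNReal.ofReal_toReal hωf).symm
  have hcb : volume (Metric.closedBall (0 : Rd d) (1 + l)) = ENNReal.ofReal ((1 + l) ^ d) * ENNReal.ofReal ω := by
    rw [Measure.addHaar_closedBall volume (0 : Rd d) (r := 1 + l) (by linarith), hω', finrank_euclideanSpace, Fintype.card_fin]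
  have hob : volume (Metric.ball (0 : Rd d) (1 - l)) = ENNReal.ofReal ((1 - l) ^ d) * ENNReal.ofReal ω := by
    rw [Measure.addHaar_ball volume (0 : Rd d) (r := 1 - l) (by linarith), hω', finrank_euclideanSpace, Fintype.card_fin]
  refine le_trans ?_ (measure_mono hsub)
  rw [measure_sdiff ((Metric.ball_subset_closedBall).trans (Metric.closedBall_subset_closedBall (by linarith)))
    measurableSet_ball.nullMeasurableSet measure_ball_lt_top.ne,
    hcb, hob, ← ENNReal.ofReal_mul (by positivity), ← ENNReal.ofReal_mul (pow_nonneg (by linarith) _),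
    ← ENNReal.ofReal_sub _ (mul_nonneg (pow_nonneg (by linarith) _) hω0.le)]
  apply ENNReal.ofReal_le_ofReal
  have h1 := one_add_mul_le_pow (a := l) (by linarith) d
  have h2 : (1 - l) ^ d ≤ 1 := pow_le_one₀ (by linarith) (by linarith)
  have h4 : d * l ≤ (1 + l) ^ d - (1 - l) ^ d := by linarith
  calc d * ω * l = d * l * ω := by ring
    _ ≤ ((1 + l) ^ d - (1 - l) ^ d) * ω := by gcongr
    _ = _ := by ring

theorem simp_of_simpleFunc {d : ℕ} (g : SimpleFunc (Rd d) ℂ) (hg : ∀ c : ℂ, c ≠ 0 → volume (g ⁻¹' {c}) ≠ ∞) :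
    IsSimp (g : Rd d → ℂ) := by
  classical
  have key : ∀ T : Finset ℂ, (∀ x, g x ≠ 0 → g x ∈ T) → (∀ c ∈ T, c ≠ 0) → 
      ∃ (n : ℕ) (e : Fin n ≃ T), True := by
    intro T _ _
    exact ⟨_, (T.equivFin).symm, trivial⟩
  set T := g.range.filter (· ≠ 0) with hT
  obtain ⟨n, e, -⟩ := key T (fun x hx => by simp [hT, hx]) (fun c hc => by
    simp [hT] at hc; exact hc.2)
  have hne : ∀ i, (e i : ℂ) ≠ 0 := fun i => (Finset.mem_filter.1 (e i).2).2
  refine ⟨Fin n, inferInstance, fun i => g ⁻¹' {(e i : ℂ)}, fun i => (e i : ℂ), fun i => g.measurableSet_fiber _,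
    fun i => hg _ (hne i), ?_, hne, ?_⟩
  · intro i j hij
    apply Disjoint.preimage
    simp only [Set.disjoint_singleton, ne_eq]
    intro h
    exact hij (e.injective (Subtype.ext h))
  · ext x
    unfold fs
    by_cases hx : g x = 0
    · rw [hx]; symm
      apply Finset.sum_eq_zero
      intro i _
      apply Set.indicator_of_notMem
      simp only [Set.mem_preimage, Set.mem_singleton_iff, hx]
      exact (hne i).symm
    · have hm : g x ∈ T := by simp [hT, hx]
      rw [Finset.sum_eq_single (e.symm ⟨g x, hm⟩)]
      · simp
      · intro i _ hi
        apply Set.indicator_of_notMem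
        simp only [Set.mem_preimage, Set.mem_singleton_iff]
        intro h
        apply hi
        rw [Equiv.eq_symm_apply]
        exact Subtype.ext h.symm
      · simp

theorem dual_ext {d : ℕ} {w f : Rd d → ℂ} {q K : ℝ} (hq : 0 < q) (hw : MemLp w 2 volume)
    (H : ∀ f : Rd d → ℂ, IsSimp f → ‖∫ x, w x * f x‖ ≤ K * (∫ x, ‖f x‖ ^ q) ^ (1 / q))
    (hf : Measurable f) (h1 : Integrable f volume) (h2 : MemLp f 2 volume)
    (h3 : Integrable (fun x => ‖f x‖ ^ q) volume) :
    ‖∫ x, w x * f x‖ ≤ K * (∫ x, ‖f x‖ ^ q) ^ (1 / q) := by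
  set F : ℕ → SimpleFunc (Rd d) ℂ := fun n => SimpleFunc.approxOn f hf Set.univ 0 (Set.mem_univ _) n with hF
  have hFm : ∀ n, MemLp (F n) 1 volume := fun n =>
    SimpleFunc.memLp_approxOn hf (memLp_one_iff_integrable.2 h1) _ MemLp.zero n
  have hFs : ∀ n, IsSimp (F n) := by
    intro n
    apply simp_of_simpleFunc
    intro c hc
    exact (SimpleFunc.measure_preimage_lt_top_of_memLp (by norm_num) (by norm_num) (F n) (hFm n) c hc).ne
  have hb : ∀ n x, ‖F n x‖ ≤ 2 * ‖f x‖ := by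
    intro n x
    have := SimpleFunc.norm_approxOn_zero_le hf (Set.mem_univ (0:ℂ)) x n
    rw [two_mul]; exact this
  have ht : ∀ x, Tendsto (fun n => F n x) atTop (𝓝 (f x)) := fun x =>
    SimpleFunc.tendsto_approxOn hf _ (by simp)
  have t1 : Tendsto (fun n => ∫ x, w x * F n x) atTop (𝓝 (∫ x, w x * f x)) := by
    apply tendsto_integral_of_dominated_convergence (fun x => 2 * ‖w x * f x‖)
    · intro n
      exact hw.1.mul (F n).aestronglyMeasurable
    · exact ((hw.integrable_mul h2).norm).const_mul 2
    · intro n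
      filter_upwards with x
      rw [norm_mul, norm_mul]
      nlinarith [hb n x, norm_nonneg (w x)]
    · filter_upwards with x
      exact (ht x).const_mul _
  have t2 : Tendsto (fun n => ∫ x, ‖F n x‖ ^ q) atTop (𝓝 (∫ x, ‖f x‖ ^ q)) := by
    apply tendsto_integral_of_dominated_convergence (fun x => 2 ^ q * ‖f x‖ ^ q)
    · intro n
      exact ((F n).measurable.norm.pow_const q).aestronglyMeasurable
    · exact h3.const_mul _
    · intro n
      filter_upwards with x
      rw [Real.norm_of_nonneg (by positivity), ← Real.mul_rpow (by norm_num) (norm_nonneg _)]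
      exact Real.rpow_le_rpow (norm_nonneg _) (hb n x) hq.le
    · filter_upwards with x
      exact ((ht x).norm).rpow_const (Or.inr hq.le)
  exact le_of_tendsto_of_tendsto' t1.norm ((t2.rpow_const (Or.inr (by positivity))).const_mul K)
    (fun n => H _ (hFs n))

theorem dual_lp_meas {d : ℕ} {w : Rd d → ℂ} {p K : ℝ} (hp : 2 < p) (hK : 0 ≤ K) (hwm : Measurable w) (hw : MemLp w 2 volume)
    (H : ∀ f : Rd d → ℂ, IsSimp f → ‖∫ x, w x * f x‖ ≤ K * (∫ x, ‖f x‖ ^ (p / (p - 1))) ^ (1 / (p / (p - 1)))) :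
    eLpNorm w (ENNReal.ofReal p) volume ≤ ENNReal.ofReal K := by
  set q := p / (p - 1) with hq
  have hp0 : 0 < p := by linarith
  have hp1 : 0 < p - 1 := by linarith
  have hq0 : 0 < q := by positivity
  set B : ℕ → Set (Rd d) := fun n => {x | 1 / ((n:ℝ) + 1) ≤ ‖w x‖ ∧ ‖w x‖ ≤ n + 1} with hB
  have hBm : ∀ n, MeasurableSet (B n) := fun n =>
    (measurableSet_le measurable_const hwm.norm).inter (measurableSet_le hwm.norm measurable_const)
  have hBf : ∀ n, volume (B n) < ∞ := by
    intro n
    refine lt_of_le_of_lt (measure_mono (fun x hx => ?_)) (hw.meas_ge_lt_top (ε := ⟨1 / ((n:ℝ) + 1), by positivity⟩) (by norm_num) (by norm_num) ?_)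
    · exact hx.1
    · intro h
      have := congrArg Subtype.val h
      simp at this
      have h2 : (0:ℝ) < (n:ℝ) + 1 := by positivity
      exact h2.ne' this
  have hpos : ∀ n, ∀ x ∈ B n, 0 < ‖w x‖ := fun n x hx => lt_of_lt_of_le (by positivity) hx.1
  have key : ∀ n, ∫⁻ x in B n, ‖w x‖ₑ ^ p ≤ ENNReal.ofReal (K ^ p) := by
    intro n
    set f : Rd d → ℂ := (B n).indicator (fun x => (starRingEnd ℂ) (w x) * ((‖w x‖ ^ (p - 2) : ℝ) : ℂ)) with hf
    have hfm : Measurable f := by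
      apply Measurable.indicator _ (hBm n)
      exact (Complex.continuous_conj.measurable.comp hwm).mul (Complex.measurable_ofReal.comp (hwm.norm.pow_const _))
    have hn : ∀ x ∈ B n, ‖f x‖ = ‖w x‖ ^ (p - 1) := by
      intro x hx
      rw [hf, Set.indicator_of_mem hx, norm_mul, RCLike.norm_conj, Complex.norm_real, Real.norm_of_nonneg (by positivity),
        mul_comm, ← Real.rpow_add_one (hpos n x hx).ne']
      congr 1; ring
    have hn0 : ∀ x, x ∉ B n → f x = 0 := fun x hx => Set.indicator_of_notMem hx _
    have hbd : ∀ x, ‖f x‖ ≤ ((n:ℝ) + 1) ^ (p - 1) := by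
      intro x
      by_cases hx : x ∈ B n
      · rw [hn x hx]; exact Real.rpow_le_rpow (norm_nonneg _) hx.2 hp1.le
      · rw [hn0 x hx, norm_zero]; positivity
    have hmem : ∀ r : ℝ≥0∞, MemLp f r volume := by
      intro r
      have h1 : MemLp ((B n).indicator (fun _ => (((n:ℝ) + 1) ^ (p - 1) : ℝ))) r volume :=
        memLp_indicator_const r (hBm n) _ (Or.inr (hBf n).ne)
      refine h1.mono hfm.aestronglyMeasurable ?_
      filter_upwards with x
      by_cases hx : x ∈ B n
      · rw [Set.indicator_of_mem hx]; exact (hbd x).trans (le_abs_self _)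
      · rw [hn0 x hx, norm_zero]; positivity
    have hpq : ∀ x, ‖f x‖ ^ q = (B n).indicator (fun x => ‖w x‖ ^ p) x := by
      intro x
      by_cases hx : x ∈ B n
      · rw [hn x hx, Set.indicator_of_mem hx, ← Real.rpow_mul (norm_nonneg _)]
        congr 1; rw [hq]; field_simp
      · rw [hn0 x hx, Set.indicator_of_notMem hx, norm_zero, Real.zero_rpow hq0.ne']
    have hwf : ∀ x, w x * f x = (((B n).indicator (fun x => ‖w x‖ ^ p) x : ℝ) : ℂ) := by
      intro x
      by_cases hx : x ∈ B n
      · rw [hf, Set.indicator_of_mem hx, Set.indicator_of_mem hx, ← mul_assoc, Complex.mul_conj, ← Complex.ofReal_mul,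
          Complex.normSq_eq_norm_sq]
        congr 1
        rw [← Real.rpow_natCast, ← Real.rpow_add (hpos n x hx)]
        congr 1; push_cast; ring
      · rw [hn0 x hx, Set.indicator_of_notMem hx]; simp
    have hIntg : Integrable (fun x => ‖f x‖ ^ q) volume := by
      have := (hmem (ENNReal.ofReal q)).integrable_norm_rpow (by simpa using hq0) (by simp)
      rwa [ENNReal.toReal_ofReal hq0.le] at this
    have hmain := dual_ext hq0 hw H hfm (memLp_one_iff_integrable.1 (hmem 1)) (hmem 2) hIntg
    set I := ∫ x, ‖f x‖ ^ q with hI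
    have hI0 : 0 ≤ I := integral_nonneg (fun x => by positivity)
    have e1 : ‖∫ x, w x * f x‖ = I := by
      have : (fun x => w x * f x) = fun x => ((‖f x‖ ^ q : ℝ) : ℂ) := by
        ext x; rw [hwf, hpq]
      rw [this]
      have e2 : ∫ x, ((‖f x‖ ^ q : ℝ) : ℂ) = ((I : ℝ) : ℂ) := integral_ofReal
      rw [e2, Complex.norm_real, Real.norm_of_nonneg hI0]
    rw [e1] at hmain
    have hIK : I ≤ K ^ p := by
      rcases hI0.eq_or_lt with h | h
      · rw [← h]; positivity
      · have h2 : I ^ (1 / p) ≤ K := by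
          have h3 : I = I ^ (1 / p) * I ^ (1 / q) := by
            rw [← Real.rpow_add h]
            conv_lhs => rw [← Real.rpow_one I]
            congr 1; rw [hq]; field_simp; ring
          rw [h3] at hmain
          refine le_of_mul_le_mul_right (hmain.trans_eq ?_) (Real.rpow_pos_of_pos h (1 / q))
          rw [← h3]
        calc I = (I ^ (1 / p)) ^ p := by rw [← Real.rpow_mul hI0]; field_simp; simp
          _ ≤ K ^ p := Real.rpow_le_rpow (by positivity) h2 hp0.le
    calc ∫⁻ x in B n, ‖w x‖ₑ ^ p = ∫⁻ x, (B n).indicator (fun x => ‖w x‖ₑ ^ p) x := (lintegral_indicator (hBm n) _).symm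
      _ = ∫⁻ x, ENNReal.ofReal (‖f x‖ ^ q) := by
          congr 1; ext x
          rw [hpq]
          by_cases hx : x ∈ B n
          · rw [Set.indicator_of_mem hx, Set.indicator_of_mem hx, ← ENNReal.ofReal_rpow_of_nonneg (norm_nonneg _) hp0.le, ofReal_norm]
          · rw [Set.indicator_of_notMem hx, Set.indicator_of_notMem hx]; simp
      _ = ENNReal.ofReal I := (ofReal_integral_eq_lintegral_ofReal hIntg (Eventually.of_forall (fun x => by positivity))).symm
      _ ≤ _ := ENNReal.ofReal_le_ofReal hIK
  have hmono : Monotone B := by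
    intro m n hmn x hx
    have : (m:ℝ) ≤ n := by exact_mod_cast hmn
    refine ⟨le_trans ?_ hx.1, hx.2.trans (by linarith)⟩
    apply one_div_le_one_div_of_le (by positivity) (by linarith)
  have hU : ∫⁻ x, ‖w x‖ₑ ^ p = ∫⁻ x in ⋃ n, B n, ‖w x‖ₑ ^ p := by
    rw [← lintegral_indicator (MeasurableSet.iUnion hBm)]
    congr 1; ext x
    by_cases hx : x ∈ ⋃ n, B n
    · rw [Set.indicator_of_mem hx]
    · rw [Set.indicator_of_notMem hx]
      have hx0 : w x = 0 := by
        by_contra hne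
        have h0 : 0 < ‖w x‖ := norm_pos_iff.2 hne
        apply hx
        obtain ⟨n, hn⟩ := exists_nat_one_div_lt h0
        obtain ⟨m, hm⟩ := exists_nat_ge ‖w x‖
        refine Set.mem_iUnion.2 ⟨max n m, ?_, ?_⟩
        · refine le_trans (one_div_le_one_div_of_le (by positivity) ?_) hn.le
          have : (n:ℝ) ≤ ((max n m : ℕ) : ℝ) := by exact_mod_cast le_max_left _ _
          linarith
        · have : (m:ℝ) ≤ ((max n m : ℕ) : ℝ) := by exact_mod_cast le_max_right _ _
          linarith
      rw [hx0]; simp [hp0]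
  have hfin : ∫⁻ x, ‖w x‖ₑ ^ p ≤ ENNReal.ofReal (K ^ p) := by
    rw [hU, setLIntegral_iUnion_of_directed _ hmono.directed_le]
    exact iSup_le key
  rw [eLpNorm_eq_lintegral_rpow_enorm_toReal (by simpa using hp0) (by simp), ENNReal.toReal_ofReal hp0.le]
  calc _ ≤ (ENNReal.ofReal (K ^ p)) ^ (1 / p) := by gcongr
    _ = _ := by
      rw [← ENNReal.ofReal_rpow_of_nonneg hK hp0.le, ← ENNReal.rpow_mul]
      field_simp; simp

theorem dual_lp {d : ℕ} {w : Rd d → ℂ} {p K : ℝ} (hp : 2 < p) (hK : 0 ≤ K) (hw : MemLp w 2 volume)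
    (H : ∀ f : Rd d → ℂ, IsSimp f → ‖∫ x, w x * f x‖ ≤ K * (∫ x, ‖f x‖ ^ (p / (p - 1))) ^ (1 / (p / (p - 1)))) :
    eLpNorm w (ENNReal.ofReal p) volume ≤ ENNReal.ofReal K := by
  obtain ⟨w', hw'm, hae⟩ : ∃ w' : Rd d → ℂ, Measurable w' ∧ w =ᵐ[volume] w' :=
    ⟨_, hw.1.stronglyMeasurable_mk.measurable, hw.1.ae_eq_mk⟩
  rw [eLpNorm_congr_ae hae]
  apply dual_lp_meas hp hK hw'm ((memLp_congr_ae hae).1 hw)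
  intro f hf
  have : ∫ x, w' x * f x = ∫ x, w x * f x := by
    apply integral_congr_ae
    filter_upwards [hae] with x hx
    rw [hx]
  rw [this]
  exact H f hf

theorem cs_int {α : Type*} [MeasurableSpace α] {μ : Measure α} {a b : α → ℂ} {m : α → ℝ}
    (ha : AEStronglyMeasurable a μ) (hb : AEStronglyMeasurable b μ) (hm : Measurable m) (hm0 : ∀ x, 0 < m x)
    (h1 : Integrable (fun x => ‖a x‖ ^ 2 * m x) μ) (h2 : Integrable (fun x => ‖b x‖ ^ 2 * (m x)⁻¹) μ) :
    (∫ x, ‖a x‖ * ‖b x‖ ∂μ) ^ 2 ≤ (∫ x, ‖a x‖ ^ 2 * m x ∂μ) * (∫ x, ‖b x‖ ^ 2 * (m x)⁻¹ ∂μ) := by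
  have hsm : Measurable (fun x => √(m x)) := hm.sqrt
  have A : MemLp (fun x => ‖a x‖ * √(m x)) 2 μ := by
    refine (memLp_two_iff_integrable_sq (ha.norm.mul hsm.aestronglyMeasurable)).2 ?_
    refine h1.congr (Eventually.of_forall fun x => ?_)
    simp only [Pi.mul_apply, mul_pow, Real.sq_sqrt (hm0 x).le]
  have B : MemLp (fun x => ‖b x‖ * (√(m x))⁻¹) 2 μ := by
    refine (memLp_two_iff_integrable_sq (hb.norm.mul hsm.inv.aestronglyMeasurable)).2 ?_
    refine h2.congr (Eventually.of_forall fun x => ?_)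
    simp only [Pi.mul_apply, Pi.inv_apply, mul_pow, inv_pow, Real.sq_sqrt (hm0 x).le]
  have h22 : Real.HolderConjugate 2 2 := by
    rw [Real.holderConjugate_iff]; norm_num
  have h := integral_mul_le_Lp_mul_Lq_of_nonneg (μ := μ) h22 (f := fun x => ‖a x‖ * √(m x)) (g := fun x => ‖b x‖ * (√(m x))⁻¹)
    (Eventually.of_forall fun x => by positivity) (Eventually.of_forall fun x => by positivity)
    (by simpa using A) (by simpa using B)
  have e0 : ∀ x, ‖a x‖ * √(m x) * (‖b x‖ * (√(m x))⁻¹) = ‖a x‖ * ‖b x‖ := by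
    intro x
    have : √(m x) ≠ 0 := (Real.sqrt_pos.2 (hm0 x)).ne'
    field_simp
  have e1 : ∀ x, (‖a x‖ * √(m x)) ^ (2:ℝ) = ‖a x‖ ^ 2 * m x := by
    intro x
    rw [Real.rpow_two, mul_pow, Real.sq_sqrt (hm0 x).le]
  have e2 : ∀ x, (‖b x‖ * (√(m x))⁻¹) ^ (2:ℝ) = ‖b x‖ ^ 2 * (m x)⁻¹ := by
    intro x
    rw [Real.rpow_two, mul_pow, inv_pow, Real.sq_sqrt (hm0 x).le]
  simp only [e0, e1, e2] at h
  have p1 : 0 ≤ ∫ x, ‖a x‖ ^ 2 * m x ∂μ := integral_nonneg fun x => mul_nonneg (by positivity) (hm0 x).le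
  have p2 : 0 ≤ ∫ x, ‖b x‖ ^ 2 * (m x)⁻¹ ∂μ := integral_nonneg fun x => mul_nonneg (by positivity) (inv_nonneg.2 (hm0 x).le)
  have p0 : 0 ≤ ∫ x, ‖a x‖ * ‖b x‖ ∂μ := integral_nonneg fun x => by positivity
  rw [← Real.sqrt_eq_rpow, ← Real.sqrt_eq_rpow] at h
  calc _ ≤ (√(∫ x, ‖a x‖ ^ 2 * m x ∂μ) * √(∫ x, ‖b x‖ ^ 2 * (m x)⁻¹ ∂μ)) ^ 2 := pow_le_pow_left₀ p0 h 2
    _ = _ := by rw [mul_pow, Real.sq_sqrt p1, Real.sq_sqrt p2]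

theorem elp_iff {d : ℕ} {u : Rd d → ℂ} {r X : ℝ} (hr : 0 < r) (hX : 0 ≤ X) :
    eLpNorm u (ENNReal.ofReal r) volume ≤ ENNReal.ofReal X ↔ ∫⁻ x, ‖u x‖ₑ ^ r ≤ ENNReal.ofReal (X ^ r) := by
  rw [eLpNorm_eq_lintegral_rpow_enorm_toReal (by simpa using hr) (by simp), ENNReal.toReal_ofReal hr.le,
    ← ENNReal.ofReal_rpow_of_nonneg hX hr.le]
  constructor
  · intro h
    have := ENNReal.rpow_le_rpow h hr.le
    rwa [← ENNReal.rpow_mul, one_div_mul_cancel hr.ne', ENNReal.rpow_one] at this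
  · intro h
    have := ENNReal.rpow_le_rpow h (one_div_pos.2 hr).le
    rwa [← ENNReal.rpow_mul, mul_one_div_cancel hr.ne', ENNReal.rpow_one] at this

theorem lyap {d : ℕ} {u : Rd d → ℂ} {r₀ r₁ p θ X Y : ℝ} (h0 : 0 < r₀) (h1 : 0 < r₁) (hp : 0 < p)
    (hθ0 : 0 ≤ θ) (hθ1 : θ ≤ 1) (he : 1 / p = (1 - θ) / r₀ + θ / r₁) (hX : 0 ≤ X) (hY : 0 ≤ Y)
    (hu : AEStronglyMeasurable u volume) (hu0 : eLpNorm u (ENNReal.ofReal r₀) volume ≤ ENNReal.ofReal X)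
    (hu1 : eLpNorm u (ENNReal.ofReal r₁) volume ≤ ENNReal.ofReal Y) :
    eLpNorm u (ENNReal.ofReal p) volume ≤ ENNReal.ofReal (X ^ (1 - θ) * Y ^ θ) := by
  rw [elp_iff h0 hX] at hu0
  rw [elp_iff h1 hY] at hu1
  rw [elp_iff hp (by positivity)]
  set a := p * (1 - θ) / r₀ with ha
  set b := p * θ / r₁ with hb
  have h1θ : 0 ≤ 1 - θ := by linarith
  have hab : a + b = 1 := by
    have : a + b = p * ((1 - θ) / r₀ + θ / r₁) := by rw [ha, hb]; ring
    rw [this, ← he]; field_simp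
  have ha0 : 0 ≤ a := by positivity
  have hb0 : 0 ≤ b := by positivity
  have hra : r₀ * a = p * (1 - θ) := by rw [ha]; field_simp
  have hrb : r₁ * b = p * θ := by rw [hb]; field_simp
  have hpp : p = r₀ * a + r₁ * b := by rw [hra, hrb]; ring
  calc ∫⁻ x, ‖u x‖ₑ ^ p = ∫⁻ x, (‖u x‖ₑ ^ r₀) ^ a * (‖u x‖ₑ ^ r₁) ^ b := by
        congr 1; ext x
        rw [← ENNReal.rpow_mul, ← ENNReal.rpow_mul, ← ENNReal.rpow_add_of_nonneg _ _ (by positivity) (by positivity), ← hpp]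
    _ ≤ (∫⁻ x, ‖u x‖ₑ ^ r₀) ^ a * (∫⁻ x, ‖u x‖ₑ ^ r₁) ^ b :=
        ENNReal.lintegral_mul_norm_pow_le (hu.enorm.pow_const _) (hu.enorm.pow_const _) ha0 hb0 hab
    _ ≤ (ENNReal.ofReal (X ^ r₀)) ^ a * (ENNReal.ofReal (Y ^ r₁)) ^ b := by gcongr
    _ = _ := by
        rw [ENNReal.ofReal_rpow_of_nonneg (by positivity) ha0, ENNReal.ofReal_rpow_of_nonneg (by positivity) hb0,
          ← ENNReal.ofReal_mul (by positivity), ← Real.rpow_mul hX, ← Real.rpow_mul hY, hra, hrb,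
          Real.mul_rpow (by positivity) (by positivity), ← Real.rpow_mul hX, ← Real.rpow_mul hY, mul_comm p, mul_comm p]

theorem lyap_top {d : ℕ} {u : Rd d → ℂ} {r p X : ℝ} (hr : 0 < r) (hrp : r ≤ p) (hX : 0 ≤ X)
    (hu : ∀ x, ‖u x‖ ≤ X) (hu0 : eLpNorm u (ENNReal.ofReal r) volume ≤ ENNReal.ofReal X) :
    eLpNorm u (ENNReal.ofReal p) volume ≤ ENNReal.ofReal X := by
  rw [elp_iff hr hX] at hu0
  rw [elp_iff (by linarith) hX]
  have hpr : 0 ≤ p - r := by linarith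
  calc ∫⁻ x, ‖u x‖ₑ ^ p ≤ ∫⁻ x, (ENNReal.ofReal X) ^ (p - r) * ‖u x‖ₑ ^ r := by
        apply lintegral_mono; intro x; dsimp only
        have : p = (p - r) + r := by ring
        conv_lhs => rw [this, ENNReal.rpow_add_of_nonneg _ _ hpr hr.le]
        gcongr
        rw [← ofReal_norm]
        exact ENNReal.ofReal_le_ofReal (hu x)
    _ = (ENNReal.ofReal X) ^ (p - r) * ∫⁻ x, ‖u x‖ₑ ^ r := lintegral_const_mul' _ _ (by simp [hrp])
    _ ≤ (ENNReal.ofReal X) ^ (p - r) * ENNReal.ofReal (X ^ r) := by gcongr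
    _ = _ := by
        rw [ENNReal.ofReal_rpow_of_nonneg hX hpr, ← ENNReal.ofReal_mul (by positivity),
          ← Real.rpow_add_of_nonneg hX hpr hr.le]
        congr 2; ring

theorem eLpNorm_fourierInv {d : ℕ} {f : Rd d → ℂ} (h1 : Integrable f volume)
    (h2 : MemLp f 2 volume) : eLpNorm (𝓕⁻ f) 2 volume = eLpNorm f 2 volume := by
  rw [fourierInv_fun, ← eLpNorm_fourier h1 h2]
  exact eLpNorm_comp_measurePreserving (fourier_memL2 h1 h2).1 (Measure.measurePreserving_neg volume)

theorem wt_bd {d : ℕ} {γ ε : ℝ} (hε : 0 < ε) (ξ : Rd d) : (ε + |‖ξ‖ - 1| ^ γ)⁻¹ ≤ ε⁻¹ := by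
  apply inv_anti₀ hε
  have : 0 ≤ |‖ξ‖ - 1| ^ γ := by positivity
  linarith

theorem wt_meas {d : ℕ} (γ ε : ℝ) : Measurable (fun ξ : Rd d => ε + |‖ξ‖ - 1| ^ γ) := by
  fun_prop

theorem shell_dual {d : ℕ} (hd : 2 ≤ d) {γ : ℝ} (hγ : 1 < γ) : ∃ C : ℝ, 0 < C ∧ ∀ ε : ℝ, 0 < ε → ε < 1 →
    ∀ f : Rd d → ℂ, IsSimp f →
    ∫ ξ in {ξ : Rd d | |‖ξ‖ - 1| ≤ 1/2}, ‖𝓕⁻ f ξ‖ ^ 2 * (ε + |‖ξ‖ - 1| ^ γ)⁻¹ ≤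
      C * ε ^ (1 / γ - 1) * (∫ x, ‖f x‖ ^ (2 * ((d:ℝ) + 1) / (d + 3))) ^ (((d:ℝ) + 3) / (d + 1)) := by
  obtain ⟨C₁, hC₁, H₁⟩ := thick hd
  obtain ⟨C₂, hC₂, H₂⟩ := dyadic (d := d) hγ
  refine ⟨C₁ * C₂, by positivity, fun ε hε hε1 f hf => ?_⟩
  set J := (∫ x, ‖f x‖ ^ (2 * ((d:ℝ) + 1) / (d + 3))) ^ (((d:ℝ) + 3) / (d + 1)) with hJ
  have hJ0 : 0 ≤ J := Real.rpow_nonneg (integral_nonneg fun x => by positivity) _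
  set A : Set (Rd d) := {ξ : Rd d | |‖ξ‖ - 1| ≤ 1/2} with hA
  have hAm : MeasurableSet A := ann_meas _
  have hneg : ∫ ξ in A, ‖𝓕⁻ f ξ‖ ^ 2 * (ε + |‖ξ‖ - 1| ^ γ)⁻¹ = ∫ ξ in A, ‖𝓕 f ξ‖ ^ 2 * (ε + |‖ξ‖ - 1| ^ γ)⁻¹ := by
    rw [← integral_indicator hAm, ← integral_indicator hAm, ← integral_neg_eq_self]
    congr 1; ext ξ
    simp only [Set.indicator, hA, Set.mem_ofPred_eq, norm_neg, fourierInv_fun, neg_neg]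
  rw [hneg]
  have hcont := fourier_continuous hf.int
  have hdm : Measurable (fun ξ => ENNReal.ofReal (‖𝓕 f ξ‖ ^ 2)) := by fun_prop
  have hsq := simp_int_sq hf
  have hIntg : Integrable (fun ξ => ‖𝓕 f ξ‖ ^ 2 * (ε + |‖ξ‖ - 1| ^ γ)⁻¹) volume := by
    refine hsq.mul_bdd (c := ε⁻¹) (wt_meas γ ε).inv.aestronglyMeasurable (Eventually.of_forall fun ξ => ?_)
    rw [Real.norm_of_nonneg (by positivity)]
    exact wt_bd hε ξ
  have h := H₂ (volume.withDensity (fun ξ => ENNReal.ofReal (‖𝓕 f ξ‖ ^ 2))) (ENNReal.ofReal (C₁ * J)) (by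
    intro l hl hl1
    rw [withDensity_apply _ (ann_meas l), ← ofReal_integral_eq_lintegral_ofReal hsq.integrableOn
      (Eventually.of_forall fun ξ => by positivity), ← ENNReal.ofReal_mul (by positivity)]
    apply ENNReal.ofReal_le_ofReal
    refine (H₁ l hl hl1 f hf).trans_eq ?_
    rw [← hJ]; ring) ε hε hε1
  rw [setLIntegral_withDensity_eq_setLIntegral_mul volume hdm (by fun_prop) hAm] at h
  have e : ∫⁻ ξ in A, ((fun ξ => ENNReal.ofReal (‖𝓕 f ξ‖ ^ 2)) * fun ξ : Rd d => ENNReal.ofReal (1 / (ε + |‖ξ‖ - 1| ^ γ))) ξ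
      = ENNReal.ofReal (∫ ξ in A, ‖𝓕 f ξ‖ ^ 2 * (ε + |‖ξ‖ - 1| ^ γ)⁻¹) := by
    rw [ofReal_integral_eq_lintegral_ofReal hIntg.integrableOn (Eventually.of_forall fun ξ => by positivity)]
    congr 1; ext ξ
    rw [Pi.mul_apply, ← ENNReal.ofReal_mul (by positivity), one_div]
  rw [e, ← ENNReal.ofReal_mul (by positivity), ENNReal.ofReal_le_ofReal_iff (by positivity)] at h
  refine h.trans_eq (by ring)

theorem shell_inv {d : ℕ} (hd : 1 ≤ d) {γ : ℝ} (hγ : 1 < γ) : ∃ C : ℝ, 0 < C ∧ ∀ ε : ℝ, 0 < ε → ε < 1 →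
    IntegrableOn (fun ξ => (ε + |‖ξ‖ - 1| ^ γ)⁻¹) {ξ : Rd d | |‖ξ‖ - 1| ≤ 1/2} volume ∧
    ∫ ξ in {ξ : Rd d | |‖ξ‖ - 1| ≤ 1/2}, (ε + |‖ξ‖ - 1| ^ γ)⁻¹ ≤ C * ε ^ (1 / γ - 1) := by
  obtain ⟨C₁, hC₁, H₁⟩ := annulus_upper (d := d) hd
  obtain ⟨C₂, hC₂, H₂⟩ := dyadic (d := d) hγ
  refine ⟨C₁ * C₂, by positivity, fun ε hε hε1 => ?_⟩
  have hfin : volume {ξ : Rd d | |‖ξ‖ - 1| ≤ 1/2} ≠ ∞ :=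
    ne_top_of_le_ne_top (ENNReal.mul_ne_top ENNReal.ofReal_ne_top ENNReal.ofReal_ne_top) (H₁ (1/2) (by norm_num) (by norm_num))
  have hIntg : IntegrableOn (fun ξ => (ε + |‖ξ‖ - 1| ^ γ)⁻¹) {ξ : Rd d | |‖ξ‖ - 1| ≤ 1/2} volume := by
    have hc : IntegrableOn (fun _ : Rd d => ε⁻¹) {ξ : Rd d | |‖ξ‖ - 1| ≤ 1/2} volume := integrableOn_const hfin
    refine hc.mono' (wt_meas γ ε).inv.aestronglyMeasurable (Eventually.of_forall fun ξ => ?_)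
    rw [Real.norm_of_nonneg (by positivity)]
    exact wt_bd hε ξ
  refine ⟨hIntg, ?_⟩
  have h := H₂ volume (ENNReal.ofReal C₁) H₁ ε hε hε1
  simp only [one_div (ε + _)] at h
  rw [← ofReal_integral_eq_lintegral_ofReal hIntg (Eventually.of_forall fun ξ => by positivity), ← ENNReal.ofReal_mul (by positivity),
    ENNReal.ofReal_le_ofReal_iff (by positivity)] at h
  exact h.trans_eq (by ring)

theorem shell_bound {d : ℕ} (hd : 2 ≤ d) {γ p : ℝ} (hγ : 1 < γ) (hp : 2 < p) : ∃ C : ℝ, 0 < C ∧ ∀ ε : ℝ, 0 < ε → ε < 1 →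
    ∀ V : Rd d → ℂ, (∀ ξ : Rd d, ¬ |‖ξ‖ - 1| ≤ 1/2 → V ξ = 0) → MemLp V 2 volume →
    Integrable V volume ∧ 
    eLpNorm (𝓕⁻ V) (ENNReal.ofReal p) volume ≤
      ENNReal.ofReal (√ (C * ε ^ (-(1 - min 1 (((d : ℝ) + 1) * (1/2 - 1/p)) / γ)) * ∫ ξ, ‖V ξ‖ ^ 2 * (ε + |‖ξ‖ - 1| ^ γ))) := by
  obtain ⟨C₁, hC₁, H₁⟩ := shell_dual hd hγ
  obtain ⟨C₂, hC₂, H₂⟩ := shell_inv (d := d) (by omega) hγ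
  set C := C₁ + C₂ + 1 with hC
  have hC1 : 1 ≤ C := by linarith
  have hC0 : 0 < C := by linarith
  refine ⟨C, hC0, fun ε hε hε1 V hV0 hV2 => ?_⟩
  set A : Set (Rd d) := {ξ : Rd d | |‖ξ‖ - 1| ≤ 1/2} with hA
  have hAm : MeasurableSet A := ann_meas _
  have hAf : volume A ≠ ∞ := by
    obtain ⟨K, _, h⟩ := annulus_upper (d := d) (by omega)
    exact ne_top_of_le_ne_top (ENNReal.mul_ne_top ENNReal.ofReal_ne_top ENNReal.ofReal_ne_top) (h (1/2) (by norm_num) (by norm_num))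
  have hV0' : ∀ ξ, ξ ∉ A → V ξ = 0 := fun ξ h => hV0 ξ h
  have hVi : V = A.indicator V := by
    ext ξ
    by_cases h : ξ ∈ A
    · rw [Set.indicator_of_mem h]
    · rw [Set.indicator_of_notMem h, hV0' ξ h]
  have hV1 : Integrable V volume := by
    rw [hVi, integrable_indicator_iff hAm]
    have : IsFiniteMeasure (volume.restrict A) := ⟨by simpa using hAf.lt_top⟩
    exact (hV2.restrict A).integrable (by norm_num)
  refine ⟨hV1, ?_⟩
  set m : Rd d → ℝ := fun ξ => ε + |‖ξ‖ - 1| ^ γ with hm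
  have hm0 : ∀ ξ, 0 < m ξ := fun ξ => by positivity
  have hmm : Measurable m := wt_meas γ ε
  have hsq : Integrable (fun ξ => ‖V ξ‖ ^ 2) volume := hV2.integrable_norm_pow (by norm_num)
  have hQi : Integrable (fun ξ => ‖V ξ‖ ^ 2 * m ξ) volume := by
    refine (hsq.const_mul 2).mono' (hsq.1.mul hmm.aestronglyMeasurable) (Eventually.of_forall fun ξ => ?_)
    have := hm0 ξ
    rw [Real.norm_of_nonneg (by positivity)]
    by_cases h : ξ ∈ A
    · have h1 : |‖ξ‖ - 1| ^ γ ≤ 1 := Real.rpow_le_one (abs_nonneg _) (le_trans h (by norm_num)) (by linarith)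
      have h2 : m ξ ≤ 2 := by simp only [hm]; linarith
      nlinarith [sq_nonneg ‖V ξ‖]
    · rw [hV0' ξ h]; simp
  set Q := ∫ ξ, ‖V ξ‖ ^ 2 * m ξ with hQ
  have hQ0 : 0 ≤ Q := integral_nonneg fun ξ => mul_nonneg (by positivity) (hm0 ξ).le
  have hQA : ∫ ξ in A, ‖V ξ‖ ^ 2 * m ξ = Q :=
    setIntegral_eq_integral_of_forall_compl_eq_zero fun ξ h => by rw [hV0' ξ h]; simp
  -- L2 bound
  have ha : eLpNorm (𝓕⁻ V) (ENNReal.ofReal 2) volume ≤ ENNReal.ofReal (√ (ε⁻¹ * Q)) := by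
    rw [show ENNReal.ofReal 2 = 2 by simp, eLpNorm_fourierInv hV1 hV2, ← ENNReal.ofReal_toReal hV2.2.ne]
    apply ENNReal.ofReal_le_ofReal
    apply Real.le_sqrt_of_sq_le
    rw [← integral_norm_sq_eq hV2, hQ, ← integral_const_mul]
    apply integral_mono hsq (hQi.const_mul _)
    intro ξ
    have h1 : ε ≤ m ξ := by
      have : 0 ≤ |‖ξ‖ - 1| ^ γ := by positivity
      simp only [hm]; linarith
    have h2 : 1 ≤ ε⁻¹ * m ξ := by
      rw [inv_mul_eq_div]; exact (one_le_div hε).2 h1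
    calc ‖V ξ‖ ^ 2 = ‖V ξ‖ ^ 2 * 1 := by ring
      _ ≤ ‖V ξ‖ ^ 2 * (ε⁻¹ * m ξ) := by gcongr
      _ = _ := by ring
  set E := ε ^ (1 / γ - 1) with hE
  have hE0 : 0 < E := by positivity
  set Y := √ (C * E * Q) with hY
  have hd1 : (1:ℝ) < d := by exact_mod_cast hd
  set ps : ℝ := 2 * ((d:ℝ) + 1) / (d - 1) with hps
  have hdm : (0:ℝ) < d - 1 := by linarith
  have hps2 : 2 < ps := by
    rw [hps, lt_div_iff₀ hdm]; linarith
  have hpsq : ps / (ps - 1) = 2 * ((d:ℝ) + 1) / (d + 3) := by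
    have h1 : ps - 1 = (d + 3) / (d - 1) := by rw [hps]; field_simp; ring
    rw [h1, hps]; field_simp
  have hb : eLpNorm (𝓕⁻ V) (ENNReal.ofReal ps) volume ≤ ENNReal.ofReal Y := by
    apply dual_lp hps2 (Real.sqrt_nonneg _) (fourierInv_memL2 hV1 hV2)
    intro f hf
    rw [hpsq, fourierInv_pair_L1 hV1 hf.int]
    set J := ∫ x, ‖f x‖ ^ (2 * ((d:ℝ) + 1) / (d + 3)) with hJ
    have hJ0 : 0 ≤ J := integral_nonneg fun x => by positivity
    have hF2 := fourierInv_memL2 hf.int (hf.memLp 2)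
    have s1 : ‖∫ ξ, V ξ * 𝓕⁻ f ξ‖ ≤ ∫ ξ in A, ‖V ξ‖ * ‖𝓕⁻ f ξ‖ := by
      refine (norm_integral_le_integral_norm _).trans_eq ?_
      rw [setIntegral_eq_integral_of_forall_compl_eq_zero (fun ξ h => by rw [hV0' ξ h]; simp)]
      simp only [norm_mul]
    have i2 : Integrable (fun ξ => ‖𝓕⁻ f ξ‖ ^ 2 * (m ξ)⁻¹) volume := by
      refine (hF2.integrable_norm_pow (by norm_num)).mul_bdd (c := ε⁻¹) hmm.inv.aestronglyMeasurable (Eventually.of_forall fun ξ => ?_)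
      rw [Real.norm_of_nonneg (inv_nonneg.2 (hm0 ξ).le)]
      exact wt_bd hε ξ
    have s2 := cs_int (μ := volume.restrict A) (hV2.1.restrict) (hF2.1.restrict) hmm hm0 hQi.integrableOn i2.integrableOn
    have s3 := H₁ ε hε hε1 f hf
    rw [hQA] at s2
    refine s1.trans ?_
    have hrhs : Y * J ^ (1 / (2 * ((d:ℝ) + 1) / (d + 3))) = √ (C * E * Q * J ^ (((d:ℝ) + 3) / (d + 1))) := by
      rw [Real.sqrt_mul (by positivity), hY]
      congr 1
      rw [Real.sqrt_eq_rpow, ← Real.rpow_mul hJ0]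
      congr 1; field_simp
    rw [hrhs]
    apply Real.le_sqrt_of_sq_le
    refine s2.trans ?_
    calc Q * ∫ ξ in A, ‖𝓕⁻ f ξ‖ ^ 2 * (m ξ)⁻¹ ≤ Q * (C₁ * E * J ^ (((d:ℝ) + 3) / (d + 1))) := by gcongr
      _ ≤ Q * (C * E * J ^ (((d:ℝ) + 3) / (d + 1))) := by
          gcongr; linarith
      _ = _ := by ring
  have hcb : ∀ x, ‖𝓕⁻ V x‖ ≤ Y := by
    intro x
    rw [fourierInv_fun]
    refine (fourier_norm_le V (-x)).trans ?_
    have s1 : ∫ ξ, ‖V ξ‖ = ∫ ξ in A, ‖V ξ‖ * ‖(1:ℂ)‖ := by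
      rw [setIntegral_eq_integral_of_forall_compl_eq_zero (fun ξ h => by rw [hV0' ξ h]; simp)]
      simp
    obtain ⟨t1, t2⟩ := H₂ ε hε hε1
    have s2 := cs_int (μ := volume.restrict A) (b := fun _ => (1:ℂ)) (hV2.1.restrict) aestronglyMeasurable_const hmm hm0 hQi.integrableOn
      (by
        simp only [norm_one, one_pow, one_mul]
        exact t1)
    rw [hQA] at s2
    rw [s1]
    apply Real.le_sqrt_of_sq_le
    refine s2.trans ?_
    simp only [norm_one, one_pow, one_mul]
    calc Q * ∫ ξ in A, (m ξ)⁻¹ ≤ Q * (C₂ * E) := by gcongr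
      _ ≤ Q * (C * E) := by gcongr; linarith
      _ = _ := by ring
  set α := ((d : ℝ) + 1) * (1/2 - 1/p) with hα
  have hp0 : 0 < p := by linarith
  have hα0 : 0 < α := by
    have : 1 / p < 1 / 2 := one_div_lt_one_div_of_lt (by norm_num) hp
    apply mul_pos (by positivity); linarith
  have h1ps : 1 / ps = (d - 1) / (2 * (d + 1)) := by rw [hps]; field_simp
  rcases le_or_gt α 1 with hα1 | hα1
  · rw [min_eq_right hα1]
    have he : 1 / p = (1 - α) / 2 + α / ps := by
      have : α / ps = α * (1 / ps) := by ring
      rw [this, h1ps, hα]; field_simp; ring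
    refine (lyap (by norm_num) (by linarith) hp0 hα0.le hα1 he (Real.sqrt_nonneg _) (Real.sqrt_nonneg _)
      (fourierInv_memL2 hV1 hV2).1 ha hb).trans ?_
    apply ENNReal.ofReal_le_ofReal
    have hε' : 0 ≤ ε⁻¹ := by positivity
    have h1α : 0 ≤ 1 - α := by linarith
    have e1 : √ (ε⁻¹ * Q) ^ (1 - α) * Y ^ α = √ ((ε⁻¹ * Q) ^ (1 - α) * (C * E * Q) ^ α) := by
      have g1 : 0 ≤ ε⁻¹ * Q := by positivity
      have g2 : 0 ≤ C * E * Q := by positivity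
      rw [hY]
      generalize ε⁻¹ * Q = a at g1 ⊢
      generalize C * E * Q = b at g2 ⊢
      simp only [Real.sqrt_eq_rpow]
      rw [Real.mul_rpow (by positivity) (by positivity), ← Real.rpow_mul g1, ← Real.rpow_mul g1, ← Real.rpow_mul g2,
        ← Real.rpow_mul g2, mul_comm (1/2 : ℝ), mul_comm (1/2 : ℝ)]
    rw [e1]
    apply Real.sqrt_le_sqrt
    have e2 : (ε⁻¹ * Q) ^ (1 - α) * (C * E * Q) ^ α = C ^ α * (ε⁻¹ ^ (1 - α) * E ^ α) * (Q ^ (1 - α) * Q ^ α) := by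
      rw [Real.mul_rpow hε' hQ0, Real.mul_rpow (by positivity) hQ0, Real.mul_rpow hC0.le hE0.le]; ring
    have e3 : Q ^ (1 - α) * Q ^ α = Q := by
      rw [← Real.rpow_add_of_nonneg hQ0 h1α hα0.le]; simp
    have e4 : ε⁻¹ ^ (1 - α) * E ^ α = ε ^ (-(1 - α / γ)) := by
      rw [hE, ← Real.rpow_mul hε.le, Real.inv_rpow hε.le, ← Real.rpow_neg hε.le, ← Real.rpow_add hε]
      congr 1; field_simp; ring
    rw [e2, e3, e4]
    have h5 : C ^ α ≤ C := by
      calc C ^ α ≤ C ^ (1:ℝ) := Real.rpow_le_rpow_of_exponent_le hC1 hα1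
        _ = C := Real.rpow_one C
    gcongr
  · rw [min_eq_left hα1.le]
    have hpsp : ps ≤ p := by
      have h1 : 1 / p ≤ 1 / ps := by
        rw [h1ps]
        have h2 : 1 / ((d:ℝ) + 1) < 1 / 2 - 1 / p := by
          rw [div_lt_iff₀ (by positivity)]; linarith
        have h3 : ((d:ℝ) - 1) / (2 * (d + 1)) = 1 / 2 - 1 / ((d:ℝ) + 1) := by field_simp; ring
        rw [h3]; linarith
      exact (one_div_le_one_div hp0 (by linarith)).1 h1
    have e : -(1 - 1 / γ) = 1 / γ - 1 := by ring
    rw [e]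
    exact lyap_top (by linarith) hpsp (Real.sqrt_nonneg _) hcb hb

theorem rest_bound {d : ℕ} {s p : ℝ} (hs : 0 < s) (hp : 2 < p) (hN : (d:ℝ) < 2 * s * (p / (p - 2))) :
    ∃ C : ℝ, 0 < C ∧ ∀ (u : HsFn d s) (V : Rd d → ℂ), (∀ ξ, V ξ = u.ft ξ ∨ V ξ = 0) → Integrable V volume → MemLp V 2 volume →
    eLpNorm (fun x => u.toFun x - 𝓕⁻ V x) (ENNReal.ofReal p) volume ≤
      ENNReal.ofReal (√ (C * ∫ ξ, ‖u.ft ξ - V ξ‖ ^ 2 * (1 + ‖ξ‖ ^ 2) ^ s)) := by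
  obtain ⟨C, hC, H⟩ := sobolev_dual (d := d) s p hs hp hN
  refine ⟨C, hC, fun u V hV hV1 hV2 => ?_⟩
  have hF := fourierInv_memL2 hV1 hV2
  apply dual_lp hp (Real.sqrt_nonneg _) (u.memL2.sub hF)
  intro f hf
  have hf2 := fourierInv_memL2 hf.int (hf.memLp 2)
  have e : ∫ x, (u.toFun x - 𝓕⁻ V x) * f x = ∫ ξ, (u.ft ξ - V ξ) * 𝓕⁻ f ξ := by
    simp only [sub_mul]
    have j1 : Integrable (fun x => u.toFun x * f x) volume := u.memL2.integrable_mul (hf.memLp 2)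
    have j2 : Integrable (fun x => 𝓕⁻ V x * f x) volume := hF.integrable_mul (hf.memLp 2)
    have j3 : Integrable (fun x => u.ft x * 𝓕⁻ f x) volume := u.ft_memL2.integrable_mul hf2
    have j4 : Integrable (fun x => V x * 𝓕⁻ f x) volume := hV2.integrable_mul hf2
    rw [integral_sub j1 j2, integral_sub j3 j4,
      isFT_pair u.ft_memL2 u.memL2 u.isFT hf.int (hf.memLp 2), fourierInv_pair_L1 hV1 hf.int]
  simp only [Pi.sub_apply]
  rw [e]
  set m : Rd d → ℝ := fun ξ => (1 + ‖ξ‖ ^ 2) ^ s with hm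
  have hm0 : ∀ ξ, 0 < m ξ := fun ξ => by positivity
  have hmm : Measurable m := by fun_prop
  have hm1 : ∀ ξ, 1 ≤ m ξ := fun ξ => Real.one_le_rpow (by nlinarith [sq_nonneg ‖ξ‖]) hs.le
  have hWm : AEStronglyMeasurable (fun ξ => u.ft ξ - V ξ) volume := u.ft_memL2.1.sub hV2.1
  have i1 : Integrable (fun ξ => ‖u.ft ξ - V ξ‖ ^ 2 * m ξ) volume := by
    refine u.memHs.mono' ((hWm.norm.pow 2).mul hmm.aestronglyMeasurable) (Eventually.of_forall fun ξ => ?_)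
    have := hm0 ξ
    rw [Real.norm_of_nonneg (by positivity)]
    apply mul_le_mul_of_nonneg_right _ this.le
    rcases hV ξ with h | h <;> rw [h] <;> simp
  have i2 : Integrable (fun ξ => ‖𝓕⁻ f ξ‖ ^ 2 * (m ξ)⁻¹) volume := by
    refine (hf2.integrable_norm_pow (by norm_num)).mul_bdd (c := 1) hmm.inv.aestronglyMeasurable (Eventually.of_forall fun ξ => ?_)
    rw [Real.norm_of_nonneg (inv_nonneg.2 (hm0 ξ).le)]
    exact inv_le_one_of_one_le₀ (hm1 ξ)
  have cs := cs_int hWm hf2.1 hmm hm0 i1 i2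
  have e2 : ∫ ξ, ‖𝓕⁻ f ξ‖ ^ 2 * (m ξ)⁻¹ = ∫ ξ, (1 + ‖ξ‖ ^ 2) ^ (-s) * ‖𝓕 f ξ‖ ^ 2 := by
    rw [← integral_neg_eq_self]
    congr 1; ext ξ
    simp only [hm, fourierInv_fun, neg_neg, norm_neg]
    rw [Real.rpow_neg (by positivity)]; ring
  have h3 := H f hf
  rw [e2] at cs
  set J := ∫ x, ‖f x‖ ^ (p / (p - 1)) with hJ
  have hJ0 : 0 ≤ J := integral_nonneg fun x => by positivity
  set Q := ∫ ξ, ‖u.ft ξ - V ξ‖ ^ 2 * m ξ with hQ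
  have hQ0 : 0 ≤ Q := integral_nonneg fun ξ => mul_nonneg (by positivity) (hm0 ξ).le
  have hp1 : 0 < p - 1 := by linarith
  have hrhs : √ (C * Q) * J ^ (1 / (p / (p - 1))) = √ (C * Q * J ^ (2 * (p - 1) / p)) := by
    rw [Real.sqrt_mul (by positivity : 0 ≤ C * Q)]
    congr 1
    rw [Real.sqrt_eq_rpow, ← Real.rpow_mul hJ0]
    congr 1; field_simp
  rw [hrhs]
  refine (norm_integral_le_integral_norm _).trans ?_
  simp only [norm_mul]
  apply Real.le_sqrt_of_sq_le
  refine cs.trans ?_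
  calc Q * _ ≤ Q * (C * J ^ (2 * (p - 1) / p)) := by gcongr
    _ = _ := by ring

theorem japanese_le {r s : ℝ} (hr : 0 ≤ r) (hs : 0 < s) : (1 + r ^ 2) ^ s ≤ 2 ^ s * (1 + r ^ (2 * s)) := by
  have e : r ^ (2 * s) = (r ^ 2) ^ s := by rw [Real.rpow_mul hr]; simp
  have h0 : 0 ≤ (r ^ 2) ^ s := by positivity
  have h2 : (0:ℝ) < 2 ^ s := by positivity
  rw [e]
  rcases le_total (r ^ 2) 1 with h | h
  · calc (1 + r ^ 2) ^ s ≤ 2 ^ s := Real.rpow_le_rpow (by positivity) (by linarith) hs.le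
      _ ≤ _ := by nlinarith
  · calc (1 + r ^ 2) ^ s ≤ (2 * r ^ 2) ^ s := Real.rpow_le_rpow (by positivity) (by linarith) hs.le
      _ = 2 ^ s * (r ^ 2) ^ s := Real.mul_rpow (by norm_num) (by positivity)
      _ ≤ _ := by nlinarith

theorem le_japanese {r s : ℝ} (hr : 0 ≤ r) (hs : 0 < s) : 1 + r ^ (2 * s) ≤ 2 * (1 + r ^ 2) ^ s := by
  have e : r ^ (2 * s) = (r ^ 2) ^ s := by rw [Real.rpow_mul hr]; simp
  have h1 : (1:ℝ) ≤ (1 + r ^ 2) ^ s := Real.one_le_rpow (by nlinarith [sq_nonneg r]) hs.le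
  have h2 : (r ^ 2) ^ s ≤ (1 + r ^ 2) ^ s := Real.rpow_le_rpow (by positivity) (by linarith) hs.le
  rw [e]; linarith

theorem q_int {d : ℕ} {s γ c C ε : ℝ} {g : ℝ → ℝ → ℝ} (hs : 0 < s) (hγ : 1 < γ) (hC : 0 < C) (hg : IsAdmissible s γ c C g)
    (hε : 0 < ε) (hε1 : ε < 1) (u : HsFn d s) : Integrable (fun ξ : Rd d => ‖u.ft ξ‖ ^ 2 * g ε ‖ξ‖) volume := by
  obtain ⟨hm, hpos, hfar, hnear⟩ := hg
  have hεm : ε ∈ Set.Ioo (0:ℝ) 1 := ⟨hε, hε1⟩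
  refine (u.memHs.const_mul (2 * C)).mono' ((u.ft_memL2.1.norm.pow 2).mul ((hm ε hεm).comp measurable_norm).aestronglyMeasurable)
    (Eventually.of_forall fun ξ => ?_)
  have hgp := hpos ε hεm ‖ξ‖
  rw [Real.norm_of_nonneg (by positivity)]
  have hj : 1 ≤ (1 + ‖ξ‖ ^ 2) ^ s := Real.one_le_rpow (by nlinarith [sq_nonneg ‖ξ‖]) hs.le
  have key : g ε ‖ξ‖ ≤ 2 * C * (1 + ‖ξ‖ ^ 2) ^ s := by
    rcases le_total |‖ξ‖ - 1| (1/2) with h | h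
    · refine (hnear ε hεm _ h).2.trans ?_
      have h1 : |‖ξ‖ - 1| ^ γ ≤ 1 := Real.rpow_le_one (abs_nonneg _) (le_trans h (by norm_num)) (by linarith)
      calc C * (ε + |‖ξ‖ - 1| ^ γ) ≤ C * (2 * (1 + ‖ξ‖ ^ 2) ^ s) := by gcongr; linarith
        _ = _ := by ring
    · refine (hfar ε hεm _ h).2.trans ?_
      rw [abs_norm]
      calc _ ≤ C * (2 * (1 + ‖ξ‖ ^ 2) ^ s) := by gcongr; exact le_japanese (norm_nonneg _) hs
        _ = _ := by ring
  calc ‖u.ft ξ‖ ^ 2 * g ε ‖ξ‖ ≤ ‖u.ft ξ‖ ^ 2 * (2 * C * (1 + ‖ξ‖ ^ 2) ^ s) := by gcongr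
    _ = _ := by ring

theorem lower_main {d : ℕ} (hd : 2 ≤ d) {s γ p c C : ℝ} (hs : 0 < s) (hγ : 1 < γ) (hp : 2 < p)
    (hN : (d:ℝ) < 2 * s * (p / (p - 2))) (hc : 0 < c) (hcC : c ≤ C) :
    ∃ K : ℝ, 0 < K ∧ ∀ g : ℝ → ℝ → ℝ, IsAdmissible s γ c C g → ∀ ε : ℝ, 0 < ε → ε < 1 → ∀ u : HsFn d s,
      LpN p u.toFun ^ 2 ≤ K * ε ^ (-(1 - min 1 (((d : ℝ) + 1) * (1/2 - 1/p)) / γ)) * qeps (g ε) u := by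
  obtain ⟨C₁, hC₁, H₁⟩ := shell_bound hd hγ hp
  obtain ⟨C₂, hC₂, H₂⟩ := rest_bound (d := d) hs hp hN
  refine ⟨2 * (C₁ / c + C₂ * (2 ^ s / c)), by positivity, fun g hg ε hε hε1 u => ?_⟩
  have hqi := q_int hs hγ (hc.trans_le hcC) hg hε hε1 u
  obtain ⟨hm, hpos, hfar, hnear⟩ := hg
  have hεm : ε ∈ Set.Ioo (0:ℝ) 1 := ⟨hε, hε1⟩
  have hq0 : 0 ≤ qeps (g ε) u := integral_nonneg fun ξ => mul_nonneg (by positivity) (hpos ε hεm _).le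
  set A : Set (Rd d) := {ξ : Rd d | |‖ξ‖ - 1| ≤ 1/2} with hA
  have hAm : MeasurableSet A := ann_meas _
  set V : Rd d → ℂ := A.indicator u.ft with hV
  have hV2 : MemLp V 2 volume := u.ft_memL2.indicator hAm
  set m := min 1 (((d : ℝ) + 1) * (1/2 - 1/p)) with hmdef
  obtain ⟨hV1, b1⟩ := H₁ ε hε hε1 V (fun ξ h => Set.indicator_of_notMem (s := A) h _) hV2
  have b2 := H₂ u V (fun ξ => by
    by_cases h : ξ ∈ A
    · left; exact Set.indicator_of_mem h _
    · right; exact Set.indicator_of_notMem h _) hV1 hV2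
  have hcg : ∀ ξ : Rd d, ‖u.ft ξ‖ ^ 2 * g ε ‖ξ‖ = ‖u.ft ξ‖ ^ 2 * g ε ‖ξ‖ := fun _ => rfl
  have Q1 : ∫ ξ, ‖V ξ‖ ^ 2 * (ε + |‖ξ‖ - 1| ^ γ) ≤ 1 / c * qeps (g ε) u := by
    unfold qeps
    rw [← integral_const_mul]
    apply integral_mono_of_nonneg (Eventually.of_forall fun ξ => by positivity) (hqi.const_mul _)
    refine Eventually.of_forall fun ξ => ?_
    have hgp := hpos ε hεm ‖ξ‖
    dsimp only
    by_cases h : ξ ∈ A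
    · rw [hV, Set.indicator_of_mem h]
      have := (hnear ε hεm _ h).1
      have h2 : ε + |‖ξ‖ - 1| ^ γ ≤ 1 / c * g ε ‖ξ‖ := by
        rw [one_div, inv_mul_eq_div, le_div_iff₀ hc]; linarith
      calc _ ≤ ‖u.ft ξ‖ ^ 2 * (1 / c * g ε ‖ξ‖) := by gcongr
        _ = _ := by ring
    · rw [hV, Set.indicator_of_notMem h]
      simp only [norm_zero, ne_eq, OfNat.ofNat_ne_zero, not_false_eq_true, zero_pow, zero_mul]
      positivity
  have Q2 : ∫ ξ, ‖u.ft ξ - V ξ‖ ^ 2 * (1 + ‖ξ‖ ^ 2) ^ s ≤ 2 ^ s / c * qeps (g ε) u := by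
    unfold qeps
    rw [← integral_const_mul]
    apply integral_mono_of_nonneg (Eventually.of_forall fun ξ => by positivity) (hqi.const_mul _)
    refine Eventually.of_forall fun ξ => ?_
    have hgp := hpos ε hεm ‖ξ‖
    dsimp only
    by_cases h : ξ ∈ A
    · rw [hV, Set.indicator_of_mem h]
      simp only [sub_self, norm_zero, ne_eq, OfNat.ofNat_ne_zero, not_false_eq_true, zero_pow, zero_mul]
      positivity
    · rw [hV, Set.indicator_of_notMem h, sub_zero]
      have h' : 1/2 ≤ |‖ξ‖ - 1| := (not_le.1 h).le
      have := (hfar ε hεm _ h').1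
      rw [abs_norm] at this
      have h2 : (1 + ‖ξ‖ ^ 2) ^ s ≤ 2 ^ s / c * g ε ‖ξ‖ := by
        refine (japanese_le (norm_nonneg _) hs).trans ?_
        rw [div_mul_eq_mul_div, le_div_iff₀ hc]
        have h2s : (0:ℝ) < 2 ^ s := by positivity
        nlinarith
      calc _ ≤ ‖u.ft ξ‖ ^ 2 * (2 ^ s / c * g ε ‖ξ‖) := by gcongr
        _ = _ := by ring
  set q := qeps (g ε) u with hq
  set E := ε ^ (-(1 - m / γ)) with hE
  have hE1 : 1 ≤ E := by
    apply Real.one_le_rpow_of_pos_of_le_one_of_nonpos hε hε1.le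
    have h1 : m ≤ 1 := min_le_left _ _
    have h2 : m / γ ≤ 1 := by rw [div_le_one (by linarith)]; linarith
    linarith
  have hsum : eLpNorm u.toFun (ENNReal.ofReal p) volume ≤ ENNReal.ofReal (√ (C₂ * (2 ^ s / c * q)) + √ (C₁ * E * (1 / c * q))) := by
    have e : u.toFun = (fun x => u.toFun x - 𝓕⁻ V x) + 𝓕⁻ V := by ext x; simp
    have hF := fourierInv_memL2 hV1 hV2
    rw [e, ENNReal.ofReal_add (Real.sqrt_nonneg _) (Real.sqrt_nonneg _)]
    refine (eLpNorm_add_le (u.memL2.1.sub hF.1) hF.1 ?_).trans (add_le_add ?_ ?_)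
    · rw [← ENNReal.ofReal_one]; exact ENNReal.ofReal_le_ofReal (by linarith)
    · refine b2.trans (ENNReal.ofReal_le_ofReal (Real.sqrt_le_sqrt ?_)); gcongr
    · refine b1.trans (ENNReal.ofReal_le_ofReal (Real.sqrt_le_sqrt ?_)); gcongr
  have hL : LpN p u.toFun ≤ √ (C₂ * (2 ^ s / c * q)) + √ (C₁ * E * (1 / c * q)) := by
    unfold LpN
    exact ENNReal.toReal_le_of_le_ofReal (by positivity) hsum
  have hL0 : 0 ≤ LpN p u.toFun := ENNReal.toReal_nonneg
  have hE0 : 0 < E := by linarith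
  have n1 : 0 ≤ C₂ * (2 ^ s / c * q) := by positivity
  have n2 : 0 ≤ C₁ * E * (1 / c * q) := by positivity
  calc LpN p u.toFun ^ 2 ≤ (√ (C₂ * (2 ^ s / c * q)) + √ (C₁ * E * (1 / c * q))) ^ 2 := pow_le_pow_left₀ hL0 hL 2
    _ ≤ 2 * (C₂ * (2 ^ s / c * q) + C₁ * E * (1 / c * q)) := by
        nlinarith [Real.sq_sqrt n1, Real.sq_sqrt n2, sq_nonneg (√ (C₂ * (2 ^ s / c * q)) - √ (C₁ * E * (1 / c * q)))]
    _ ≤ 2 * (C₂ * (2 ^ s / c * q) * E + C₁ * E * (1 / c * q)) := by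
        have := mul_le_mul_of_nonneg_left hE1 n1
        linarith
    _ = _ := by ring

theorem osc_low {d : ℕ} {B : Set (Rd d)} (hB : MeasurableSet B) (hBf : volume B ≠ ∞) (x e : Rd d)
    (h : ∀ ξ ∈ B, |2 * π * inner ℝ (ξ - e) x| ≤ 1) :
    (volume B).toReal / 2 ≤ ‖𝓕⁻ (B.indicator (fun _ => (1:ℂ))) x‖ := by
  have e1 : ‖𝓕⁻ (B.indicator (fun _ => (1:ℂ))) x‖ = ‖∫ ξ in B, Complex.exp (((2 * π * inner ℝ (ξ - e) x : ℝ) : ℂ) * Complex.I)‖ := by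
    have e2 : ∫ ξ in B, Complex.exp (((2 * π * inner ℝ (ξ - e) x : ℝ) : ℂ) * Complex.I)
        = Complex.exp (((-(2 * π * inner ℝ e x) : ℝ) : ℂ) * Complex.I) * 𝓕⁻ (B.indicator (fun _ => (1:ℂ))) x := by
      rw [Real.fourierInv_eq', ← integral_indicator hB, ← integral_const_mul]
      congr 1; ext ξ
      by_cases hξ : ξ ∈ B
      · rw [Set.indicator_of_mem hξ, Set.indicator_of_mem hξ, smul_eq_mul, mul_one, ← Complex.exp_add]
        congr 1
        rw [inner_sub_left]; push_cast; ring
      · rw [Set.indicator_of_notMem hξ, Set.indicator_of_notMem hξ]; simp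
    rw [e2, norm_mul, Complex.norm_exp_ofReal_mul_I, one_mul]
  rw [e1]
  have hcont : Continuous (fun ξ : Rd d => Complex.exp (((2 * π * inner ℝ (ξ - e) x : ℝ) : ℂ) * Complex.I)) := by fun_prop
  have : IsFiniteMeasure (volume.restrict B) := ⟨by simpa using hBf.lt_top⟩
  have hIntg : Integrable (fun ξ : Rd d => Complex.exp (((2 * π * inner ℝ (ξ - e) x : ℝ) : ℂ) * Complex.I)) (volume.restrict B) := by
    refine (integrable_const (1:ℝ)).mono' hcont.aestronglyMeasurable (Eventually.of_forall fun ξ => ?_)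
    rw [Complex.norm_exp_ofReal_mul_I]
  refine le_trans ?_ (Complex.re_le_norm _)
  have e3 : (∫ ξ in B, Complex.exp (((2 * π * inner ℝ (ξ - e) x : ℝ) : ℂ) * Complex.I)).re
      = ∫ ξ in B, (Complex.exp (((2 * π * inner ℝ (ξ - e) x : ℝ) : ℂ) * Complex.I)).re := (integral_re hIntg).symm
  rw [e3]
  have e4 : ∫ ξ in B, (1/2 : ℝ) = (volume B).toReal / 2 := by
    rw [setIntegral_const, smul_eq_mul, Measure.real]; ring
  rw [← e4]
  apply setIntegral_mono_on (integrableOn_const hBf) hIntg.re hB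
  intro ξ hξ
  change (1/2:ℝ) ≤ (Complex.exp (((2 * π * inner ℝ (ξ - e) x : ℝ) : ℂ) * Complex.I)).re
  rw [Complex.exp_ofReal_mul_I_re]
  have h1 := Real.one_sub_sq_div_two_le_cos (x := 2 * π * inner ℝ (ξ - e) x)
  have h2 := abs_le.1 (h ξ hξ)
  have h3 : (2 * π * inner ℝ (ξ - e) x) ^ 2 ≤ 1 := by nlinarith
  linarith

theorem test_upper {d : ℕ} (hd : 2 ≤ d) {s γ p c C ε M : ℝ} {g : ℝ → ℝ → ℝ} (hs : 0 < s) (hγ : 1 < γ) (hp : 2 < p)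
    (hC : 0 < C) (hg : IsAdmissible s γ c C g) (hε : 0 < ε) (hε1 : ε < 1) (hM : 0 ≤ M) {B D : Set (Rd d)}
    (hB : MeasurableSet B) (hB0 : volume B ≠ 0) (hBA : ∀ ξ ∈ B, |‖ξ‖ - 1| ≤ 1/2)
    (hBM : ∀ ξ ∈ B, |‖ξ‖ - 1| ≤ M * ε ^ (1 / γ)) (hD : MeasurableSet D) (hD0 : volume D ≠ 0) (hDf : volume D ≠ ∞)
    (e : Rd d) (h : ∀ x ∈ D, ∀ ξ ∈ B, |2 * π * inner ℝ (ξ - e) x| ≤ 1) :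
    ∃ t ∈ RayleighSet d s p (g ε) (fun _ => True),
      t ≤ 4 * C * (1 + M ^ γ) * ε / ((volume B).toReal * (volume D).toReal ^ (2 / p)) := by
  have hεm : ε ∈ Set.Ioo (0:ℝ) 1 := ⟨hε, hε1⟩
  have hp0 : 0 < p := by linarith
  have hBf : volume B ≠ ∞ := by
    refine (lt_of_le_of_lt (measure_mono (fun ξ hξ => ?_)) (measure_closedBall_lt_top (x := (0 : Rd d)) (r := 2))).ne
    have := abs_le.1 (hBA ξ hξ)
    rw [mem_closedBall_zero_iff]; linarith
  set V : Rd d → ℂ := B.indicator (fun _ => (1:ℂ)) with hV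
  have hVm : ∀ r : ℝ≥0∞, MemLp V r volume := fun r => ind_memLp hB hBf 1 r
  obtain ⟨C₁, hC₁, H₁⟩ := shell_bound hd hγ hp
  obtain ⟨hV1, hVp⟩ := H₁ ε hε hε1 V (fun ξ h => Set.indicator_of_notMem (fun hh => h (hBA ξ hh)) _) (hVm 2)
  have hu2 := fourierInv_memL2 hV1 (hVm 2)
  have hn : ∀ ξ, ‖V ξ‖ ^ 2 = B.indicator (fun _ => (1:ℝ)) ξ := by
    intro ξ
    by_cases hx : ξ ∈ B
    · rw [hV, Set.indicator_of_mem hx, Set.indicator_of_mem hx]; simp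
    · rw [hV, Set.indicator_of_notMem hx, Set.indicator_of_notMem hx]; simp
  have hHs : Integrable (fun ξ : Rd d => ‖V ξ‖ ^ 2 * (1 + ‖ξ‖ ^ 2) ^ s) volume := by
    have hi : Integrable (B.indicator (fun _ => (5:ℝ) ^ s)) volume := (integrable_indicator_iff hB).2 (integrableOn_const hBf)
    have hmm : Measurable (fun ξ : Rd d => (1 + ‖ξ‖ ^ 2) ^ s) := by fun_prop
    refine hi.mono' (((hVm 2).1.norm.pow 2).mul hmm.aestronglyMeasurable) (Eventually.of_forall fun ξ => ?_)
    rw [Real.norm_of_nonneg (by positivity), hn]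
    by_cases hx : ξ ∈ B
    · rw [Set.indicator_of_mem hx, Set.indicator_of_mem hx, one_mul]
      have := abs_le.1 (hBA ξ hx)
      apply Real.rpow_le_rpow (by positivity) _ hs.le
      nlinarith [norm_nonneg ξ]
    · rw [Set.indicator_of_notMem hx, Set.indicator_of_notMem hx, zero_mul]
  set u : HsFn d s := ⟨𝓕⁻ V, V, hu2, hVm 2, isFT_fourierInv hV1, hHs⟩ with hu
  set b := (volume B).toReal with hb
  set vD := (volume D).toReal with hvD
  have hb0 : 0 < b := ENNReal.toReal_pos hB0 hBf
  have hvD0 : 0 < vD := ENNReal.toReal_pos hD0 hDf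
  have hlow : ∀ x ∈ D, b / 2 ≤ ‖u.toFun x‖ := fun x hx => osc_low hB hBf x e (h x hx)
  have hup : MemLp u.toFun (ENNReal.ofReal p) volume := ⟨hu2.1, lt_of_le_of_lt hVp ENNReal.ofReal_lt_top⟩
  have hL : b / 2 * vD ^ (1 / p) ≤ LpN p u.toFun := by
    unfold LpN
    have h1 : eLpNorm (D.indicator (fun _ => ((b / 2 : ℝ) : ℂ))) (ENNReal.ofReal p) volume ≤ eLpNorm u.toFun (ENNReal.ofReal p) volume := by
      apply eLpNorm_mono
      intro x
      by_cases hx : x ∈ D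
      · rw [Set.indicator_of_mem hx, Complex.norm_real, Real.norm_of_nonneg (by positivity)]
        exact hlow x hx
      · rw [Set.indicator_of_notMem hx, norm_zero]; positivity
    rw [eLpNorm_indicator_const hD (by simpa using hp0) (by simp), ENNReal.toReal_ofReal hp0.le] at h1
    have h2 := ENNReal.toReal_mono hup.2.ne h1
    rw [ENNReal.toReal_mul, ← ENNReal.toReal_rpow, toReal_enorm, Complex.norm_real, Real.norm_of_nonneg (by positivity)] at h2
    exact h2
  have hL0 : 0 < b / 2 * vD ^ (1 / p) := by positivity
  have hq : qeps (g ε) u ≤ C * (1 + M ^ γ) * ε * b := by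
    have e1 : C * (1 + M ^ γ) * ε * b = ∫ ξ, B.indicator (fun _ => C * (1 + M ^ γ) * ε) ξ := by
      rw [integral_indicator hB, setIntegral_const, smul_eq_mul, Measure.real]; ring
    rw [e1]
    unfold qeps
    apply integral_mono_of_nonneg (Eventually.of_forall fun ξ => mul_nonneg (by positivity) (hg.2.1 ε hεm _).le)
      ((integrable_indicator_iff hB).2 (integrableOn_const hBf))
    refine Eventually.of_forall fun ξ => ?_
    dsimp only
    rw [show u.ft = V from rfl, hn]
    by_cases hx : ξ ∈ B
    · rw [Set.indicator_of_mem hx, Set.indicator_of_mem hx, one_mul]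
      refine (hg.2.2.2 ε hεm _ (hBA ξ hx)).2.trans ?_
      have h1 : |‖ξ‖ - 1| ^ γ ≤ M ^ γ * ε := by
        calc |‖ξ‖ - 1| ^ γ ≤ (M * ε ^ (1 / γ)) ^ γ := Real.rpow_le_rpow (abs_nonneg _) (hBM ξ hx) (by linarith)
          _ = M ^ γ * ε := by
            rw [Real.mul_rpow hM (by positivity), ← Real.rpow_mul hε.le, one_div_mul_cancel (by linarith), Real.rpow_one]
      calc C * (ε + |‖ξ‖ - 1| ^ γ) ≤ C * (ε + M ^ γ * ε) := by gcongr
        _ = _ := by ring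
    · rw [Set.indicator_of_notMem hx, Set.indicator_of_notMem hx, zero_mul]
  refine ⟨_, ⟨u, trivial, ?_, hup, rfl⟩, ?_⟩
  · intro h0
    have : LpN p u.toFun = 0 := by
      unfold LpN
      rw [eLpNorm_congr_ae h0]; simp
    linarith
  · calc qeps (g ε) u / LpN p u.toFun ^ 2 ≤ (C * (1 + M ^ γ) * ε * b) / (b / 2 * vD ^ (1 / p)) ^ 2 := by
          have : 0 ≤ M ^ γ := by positivity
          gcongr
      _ = _ := by
          have : (vD ^ (1 / p)) ^ 2 = vD ^ (2 / p) := by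
            rw [← Real.rpow_natCast, ← Real.rpow_mul hvD0.le]; congr 1; push_cast; ring
          rw [mul_pow, this]; field_simp; ring

theorem upper_ann {d : ℕ} (hd : 2 ≤ d) {s γ p c C : ℝ} (hs : 0 < s) (hγ : 1 < γ) (hp : 2 < p) (hC : 0 < C) :
    ∃ K : ℝ, 0 < K ∧ ∀ g : ℝ → ℝ → ℝ, IsAdmissible s γ c C g → ∀ ε : ℝ, 0 < ε → ε < 1 → ε ^ (1 / γ) ≤ 1/2 →
      ∃ t ∈ RayleighSet d s p (g ε) (fun _ => True), t ≤ K * ε ^ (1 - 1 / γ) := by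
  obtain ⟨k, hk, H⟩ := annulus_lower (d := d) (by omega)
  have hDm := Metric.measure_ball_pos volume (0 : Rd d) (show (0:ℝ) < 1/16 by norm_num)
  have hDf : volume (Metric.ball (0 : Rd d) (1/16)) ≠ ∞ := measure_ball_lt_top.ne
  set vD := (volume (Metric.ball (0 : Rd d) (1/16))).toReal with hvD
  have hvD0 : 0 < vD := ENNReal.toReal_pos hDm.ne' hDf
  refine ⟨4 * C * (1 + 1 ^ γ) / (k * vD ^ (2 / p)), by positivity, fun g hg ε hε hε1 hδ => ?_⟩
  set δ := ε ^ (1 / γ) with hδd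
  have hδ0 : 0 < δ := by positivity
  have hB := H δ hδ0 (by linarith)
  have hBA : ∀ ξ ∈ {ξ : Rd d | |‖ξ‖ - 1| ≤ δ}, |‖ξ‖ - 1| ≤ 1/2 := fun ξ hξ => le_trans hξ hδ
  have hBf : volume {ξ : Rd d | |‖ξ‖ - 1| ≤ δ} ≠ ∞ := by
    refine (lt_of_le_of_lt (measure_mono (fun ξ hξ => ?_)) (measure_closedBall_lt_top (x := (0 : Rd d)) (r := 2))).ne
    have := abs_le.1 (hBA ξ hξ)
    rw [mem_closedBall_zero_iff]; linarith
  have hb : k * δ ≤ (volume {ξ : Rd d | |‖ξ‖ - 1| ≤ δ}).toReal := (ENNReal.ofReal_le_iff_le_toReal hBf).1 hB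
  have hkδ : 0 < k * δ := by positivity
  obtain ⟨t, ht, hle⟩ := test_upper hd hs hγ hp hC hg hε hε1 (zero_le_one' ℝ) (ann_meas δ)
    (fun h0 => by rw [h0] at hb; simp at hb; linarith) hBA (fun ξ hξ => by rw [one_mul]; exact hξ)
    measurableSet_ball hDm.ne' hDf 0 (by
      intro x hx ξ hξ
      rw [sub_zero, abs_mul, abs_of_pos (by positivity)]
      have h1 := abs_real_inner_le_norm ξ x
      have h2 : ‖ξ‖ ≤ 2 := by have := abs_le.1 (hBA ξ hξ); linarith
      have h3 : ‖x‖ < 1/16 := by simpa using hx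
      have h4 : ‖ξ‖ * ‖x‖ ≤ 2 * (1/16) := by gcongr
      nlinarith [Real.pi_le_four, Real.pi_pos])
  refine ⟨t, ht, hle.trans ?_⟩
  calc _ ≤ 4 * C * (1 + 1 ^ γ) * ε / (k * δ * vD ^ (2 / p)) := by gcongr
    _ = 4 * C * (1 + 1 ^ γ) / (k * vD ^ (2 / p)) * (ε / δ) := by field_simp
    _ = _ := by
      congr 1
      rw [Real.rpow_sub hε, Real.rpow_one]

def box {d : ℕ} (a : Rd d) (r : Fin d → ℝ) : Set (Rd d) := {x | ∀ i, |x i - a i| ≤ r i}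

theorem box_meas {d : ℕ} (a : Rd d) (r : Fin d → ℝ) : MeasurableSet (box a r) := by
  unfold box
  have : {x : Rd d | ∀ i, |x i - a i| ≤ r i} = ⋂ i, {x : Rd d | |x i - a i| ≤ r i} := by ext; simp
  rw [this]
  exact MeasurableSet.iInter fun i => measurableSet_le (by fun_prop) measurable_const

theorem box_vol {d : ℕ} (a : Rd d) (r : Fin d → ℝ) (hr : ∀ i, 0 < r i) : volume (box a r) = ENNReal.ofReal (∏ i, (2 * r i)) := by
  have h := (EuclideanSpace.volume_preserving_symm_measurableEquiv_toLp (Fin d)).measure_preimage_equiv 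
    (Set.Icc (fun i => a i - r i) (fun i => a i + r i))
  have e : box a r = (MeasurableEquiv.toLp 2 (Fin d → ℝ)).symm ⁻¹' (Set.Icc (fun i => a i - r i) (fun i => a i + r i)) := by
    ext x
    simp only [box, Set.mem_preimage, Set.mem_Icc, Pi.le_def, Set.mem_ofPred_eq]
    constructor
    · intro h
      exact ⟨fun i => by have := abs_le.1 (h i); show a i - r i ≤ x i; linarith, fun i => by have := abs_le.1 (h i); show x i ≤ a i + r i; linarith⟩
    · rintro ⟨h1, h2⟩ i
      have h1' : a i - r i ≤ x i := h1 i
      have h2' : x i ≤ a i + r i := h2 i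
      rw [abs_le]; constructor <;> linarith
  rw [e, h, Real.volume_Icc_pi, ← ENNReal.ofReal_prod_of_nonneg (fun i _ => by have := hr i; linarith)]
  congr 1
  apply Finset.prod_congr rfl
  intro i _; ring

theorem upper_knapp {d : ℕ} (hd : 2 ≤ d) {s γ p c C : ℝ} (hs : 0 < s) (hγ : 1 < γ) (hp : 2 < p) (hC : 0 < C) :
    ∃ K : ℝ, 0 < K ∧ ∀ g : ℝ → ℝ → ℝ, IsAdmissible s γ c C g → ∀ ε : ℝ, 0 < ε → ε < 1 → (3 + d) * ε ^ (1 / γ) ≤ 1/2 →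
      ∃ t ∈ RayleighSet d s p (g ε) (fun _ => True), t ≤ K * ε ^ (1 - (((d : ℝ) + 1) * (1/2 - 1/p)) / γ) := by
  have hd0 : (0:ℝ) < d := by exact_mod_cast (by omega : 0 < d)
  set L : ℝ := (1 / (8 * d)) ^ d with hL
  have hL0 : 0 < L := by positivity
  refine ⟨4 * C * (1 + (3 + d) ^ γ) / (2 ^ d * L ^ (2 / p)), by positivity, fun g hg ε hε hε1 hδ => ?_⟩
  set δ := ε ^ (1 / γ) with hδd
  have hδ0 : 0 < δ := by positivity
  have hδ1 : δ ≤ 1 := by nlinarith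
  set i0 : Fin d := ⟨0, by omega⟩ with hi0
  set a : Fin d → ℝ := fun i => 1/2 + if i = i0 then 1/2 else 0 with ha
  have hsum : ∑ i, a i = ((d:ℝ) + 1) / 2 := by
    simp only [ha]
    rw [Finset.sum_add_distrib, Finset.sum_ite_eq']
    simp; ring
  set r : Fin d → ℝ := fun i => δ ^ a i with hr
  have hr0 : ∀ i, 0 < r i := fun i => by positivity
  set P : ℝ := δ ^ (((d:ℝ) + 1) / 2) with hP
  have hP0 : 0 < P := by positivity
  have hprod : ∏ i, r i = P := by
    rw [hP, ← hsum, Real.rpow_sum_of_pos hδ0]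
  set e : Rd d := EuclideanSpace.single i0 (1:ℝ) with he
  set R : Fin d → ℝ := fun i => 1 / (16 * d * r i) with hR
  have hR0 : ∀ i, 0 < R i := fun i => by have := hr0 i; positivity
  have vB : (volume (box e r)).toReal = 2 ^ d * P := by
    rw [box_vol e r hr0, ENNReal.toReal_ofReal (Finset.prod_nonneg fun i _ => by have := hr0 i; positivity), Finset.prod_mul_distrib, hprod]
    simp
  have vDe : volume (box (0 : Rd d) R) = ENNReal.ofReal (L / P) := by
    rw [box_vol 0 R hR0]
    congr 1
    have : ∀ i, 2 * R i = (1 / (8 * d)) * (r i)⁻¹ := by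
      intro i; have := (hr0 i).ne'; simp only [hR]; field_simp; norm_num
    simp only [this]
    rw [Finset.prod_mul_distrib, Finset.prod_inv_distrib, hprod]
    simp [hL, div_eq_mul_inv]
  have vD : (volume (box (0 : Rd d) R)).toReal = L / P := by
    rw [vDe, ENNReal.toReal_ofReal (by positivity)]
  have hnear : ∀ ξ ∈ box e r, |‖ξ‖ - 1| ≤ (3 + d) * δ := by
    intro ξ hξ
    have h0 : |ξ i0 - 1| ≤ δ := by
      have := hξ i0
      simp only [he, hr, ha, EuclideanSpace.single_apply, if_true] at this
      norm_num at this
      exact this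
    have hj : ∀ j, j ≠ i0 → ξ j ^ 2 ≤ δ := by
      intro j hj
      have := hξ j
      simp only [he, hr, ha, EuclideanSpace.single_apply, if_neg hj, sub_zero, add_zero] at this
      rw [← Real.sqrt_eq_rpow] at this
      calc ξ j ^ 2 = |ξ j| ^ 2 := (sq_abs _).symm
        _ ≤ √δ ^ 2 := pow_le_pow_left₀ (abs_nonneg _) this 2
        _ = δ := Real.sq_sqrt hδ0.le
    have hn : ‖ξ‖ ^ 2 = ξ i0 ^ 2 + ∑ j ∈ Finset.univ.erase i0, ξ j ^ 2 := by
      rw [EuclideanSpace.norm_sq_eq, ← Finset.add_sum_erase _ _ (Finset.mem_univ i0)]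
      simp
    have hs0 : 0 ≤ ∑ j ∈ Finset.univ.erase i0, ξ j ^ 2 := Finset.sum_nonneg fun j _ => sq_nonneg _
    have hs1 : ∑ j ∈ Finset.univ.erase i0, ξ j ^ 2 ≤ d * δ := by
      calc _ ≤ ∑ j ∈ Finset.univ.erase i0, δ := Finset.sum_le_sum fun j hj' => hj j (Finset.ne_of_mem_erase hj')
        _ = ((Finset.univ.erase i0).card : ℝ) * δ := by simp
        _ ≤ d * δ := by
          gcongr
          calc (Finset.univ.erase i0).card ≤ (Finset.univ : Finset (Fin d)).card := Finset.card_erase_le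
            _ = d := by simp
    have h0' := abs_le.1 h0
    have hsq : |‖ξ‖ ^ 2 - 1| ≤ (3 + d) * δ := by
      rw [abs_le, hn]
      constructor <;> nlinarith
    have hf : |‖ξ‖ ^ 2 - 1| = |‖ξ‖ - 1| * (‖ξ‖ + 1) := by
      rw [show ‖ξ‖ ^ 2 - 1 = (‖ξ‖ - 1) * (‖ξ‖ + 1) by ring, abs_mul, abs_of_pos (by positivity : 0 < ‖ξ‖ + 1)]
    rw [hf] at hsq
    nlinarith [abs_nonneg (‖ξ‖ - 1), norm_nonneg ξ]
  obtain ⟨t, ht, hle⟩ := test_upper hd hs hγ hp hC hg hε hε1 (by positivity : (0:ℝ) ≤ 3 + d) (box_meas e r)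
    (fun h0 => by
      rw [h0] at vB
      have : 0 < 2 ^ d * P := by positivity
      simp at vB; linarith) (fun ξ hξ => (hnear ξ hξ).trans hδ) hnear (box_meas 0 R)
    (by rw [vDe]; simp; positivity) (by rw [vDe]; simp) e (by
      intro x hx ξ hξ
      have h1 : |inner ℝ (ξ - e) x| ≤ 1 / 16 := by
        rw [PiLp.inner_apply]
        refine (Finset.abs_sum_le_sum_abs _ _).trans ?_
        calc ∑ i, |inner ℝ ((ξ - e) i) (x i)| ≤ ∑ i : Fin d, 1 / (16 * (d:ℝ)) := by
              apply Finset.sum_le_sum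
              intro i _
              have t1 := hξ i
              have t2 : |x i| ≤ R i := by simpa using hx i
              have t3 := hr0 i
              rw [real_inner_eq_re_inner]
              simp only [PiLp.sub_apply, RCLike.inner_apply, conj_trivial, RCLike.re_to_real, abs_mul]
              calc |x i| * |ξ i - e i| ≤ R i * r i := by gcongr
                _ = 1 / (16 * (d:ℝ)) := by simp only [hR]; field_simp
          _ = 1 / 16 := by simp; field_simp
      rw [abs_mul, abs_of_pos (by positivity)]
      nlinarith [Real.pi_le_four, Real.pi_pos])
  refine ⟨t, ht, hle.trans_eq ?_⟩
  rw [vB, vD, Real.div_rpow hL0.le hP0.le]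
  have hp0 : 0 < p := by linarith
  have hγ0 : 0 < γ := by linarith
  have e1 : ε ^ (1 - (((d : ℝ) + 1) * (1/2 - 1/p)) / γ) = ε * (P ^ (2 / p) / P) := by
    have e2 : P = ε ^ (1 / γ * (((d:ℝ) + 1) / 2)) := by rw [hP, hδd, ← Real.rpow_mul hε.le]
    rw [e2, ← Real.rpow_mul hε.le, ← Real.rpow_sub hε]
    conv_rhs => rw [← Real.rpow_one ε, ← Real.rpow_mul hε.le, ← Real.rpow_add (by simpa using hε)]
    rw [one_mul]
    congr 1; field_simp; ring
  rw [e1]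
  field_simp

/-- Theorem 1.3, non-symmetric case: `R^∘_ε(p) ≅ ε^{1-min(1,α₁)/γ}`
as `ε → 0⁺`, where `α₁ = (d+1)(1/2 - 1/p)`. -/
theorem stmt1 (d : ℕ) (hd : 2 ≤ d) (s γ p c C : ℝ)
    (hs : (d : ℝ) / ((d : ℝ) + 1) < s) (hγ : 1 < γ)
    (hp : 2 < p) (hps : s < (d : ℝ) / 2 → p < 2 * (d : ℝ) / ((d : ℝ) - 2 * s))
    (hc : 0 < c) (hcC : c ≤ C) :
    ∃ c' C' ε₀ : ℝ, 0 < c' ∧ c' ≤ C' ∧ 0 < ε₀ ∧ ε₀ < 1 ∧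
      ∀ g : ℝ → ℝ → ℝ, IsAdmissible s γ c C g →
        ∀ ε : ℝ, 0 < ε → ε < ε₀ →
          c' * ε ^ (1 - min 1 (((d : ℝ) + 1) * (1/2 - 1/p)) / γ)
              ≤ Rayleigh d s p (g ε) (fun _ => True) ∧
            Rayleigh d s p (g ε) (fun _ => True)
              ≤ C' * ε ^ (1 - min 1 (((d : ℝ) + 1) * (1/2 - 1/p)) / γ) := by
  have hd2 : (2:ℝ) ≤ d := by exact_mod_cast hd
  have hs0 : 0 < s := lt_of_le_of_lt (by positivity) hs
  have hC : 0 < C := lt_of_lt_of_le hc hcC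
  have hN : (d:ℝ) < 2 * s * (p / (p - 2)) := by
    have hp2 : 0 < p - 2 := by linarith
    rw [← mul_div_assoc, lt_div_iff₀ hp2]
    by_cases h : s < (d:ℝ) / 2
    · have h1 := hps h
      rw [lt_div_iff₀ (by linarith)] at h1
      nlinarith
    · push Not at h
      nlinarith
  obtain ⟨K, hK, hlow⟩ := lower_main hd hs0 hγ hp hN hc hcC
  obtain ⟨K1, hK1, hup1⟩ := upper_ann (c := c) hd hs0 hγ hp hC
  obtain ⟨K2, hK2, hup2⟩ := upper_knapp (c := c) hd hs0 hγ hp hC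
  have hγ0 : 0 < γ := by linarith
  have h3d : (0:ℝ) < 1 / (2 * (3 + d)) := by positivity
  refine ⟨K⁻¹, max K⁻¹ (max K1 K2), min (1/2) ((1 / (2 * (3 + (d:ℝ)))) ^ γ), inv_pos.2 hK,
    le_max_left _ _, lt_min (by norm_num) (Real.rpow_pos_of_pos h3d _),
    lt_of_le_of_lt (min_le_left _ _) (by norm_num), ?_⟩
  intro g hg ε hε hε0
  have hε1 : ε < 1 := by
    have := lt_of_lt_of_le hε0 (min_le_left _ _)
    linarith
  have hr : ε ^ (1/γ) ≤ 1 / (2 * (3 + (d:ℝ))) := by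
    have h1 := (lt_of_lt_of_le hε0 (min_le_right _ _)).le
    have h2 := Real.rpow_le_rpow hε.le h1 (by positivity : 0 ≤ 1/γ)
    rwa [← Real.rpow_mul h3d.le, mul_one_div_cancel hγ0.ne', Real.rpow_one] at h2
  have hr1 : (3 + (d:ℝ)) * ε ^ (1/γ) ≤ 1/2 := by
    calc (3 + (d:ℝ)) * ε ^ (1/γ) ≤ (3 + (d:ℝ)) * (1 / (2 * (3 + (d:ℝ)))) := by gcongr
      _ = 1/2 := by field_simp
  have hr2 : ε ^ (1/γ) ≤ 1/2 := by
    have : 0 ≤ ε ^ (1/γ) := by positivity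
    nlinarith
  have hex : ∃ t ∈ RayleighSet d s p (g ε) (fun _ => True),
      t ≤ max K⁻¹ (max K1 K2) * ε ^ (1 - min 1 (((d : ℝ) + 1) * (1/2 - 1/p)) / γ) := by
    rcases min_cases 1 (((d : ℝ) + 1) * (1/2 - 1/p)) with ⟨h, -⟩ | ⟨h, -⟩
    · obtain ⟨t, ht, hle⟩ := hup1 g hg ε hε hε1 hr2
      refine ⟨t, ht, hle.trans ?_⟩
      rw [h]
      gcongr
      exact (le_max_left _ _).trans (le_max_right _ _)
    · obtain ⟨t, ht, hle⟩ := hup2 g hg ε hε hε1 hr1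
      refine ⟨t, ht, hle.trans ?_⟩
      rw [h]
      gcongr
      exact (le_max_right _ _).trans (le_max_right _ _)
  have hlb : ∀ t ∈ RayleighSet d s p (g ε) (fun _ => True),
      K⁻¹ * ε ^ (1 - min 1 (((d : ℝ) + 1) * (1/2 - 1/p)) / γ) ≤ t := by
    rintro t ⟨u, -, hu0, hup, rfl⟩
    have hpos : 0 < LpN p u.toFun := by
      apply ENNReal.toReal_pos _ hup.eLpNorm_ne_top
      intro h0
      apply hu0
      exact (eLpNorm_eq_zero_iff hup.aestronglyMeasurable
        (by simp only [ne_eq, ENNReal.ofReal_eq_zero, not_le]; linarith)).1 h0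
    have h1 := hlow g hg ε hε hε1 u
    rw [le_div_iff₀ (by positivity)]
    rw [Real.rpow_neg hε.le] at h1
    have hx : 0 < ε ^ (1 - min 1 (((d : ℝ) + 1) * (1/2 - 1/p)) / γ) := Real.rpow_pos_of_pos hε _
    calc _ ≤ K⁻¹ * ε ^ (1 - min 1 (((d : ℝ) + 1) * (1/2 - 1/p)) / γ) *
          (K * (ε ^ (1 - min 1 (((d : ℝ) + 1) * (1/2 - 1/p)) / γ))⁻¹ * qeps (g ε) u) := by gcongr
      _ = qeps (g ε) u := by
        have := hx.ne'
        generalize ε ^ (1 - min 1 (((d : ℝ) + 1) * (1/2 - 1/p)) / γ) = y at this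
        field_simp
  obtain ⟨t, ht, hle⟩ := hex
  exact ⟨le_csInf ⟨t, ht⟩ hlb, (csInf_le ⟨_, hlb⟩ ht).trans hle⟩
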